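/- arXiv:2408.15592 — 14 statements merged into one kernel-verified Lean document; each statement's English description precedes it below -/
import Mathlib

section
/- Let A ⊆ E^n. Then A^⊥ ∩ F^n = χ(A)^⊥ ∩ F^n, and wt(A) = n − dim_F(A^⊥ ∩ F^n). -/
open Submodule Pointwise

/-- The coordinatewise inclusion of `F^n` into `E^n`. -/
noncomputable def fIncl (F E : Type*) [Field F] [Field E] [Algebra F E] (n : ℕ) :
    (Fin n → F) →ₗ[F] (Fin n → E) :=
  LinearMap.compLeft (Algebra.linearMap F E) (Fin n)

/-- The rank support `χ(A)` of `A ⊆ E^n`: the smallest `F`-subspace `U` of `F^n`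
such that `A` is contained in the `E`-span of (the image in `E^n` of) `U`. -/
noncomputable def rankSupport (F E : Type*) [Field F] [Field E] [Algebra F E] (n : ℕ)
    (A : Set (Fin n → E)) : Submodule F (Fin n → F) :=
  sInf {U : Submodule F (Fin n → F) |
    A ⊆ (Submodule.span E (fIncl F E n '' (U : Set (Fin n → F))) : Set (Fin n → E))}

/-- The rank support weight `wt(A) = dim_F χ(A)`. -/
noncomputable def wt (F E : Type*) [Field F] [Field E] [Algebra F E] (n : ℕ)
    (A : Set (Fin n → E)) : ℕ :=
  Module.finrank F (rankSupport F E n A)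

/-- `A^⊥ ∩ F^n`, realized as the `F`-subspace of `F^n` of vectors `β` with
`Σ_i α_i β_i = 0` for all `α ∈ A`. -/
noncomputable def dualCapF (F E : Type*) [Field F] [Field E] [Algebra F E] (n : ℕ)
    (A : Set (Fin n → E)) : Submodule F (Fin n → F) :=
  ⨅ α ∈ A, LinearMap.ker
    (∑ i, α i • ((Algebra.linearMap F E).comp (LinearMap.proj i) : (Fin n → F) →ₗ[F] E))

theorem mem_dualCapF (F E : Type*) [Field F] [Field E] [Algebra F E] (n : ℕ)
    (A : Set (Fin n → E)) (β : Fin n → F) :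
    β ∈ dualCapF F E n A ↔ ∀ α ∈ A, ∑ i, β i • α i = 0 := by
  simp [dualCapF, Submodule.mem_iInf, LinearMap.sum_apply, Algebra.smul_def, mul_comm]

/-- All coordinate vectors of elements of `A`. -/
def coordSet (F E : Type*) [Field F] [Field E] [Algebra F E] (n : ℕ)
    (A : Set (Fin n → E)) : Set (Fin n → F) :=
  {v | ∃ α ∈ A, ∃ φ : E →ₗ[F] F, v = fun i => φ (α i)}

theorem subset_span_iff (F E : Type*) [Field F] [Field E] [Algebra F E]
    [FiniteDimensional F E] (n : ℕ) (A : Set (Fin n → E)) (U : Submodule F (Fin n → F)) :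
    A ⊆ (Submodule.span E (fIncl F E n '' (U : Set (Fin n → F))) : Set (Fin n → E)) ↔
      coordSet F E n A ⊆ U := by
  constructor
  · rintro h v ⟨α, hα, φ, rfl⟩
    have key : ∀ x ∈ Submodule.span E (fIncl F E n '' (U : Set (Fin n → F))),
        ∀ φ : E →ₗ[F] F, (fun i => φ (x i)) ∈ U := by
      intro x hx
      induction hx using Submodule.span_induction with
      | mem x hx =>
        obtain ⟨u, hu, rfl⟩ := hx
        intro φ
        have : (fun i => φ (fIncl F E n u i)) = φ 1 • u := by
          ext i
          simp [fIncl, Algebra.algebraMap_eq_smul_one, mul_comm]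
        rw [this]
        exact U.smul_mem _ hu
      | zero => intro φ; simp only [Pi.zero_apply, map_zero]; exact U.zero_mem
      | add x y _ _ hx hy =>
        intro φ
        have := U.add_mem (hx φ) (hy φ)
        convert this using 1
        ext i; simp
      | smul a x _ hx =>
        intro φ
        exact hx (φ ∘ₗ LinearMap.mulLeft F a)
    exact key α (h hα) φ
  · intro h α hα
    let b := Module.finBasis F E
    have : α = ∑ j, b j • fIncl F E n (fun i => b.coord j (α i)) := by
      ext i
      have := b.sum_repr (α i)
      conv_lhs => rw [← this]
      simp [fIncl, Algebra.smul_def, mul_comm]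
    rw [this]
    refine Submodule.sum_mem _ fun j _ => Submodule.smul_mem _ _ (Submodule.subset_span ⟨_, ?_, rfl⟩)
    exact h ⟨α, hα, b.coord j, rfl⟩

theorem rankSupport_eq (F E : Type*) [Field F] [Field E] [Algebra F E]
    [FiniteDimensional F E] (n : ℕ) (A : Set (Fin n → E)) :
    rankSupport F E n A = Submodule.span F (coordSet F E n A) := by
  simp only [rankSupport, subset_span_iff]
  rfl

theorem mem_dual_rankSupport (F E : Type*) [Field F] [Field E] [Algebra F E]
    (n : ℕ) (U : Submodule F (Fin n → F)) (β : Fin n → F) :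
    β ∈ dualCapF F E n (fIncl F E n '' (U : Set (Fin n → F))) ↔
      ∀ u ∈ U, u ⬝ᵥ β = 0 := by
  rw [mem_dualCapF]
  simp only [Set.forall_mem_image, SetLike.mem_coe]
  refine forall₂_congr fun u _ => ?_
  rw [← (algebraMap F E).injective.eq_iff]
  simp [fIncl, dotProduct, Algebra.smul_def, mul_comm]

theorem dual_eq (F E : Type*) [Field F] [Field E] [Algebra F E]
    [FiniteDimensional F E] (n : ℕ) (A : Set (Fin n → E)) :
    dualCapF F E n A
        = dualCapF F E n (fIncl F E n '' (rankSupport F E n A : Set (Fin n → F))) := by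
  ext β
  rw [mem_dual_rankSupport, mem_dualCapF, rankSupport_eq]
  constructor
  · intro h u hu
    induction hu using Submodule.span_induction with
    | mem x hx =>
      obtain ⟨α, hα, φ, rfl⟩ := hx
      have := congrArg φ (h α hα)
      simpa [dotProduct, mul_comm] using this
    | zero => simp
    | add x y _ _ hx hy => simp [add_dotProduct, hx, hy]
    | smul a x _ hx => simp [hx]
  · intro h α hα
    rw [← Module.forall_dual_apply_eq_zero_iff F]
    intro φ
    have := h _ (Submodule.subset_span ⟨α, hα, φ, rfl⟩)
    simpa [dotProduct, mul_comm] using this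

theorem finrank_aux (F E : Type*) [Field F] [Field E] [Algebra F E]
    (n : ℕ) (U : Submodule F (Fin n → F)) :
    Module.finrank F U = n - Module.finrank F
      (dualCapF F E n (fIncl F E n '' (U : Set (Fin n → F)))) := by
  have h : dualCapF F E n (fIncl F E n '' (U : Set (Fin n → F))) =
      (U.map (dotProductEquiv F (Fin n)).toLinearMap).dualCoannihilator := by
    ext β
    rw [mem_dual_rankSupport, Submodule.mem_dualCoannihilator]
    constructor
    · rintro h _ ⟨u, hu, rfl⟩
      exact h u hu
    · intro h u hu
      exact h _ ⟨u, hu, rfl⟩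
  have h2 := Subspace.finrank_add_finrank_dualCoannihilator_eq
    (U.map (dotProductEquiv F (Fin n)).toLinearMap)
  rw [LinearEquiv.finrank_map_eq, ← h, Module.finrank_fin_fun] at h2
  omega

/-- Lemma 2.1 (1): `A^⊥ ∩ F^n = χ(A)^⊥ ∩ F^n` and `wt(A) = n - dim_F (A^⊥ ∩ F^n)`. -/
theorem statement0 (F E : Type*) [Field F] [Field E] [Algebra F E]
    [FiniteDimensional F E] (m : ℕ) (hm : Module.finrank F E = m)
    (n : ℕ) (hn : 0 < n) (A : Set (Fin n → E)) :
    dualCapF F E n A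
        = dualCapF F E n (fIncl F E n '' (rankSupport F E n A : Set (Fin n → F))) ∧
      Module.finrank F (rankSupport F E n A) = n - Module.finrank F (dualCapF F E n A) := by
  exact ⟨dual_eq F E n A, by rw [dual_eq]; exact finrank_aux F E n _⟩
end

section
/- Let C be an [n,k] rank metric code with k ≥ 1, let G be a generator matrix of C, and let U be the F-span of the columns of G in E^k. Then wt(C) ≤ dim_F(C) = mk, with equality if and only if U = E^k. Moreover, if wt(C) = dim_F(C), then wt(D) = dim_F(D) for every E-subspace D of C. -/
open Submodule Pointwise

/-- The rank support is the span of all coordinate vectors. -/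
theorem rankSupport_eq_span_coord (F E : Type*) [Field F] [Field E] [Algebra F E]
    [FiniteDimensional F E] (n : ℕ) (A : Set (Fin n → E)) :
    rankSupport F E n A = Submodule.span F
      {v | ∃ c ∈ A, ∃ f : E →ₗ[F] F, v = fun j => f (c j)} := by
  apply le_antisymm
  · apply sInf_le
    intro x hx
    let b := Module.finBasis F E
    have key : x = ∑ i, b i • fIncl F E n (fun j => b.coord i (x j)) := by
      funext j
      rw [Finset.sum_apply]
      conv_lhs => rw [← b.sum_repr (x j)]
      apply Finset.sum_congr rfl
      intro i _
      simp [fIncl, Algebra.smul_def, mul_comm]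
    rw [key]
    refine Submodule.sum_mem _ fun i _ => Submodule.smul_mem _ _ (Submodule.subset_span ?_)
    exact ⟨_, Submodule.subset_span ⟨x, hx, b.coord i, rfl⟩, rfl⟩
  · apply le_sInf
    intro V hV
    rw [Submodule.span_le]
    rintro _ ⟨c, hc, f, rfl⟩
    have h := hV hc
    have gen : ∀ x ∈ Submodule.span E (fIncl F E n '' (V : Set (Fin n → F))),
        ∀ f : E →ₗ[F] F, (fun j => f (x j)) ∈ V := by
      intro x hx
      induction hx using Submodule.span_induction with
      | mem x hx =>
        obtain ⟨u, hu, rfl⟩ := hx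
        intro f
        have : (fun j => f (fIncl F E n u j)) = f 1 • u := by
          funext j
          simp [fIncl, Algebra.algebraMap_eq_smul_one, mul_comm]
        rw [this]
        exact V.smul_mem _ hu
      | zero => intro f; simp only [Pi.zero_apply, map_zero]; exact V.zero_mem
      | add x y _ _ hx hy =>
        intro f
        have := V.add_mem (hx f) (hy f)
        convert this using 1
        funext j
        simp
      | smul a x _ hx =>
        intro f
        exact hx (f ∘ₗ LinearMap.mulLeft F a)
    exact gen c h f

/-- The weight is the dimension of the column span. -/
theorem wt_eq_finrank_cols (F E : Type*) [Field F] [Field E] [Algebra F E]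
    [FiniteDimensional F E] (n k : ℕ) (G : Fin k → Fin n → E) :
    wt F E n (Submodule.span E (Set.range G) : Set (Fin n → E)) =
      Module.finrank F (Submodule.span F (Set.range fun j => fun i => G i j)) := by
  let b := Module.finBasis F E
  let M : Matrix (Fin k × Fin (Module.finrank F E)) (Fin n) F :=
    fun p j => b.coord p.2 (G p.1 j)
  have hrow : rankSupport F E n (Submodule.span E (Set.range G) : Set (Fin n → E)) =
      Submodule.span F (Set.range M.row) := by
    rw [rankSupport_eq_span_coord]
    apply le_antisymm
    · rw [Submodule.span_le]
      rintro _ ⟨c, hc, f, rfl⟩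
      have gen : ∀ x ∈ Submodule.span E (Set.range G),
          ∀ f : E →ₗ[F] F, (fun j => f (x j)) ∈ Submodule.span F (Set.range M.row) := by
        intro x hx
        induction hx using Submodule.span_induction with
        | mem x hx =>
          obtain ⟨r, rfl⟩ := hx
          intro f
          have : (fun j => f (G r j)) = ∑ i, f (b i) • M.row (r, i) := by
            funext j
            rw [Finset.sum_apply]
            conv_lhs => rw [← b.sum_repr (G r j), map_sum]
            simp only [map_smul]
            simp [-Module.Basis.sum_repr, M, Matrix.row, mul_comm]
          rw [this]
          exact Submodule.sum_mem _ fun i _ =>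
            Submodule.smul_mem _ _ (Submodule.subset_span ⟨_, rfl⟩)
        | zero => intro f; simp only [Pi.zero_apply, map_zero]; exact Submodule.zero_mem _
        | add x y _ _ hx hy =>
          intro f
          have := Submodule.add_mem _ (hx f) (hy f)
          convert this using 1
          funext j
          simp
        | smul a x _ hx =>
          intro f
          exact hx (f ∘ₗ LinearMap.mulLeft F a)
      exact gen c hc f
    · rw [Submodule.span_le]
      rintro _ ⟨⟨r, i⟩, rfl⟩
      exact Submodule.subset_span ⟨G r, Submodule.subset_span ⟨r, rfl⟩, b.coord i, rfl⟩
  let φ : (Fin k → E) →ₗ[F] (Fin k × Fin (Module.finrank F E) → F) :=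
    LinearMap.pi fun p => b.coord p.2 ∘ₗ LinearMap.proj p.1
  have hφ : Function.Injective φ := by
    intro x y hxy
    funext r
    apply b.ext_elem
    intro i
    exact congrFun hxy (r, i)
  have hcol : Submodule.span F (Set.range M.col) =
      (Submodule.span F (Set.range fun j => fun i => G i j)).map φ := by
    rw [Submodule.map_span, ← Set.range_comp]
    rfl
  unfold wt
  rw [hrow, ← Matrix.rank_eq_finrank_span_row, Matrix.rank_eq_finrank_span_cols, hcol]
  exact (Submodule.equivMapOfInjective φ hφ _).finrank_eq.symm

/-- Corollary 2.1: for an `[n,k]` code `C` with generator matrix `G` and `U` the `F`-span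
of the columns of `G`, one has `wt(C) ≤ dim_F(C) = mk`, with equality iff `U = E^k`;
moreover if `wt(C) = dim_F(C)` then `wt(D) = dim_F(D)` for every `E`-subspace `D ≤ C`. -/
theorem statement1 (F E : Type*) [Field F] [Field E] [Algebra F E]
    [FiniteDimensional F E] (m : ℕ) (hm : Module.finrank F E = m)
    (n k : ℕ) (hn : 0 < n) (hk : 1 ≤ k)
    (C : Submodule E (Fin n → E)) (hC : Module.finrank E C = k)
    (G : Fin k → Fin n → E) (hG : Submodule.span E (Set.range G) = C)
    (U : Submodule F (Fin k → E))
    (hU : U = Submodule.span F (Set.range fun j => fun i => G i j)) :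
    Module.finrank F (C.restrictScalars F) = m * k ∧
      wt F E n (C : Set (Fin n → E)) ≤ Module.finrank F (C.restrictScalars F) ∧
      (wt F E n (C : Set (Fin n → E)) = Module.finrank F (C.restrictScalars F) ↔ U = ⊤) ∧
      (wt F E n (C : Set (Fin n → E)) = Module.finrank F (C.restrictScalars F) →
        ∀ D : Submodule E (Fin n → E), D ≤ C →
          wt F E n (D : Set (Fin n → E)) = Module.finrank F (D.restrictScalars F)) := by
  have hdim : ∀ D : Submodule E (Fin n → E),
      Module.finrank F (D.restrictScalars F) = m * Module.finrank E D := by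
    intro D
    rw [← hm]
    exact (Module.finrank_mul_finrank F E D).symm
  have hfull : ∀ l : ℕ, Module.finrank F (Fin l → E) = m * l := by
    intro l
    rw [← Module.finrank_mul_finrank F E (Fin l → E), hm, Module.finrank_fin_fun]
  have hwt : wt F E n (C : Set (Fin n → E)) = Module.finrank F U := by
    rw [← hG, wt_eq_finrank_cols, hU]
  have hiff : wt F E n (C : Set (Fin n → E)) = Module.finrank F (C.restrictScalars F) ↔
      U = ⊤ := by
    rw [hwt, hdim, hC, ← hfull]
    constructor
    · exact Submodule.eq_top_of_finrank_eq
    · rintro rfl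
      exact finrank_top F _
  refine ⟨by rw [hdim, hC], ?_, hiff, ?_⟩
  · rw [hwt, hdim, hC, ← hfull]
    exact Submodule.finrank_le U
  · intro h D hD
    have hUtop := hiff.1 h
    let bD := Module.finBasis E D
    let G' : Fin (Module.finrank E D) → Fin n → E := fun i => (bD i : Fin n → E)
    have hspan : Submodule.span E (Set.range G') = D := by
      have : Set.range G' = D.subtype '' Set.range bD := by
        rw [← Set.range_comp]; rfl
      rw [this, ← Submodule.map_span, bD.span_eq, Submodule.map_top, Submodule.range_subtype]
    have hT : ∀ i, ∃ t : Fin k → E, ∑ r, t r • G r = G' i := by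
      intro i
      rw [← Submodule.mem_span_range_iff_exists_fun, hG]
      exact hD (bD i).2
    choose T hT using hT
    let L := Matrix.mulVecLin (Matrix.of T)
    have hL : ∀ j, L (fun r => G r j) = fun i => G' i j := by
      intro j
      funext i
      rw [← hT i]
      simp [L, Matrix.mulVec, dotProduct, Finset.sum_apply]
    have hcolE : Submodule.span E (Set.range fun j => fun i => G' i j) = ⊤ := by
      apply Submodule.eq_top_of_finrank_eq
      have h1 := Matrix.rank_eq_finrank_span_cols (Matrix.of G')
      have h2 := Matrix.rank_eq_finrank_span_row (Matrix.of G')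
      have h3 : Submodule.span E (Set.range (Matrix.of G').row) = D := hspan
      rw [h3] at h2
      rw [Module.finrank_fin_fun]
      exact h1.symm.trans h2
    have hLtop : LinearMap.range L = ⊤ := by
      rw [eq_top_iff, ← hcolE, Submodule.span_le]
      rintro _ ⟨j, rfl⟩
      exact ⟨_, hL j⟩
    have hcolF : Submodule.span F (Set.range fun j => fun i => G' i j) = ⊤ := by
      have hmap : Submodule.span F (Set.range fun j => fun i => G' i j) =
          U.map (L.restrictScalars F) := by
        rw [hU, Submodule.map_span, ← Set.range_comp]
        congr 2
        funext j
        exact (hL j).symm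
      rw [hmap, hUtop, Submodule.map_top, LinearMap.range_eq_top]
      have hs : Function.Surjective L := LinearMap.range_eq_top.1 hLtop
      exact hs
    have hw := wt_eq_finrank_cols F E n _ G'
    rw [hspan, hcolF, finrank_top, hfull] at hw
    rw [hw, hdim]
end

section
/- Let R be a division ring, L a left R-module with dim_R(L) = k < ∞, S ⊆ L with 0 ∈ S, and r ∈ {0,1,…,k−1}. Then S is a cutting r-blocking set of L if and only if for all R-submodules W and I of L with dim_R(W) = k−r−1 and dim_R(I) = 1, it holds that (S + W) ∩ I ≠ {0}, where S + W = {s + w : s ∈ S, w ∈ W}. -/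
open Submodule Pointwise

/-- `S` is a cutting `r`-blocking set of `L`: for every submodule `V` of codimension `r`,
the span of `S ∩ V` is all of `V`. -/
def IsCuttingBlocking (R : Type*) {L : Type*} [DivisionRing R] [AddCommGroup L] [Module R L]
    (S : Set L) (r : ℕ) : Prop :=
  ∀ V : Submodule R L, Module.finrank R V = Module.finrank R L - r →
    Submodule.span R (S ∩ (V : Set L)) = V

/-- Proposition 2.1: for `0 ∈ S ⊆ L` and `r ∈ {0, …, k-1}`, `S` is a cutting `r`-blocking
set of `L` iff `(S + W) ∩ I ≠ {0}` for all submodules `W, I` with `dim W = k - r - 1`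
and `dim I = 1`. -/
theorem statement2 (R L : Type*) [DivisionRing R] [AddCommGroup L] [Module R L]
    [Module.Finite R L] (k : ℕ) (hk : Module.finrank R L = k)
    (S : Set L) (h0 : (0 : L) ∈ S) (r : ℕ) (hr : r + 1 ≤ k) :
    IsCuttingBlocking R S r ↔
      ∀ W I : Submodule R L, Module.finrank R W = k - r - 1 → Module.finrank R I = 1 →
        (S + (W : Set L)) ∩ (I : Set L) ≠ {0} := by
  constructor
  · intro hS W I hW hI heq
    have key : ∀ s ∈ S, ∀ w ∈ W, s + w ∈ I → s + w = 0 := by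
      intro s hs w hw hi
      have : s + w ∈ (S + (W : Set L)) ∩ (I : Set L) := ⟨Set.add_mem_add hs hw, hi⟩
      rw [heq] at this
      exact this
    have hinf : W ⊓ I = ⊥ := by
      rw [eq_bot_iff]
      rintro x ⟨hxW, hxI⟩
      have := key 0 h0 x hxW (by simpa using hxI)
      simpa using this
    have hdim := Submodule.finrank_sup_add_finrank_inf_eq W I
    rw [hinf, finrank_bot, hW, hI] at hdim
    have hV := hS (W ⊔ I) (by omega)
    have hle : W ⊔ I ≤ W := by
      rw [← hV, Submodule.span_le]
      rintro s ⟨hs, hsV⟩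
      obtain ⟨w, hw, i, hi, rfl⟩ := Submodule.mem_sup.1 hsV
      have := key _ hs (-w) (W.neg_mem hw) (by simpa using hi)
      have hi0 : i = 0 := by simpa using this
      simpa [hi0] using hw
    have := Submodule.finrank_mono hle
    omega
  · intro H V hV
    have hle : Submodule.span R (S ∩ (V : Set L)) ≤ V :=
      Submodule.span_le.2 Set.inter_subset_right
    by_contra hne
    obtain ⟨v, hvV, hv⟩ := SetLike.exists_of_lt (lt_of_le_of_ne hle hne)
    set U := (Submodule.span R (S ∩ (V : Set L))).comap V.subtype with hU
    have hUlt : U < ⊤ := by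
      rw [lt_top_iff_ne_top]
      intro h
      have : (⟨v, hvV⟩ : V) ∈ U := h ▸ Submodule.mem_top
      exact hv this
    obtain ⟨f, hf, hUf⟩ := Submodule.exists_le_ker_of_lt_top U hUlt
    obtain ⟨x, hx⟩ : ∃ x, f x ≠ 0 := by
      by_contra! h
      exact hf (LinearMap.ext h)
    have hrk := LinearMap.finrank_range_add_finrank_ker f
    rw [LinearMap.range_eq_top.2 (LinearMap.surjective hf), finrank_top,
      Module.finrank_self] at hrk
    have hx0 : (x : L) ≠ 0 := by
      intro h
      have : x = 0 := Subtype.ext h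
      simp [this] at hx
    refine H ((LinearMap.ker f).map V.subtype) (Submodule.span R {(x : L)})
      (by rw [Submodule.finrank_map_subtype_eq]; omega) (finrank_span_singleton hx0) ?_
    apply Set.eq_singleton_iff_unique_mem.2
    refine ⟨⟨⟨0, h0, 0, Submodule.zero_mem _, by simp⟩, Submodule.zero_mem _⟩, ?_⟩
    rintro y ⟨⟨s, hs, w, hw, hsw⟩, hy⟩
    obtain ⟨w, hwk, rfl⟩ := hw
    obtain ⟨c, rfl⟩ := Submodule.mem_span_singleton.1 hy
    have hs' : s = ((c • x - w : V) : L) := by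
      have : s + (w : L) = c • (x : L) := hsw
      simp [← this]
    have hsV : (c • x - w : V) ∈ U := by
      apply Submodule.subset_span
      rw [hs'] at hs
      exact ⟨hs, (c • x - w : V).2⟩
    have h1 : f (c • x - w) = 0 := hUf hsV
    have h2 : f w = 0 := hwk
    rw [map_sub, h2, sub_zero, map_smul, smul_eq_mul] at h1
    have : c = 0 := by simpa [hx] using h1
    simp [this]
end

section
/- Let X be a k-dimensional E-vector space, (b,w) ∈ ℕ² with b ≤ k, and let U be an F-subspace of X that is (b,w)-evasive in X. Let A be an E-subspace of X with dim_E(A) = a ≤ b, and write v = dim_F(U ∩ A). Then the image (U + A)/A of U in the quotient E-vector space X/A is (b−a, w−v)-evasive in X/A. -/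
open Submodule Pointwise

/-- `J` is `(h, r)`-evasive in the `E`-vector space `X`. -/
def IsEvasive (F E : Type*) {X : Type*} [Field F] [Field E] [Algebra F E]
    [AddCommGroup X] [Module E X] [Module F X] [IsScalarTower F E X]
    (J : Submodule F X) (h : ℕ) (r : ℤ) : Prop :=
  Submodule.span E (J : Set X) = ⊤ ∧
    ∀ M : Submodule E X, Module.finrank E M = h →
      (Module.finrank F ↥(J ⊓ M.restrictScalars F) : ℤ) ≤ r

theorem evasive_aux {F V W : Type*} [Field F] [AddCommGroup V] [AddCommGroup W]
    [Module F V] [Module F W] [FiniteDimensional F V] (f : V →ₗ[F] W) (P : Submodule F V) :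
    Module.finrank F ↥(P.map f) + Module.finrank F ↥(P ⊓ LinearMap.ker f)
      = Module.finrank F ↥P := by
  have h := LinearMap.finrank_range_add_finrank_ker (f.domRestrict P)
  have h1 : LinearMap.range (f.domRestrict P) = P.map f := by
    rw [LinearMap.domRestrict, LinearMap.range_comp, Submodule.range_subtype]
  have h2 : (LinearMap.ker (f.domRestrict P)).map P.subtype = P ⊓ LinearMap.ker f := by
    rw [LinearMap.domRestrict, LinearMap.ker_comp, Submodule.map_comap_subtype]
  rw [h1] at h
  rw [← h2, Submodule.finrank_map_subtype_eq]
  exact h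

/-- Lemma 2.3 (3): if `U` is `(b,w)`-evasive in `X` and `A` is an `E`-subspace with
`dim_E A = a ≤ b` and `v = dim_F (U ∩ A)`, then `(U + A)/A` is `(b-a, w-v)`-evasive
in `X/A`. -/
theorem statement3 (F E : Type*) [Field F] [Field E] [Algebra F E]
    [FiniteDimensional F E] (m : ℕ) (hm : Module.finrank F E = m)
    (X : Type*) [AddCommGroup X] [Module E X] [Module F X] [IsScalarTower F E X]
    [FiniteDimensional E X] (k : ℕ) (hX : Module.finrank E X = k)
    (b w : ℕ) (hb : b ≤ k) (U : Submodule F X) (hU : IsEvasive F E U b (w : ℤ))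
    (A : Submodule E X) (a : ℕ) (ha : Module.finrank E A = a) (hab : a ≤ b)
    (v : ℕ) (hv : Module.finrank F ↥(U ⊓ A.restrictScalars F) = v) :
    IsEvasive F E (U.map ((A.mkQ).restrictScalars F)) (b - a) ((w : ℤ) - (v : ℤ)) := by
  have : FiniteDimensional F X := FiniteDimensional.trans F E X
  obtain ⟨hspan, hev⟩ := hU
  refine ⟨?_, ?_⟩
  · have : ((U.map ((A.mkQ).restrictScalars F) : Submodule F (X ⧸ A)) : Set (X ⧸ A))
        = Set.image A.mkQ (U : Set X) := by
      ext x
      simp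
    rw [this, Submodule.span_image, hspan, Submodule.map_top, Submodule.range_mkQ]
  · intro M hM
    have hN : Module.finrank E ↥(M.comap A.mkQ) = b := by
      have h := evasive_aux A.mkQ (M.comap A.mkQ)
      rw [Submodule.map_comap_eq_of_surjective A.mkQ_surjective, Submodule.ker_mkQ,
        inf_eq_right.2 (Submodule.le_comap_mkQ A M), hM, ha] at h
      omega
    have h := hev _ hN
    have h2 := evasive_aux ((A.mkQ).restrictScalars F) (U ⊓ (M.comap A.mkQ).restrictScalars F)
    have e1 : (U ⊓ (M.comap A.mkQ).restrictScalars F).map ((A.mkQ).restrictScalars F)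
        = U.map ((A.mkQ).restrictScalars F) ⊓ M.restrictScalars F := by
      ext x
      constructor
      · rintro ⟨y, ⟨hy1, hy2⟩, rfl⟩
        exact ⟨⟨y, hy1, rfl⟩, hy2⟩
      · rintro ⟨⟨y, hy1, rfl⟩, hy2⟩
        exact ⟨y, ⟨hy1, hy2⟩, rfl⟩
    have e2 : (U ⊓ (M.comap A.mkQ).restrictScalars F)
        ⊓ LinearMap.ker ((A.mkQ).restrictScalars F) = U ⊓ A.restrictScalars F := by
      rw [LinearMap.ker_restrictScalars, Submodule.ker_mkQ, inf_assoc]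
      congr 1
      exact inf_eq_right.2 (Submodule.le_comap_mkQ A M)
    rw [e1, e2, hv] at h2
    omega
end

section
/- For any real number a > (1+√5)/2 and any (m,n,h) ∈ ℕ³ with 1 ≤ h ≤ min{m,n}, it holds that a^{−h(m+n−h)} · (Σ_{i=0}^{h} δ_a(m,i)·bin_a(n,i)) < 1/((a−1)(a²−a−1)a^{m+n−2h−2}) + a²/(a²−a−1). -/
open Submodule Pointwise

/-- The `a`-binomial coefficient `bin_a(n, r)` (as a real number). -/
noncomputable def qbin (a : ℝ) (n r : ℕ) : ℝ :=
  if r ≤ n then ∏ i ∈ Finset.Icc 1 r, (a ^ (i + n - r) - 1) / (a ^ i - 1) else 0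

/-- `δ_a(n, r) = ∏_{i=0}^{r-1} (a^n - a^i)` (as a real number). -/
noncomputable def qdelta (a : ℝ) (n r : ℕ) : ℝ :=
  ∏ i ∈ Finset.range r, (a ^ n - a ^ i)

theorem aux_euler (x : ℝ) (hx0 : 0 < x) (hx1 : x < 1) (hx2 : 0 < 1 - x - x ^ 2) (i : ℕ) :
    1 - x - x ^ 2 + x ^ (i + 2) ≤ ∏ j ∈ Finset.Icc 1 (i + 1), (1 - x ^ j) := by
  induction i with
  | zero => simp
  | succ i ih =>
    rw [Finset.prod_Icc_succ_top (by omega)]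
    have hy : x ^ (i + 2) ≤ x ^ 2 := pow_le_pow_of_le_one hx0.le hx1.le (by omega)
    have hy0 : 0 < x ^ (i + 2) := by positivity
    have hy1 : x ^ (i + 2) ≤ 1 := pow_le_one₀ hx0.le hx1.le
    have e : x ^ (i + 1 + 2) = x * x ^ (i + 2) := by ring
    have e2 : i + 1 + 1 = i + 2 := rfl
    rw [e, e2]
    refine le_trans ?_ (mul_le_mul_of_nonneg_right ih (by linarith))
    nlinarith [mul_nonneg hy0.le (sub_nonneg.2 hy)]

theorem aux_euler' (x : ℝ) (hx0 : 0 < x) (hx1 : x < 1) (hx2 : 0 < 1 - x - x ^ 2) (i : ℕ) :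
    1 - x - x ^ 2 < ∏ j ∈ Finset.Icc 1 i, (1 - x ^ j) := by
  cases i with
  | zero =>
    rw [Finset.Icc_eq_empty (by omega), Finset.prod_empty]
    nlinarith [sq_nonneg x]
  | succ i =>
    have := aux_euler x hx0 hx1 hx2 i
    have hy0 : 0 < x ^ (i + 2) := by positivity
    linarith

theorem aux_delta (a : ℝ) (ha : 1 < a) (m i : ℕ) (h : i ≤ m) :
    qdelta a m i ≤ a ^ (m * i) := by
  unfold qdelta
  calc _ ≤ ∏ j ∈ Finset.range i, a ^ m := by
        apply Finset.prod_le_prod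
        · intro j hj
          have := Finset.mem_range.1 hj
          exact sub_nonneg.2 (pow_le_pow_right₀ ha.le (by omega))
        · intro j hj
          have : 0 < a ^ j := by positivity
          linarith
    _ = _ := by simp [pow_mul]

theorem aux_bin (a : ℝ) (ha : 1 < a) (hx2 : 0 < 1 - a⁻¹ - a⁻¹ ^ 2) (n i : ℕ) (h : i ≤ n) :
    0 ≤ qbin a n i ∧ qbin a n i < a ^ ((n - i) * i) / (1 - a⁻¹ - a⁻¹ ^ 2) := by
  have ha0 : 0 < a := by linarith
  have hx0 : 0 < a⁻¹ := by positivity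
  have hx1 : a⁻¹ < 1 := inv_lt_one_of_one_lt₀ ha
  unfold qbin
  rw [if_pos h]
  have key : ∀ j ∈ Finset.Icc 1 i, 0 ≤ (a ^ (j + n - i) - 1) / (a ^ j - 1) ∧
      (a ^ (j + n - i) - 1) / (a ^ j - 1) ≤ a ^ (n - i) / (1 - a⁻¹ ^ j) := by
    intro j hj
    have hj1 := (Finset.mem_Icc.1 hj).1
    have h1 : 1 < a ^ j := one_lt_pow₀ ha (by omega)
    have h2 : 1 ≤ a ^ (j + n - i) := one_le_pow₀ ha.le
    refine ⟨div_nonneg (by linarith) (by linarith), ?_⟩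
    have e : a ^ (n - i) / (1 - a⁻¹ ^ j) = a ^ (j + n - i) / (a ^ j - 1) := by
      have : j + n - i = j + (n - i) := by omega
      rw [this, pow_add, inv_pow]
      have h3 : a ^ j - 1 ≠ 0 := by linarith
      have h4 : 1 - (a ^ j)⁻¹ ≠ 0 := by
        have := inv_lt_one_of_one_lt₀ h1
        linarith
      rw [div_eq_div_iff h4 h3]
      have : a ^ j ≠ 0 := by positivity
      field_simp
    rw [e]
    exact div_le_div_of_nonneg_right (by linarith) (by linarith)
  refine ⟨Finset.prod_nonneg fun j hj => (key j hj).1, ?_⟩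
  calc _ ≤ ∏ j ∈ Finset.Icc 1 i, a ^ (n - i) / (1 - a⁻¹ ^ j) :=
        Finset.prod_le_prod (fun j hj => (key j hj).1) (fun j hj => (key j hj).2)
    _ = a ^ ((n - i) * i) / ∏ j ∈ Finset.Icc 1 i, (1 - a⁻¹ ^ j) := by
        rw [Finset.prod_div_distrib]; simp [pow_mul]
    _ < _ := div_lt_div_of_pos_left (by positivity) hx2 (aux_euler' _ hx0 hx1 hx2 i)

theorem aux_sum (a : ℝ) (ha : 1 < a) (u v h : ℕ) :
    ∑ i ∈ Finset.range h, a ^ (i * (h + u + (h + v) - i)) ≤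
      a ^ (h * (h + u + v)) * (a⁻¹ ^ (u + v + 1) / (1 - a⁻¹)) := by
  have ha0 : 0 < a := by linarith
  have hx0 : 0 < a⁻¹ := by positivity
  have hx1 : a⁻¹ < 1 := inv_lt_one_of_one_lt₀ ha
  calc _ ≤ ∑ i ∈ Finset.range h, a ^ (h * (h + u + v)) * a⁻¹ ^ (u + v + 1) * a⁻¹ ^ (h - 1 - i) := by
        apply Finset.sum_le_sum
        intro i hi
        obtain ⟨k, rfl⟩ := Nat.exists_eq_add_of_lt (Finset.mem_range.1 hi)
        rw [inv_pow, inv_pow, ← div_eq_mul_inv, ← div_eq_mul_inv, div_div, ← pow_add,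
          le_div_iff₀ (by positivity), ← pow_add]
        apply pow_le_pow_right₀ ha.le
        have e1 : i + k + 1 + u + (i + k + 1 + v) - i = i + 2 * k + 2 + u + v := by omega
        have e2 : i + k + 1 - 1 - i = k := by omega
        rw [e1, e2]
        nlinarith [Nat.zero_le (k * u), Nat.zero_le (k * v), Nat.zero_le (k * k)]
    _ = a ^ (h * (h + u + v)) * a⁻¹ ^ (u + v + 1) * ∑ i ∈ Finset.range h, a⁻¹ ^ i := by
        rw [← Finset.mul_sum, Finset.sum_range_reflect (fun k => a⁻¹ ^ k) h]
    _ ≤ a ^ (h * (h + u + v)) * a⁻¹ ^ (u + v + 1) * (1 / (1 - a⁻¹)) := by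
        apply mul_le_mul_of_nonneg_left _ (by positivity)
        rw [le_div_iff₀ (by linarith), geom_sum_mul_neg]
        have : 0 < a⁻¹ ^ h := by positivity
        linarith
    _ = _ := by ring

/-- Proposition 2.2 (2): for `a > (1+√5)/2` and `1 ≤ h ≤ min{m,n}`,
`a^{-h(m+n-h)} Σ_{i=0}^h δ_a(m,i) bin_a(n,i)
  < 1/((a-1)(a²-a-1)a^{m+n-2h-2}) + a²/(a²-a-1)`. -/
theorem statement4 (a : ℝ) (ha : (1 + Real.sqrt 5) / 2 < a)
    (m n h : ℕ) (h1 : 1 ≤ h) (hm : h ≤ m) (hn : h ≤ n) :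
    a ^ (-((h * (m + n - h) : ℕ) : ℤ)) * (∑ i ∈ Finset.range (h + 1), qdelta a m i * qbin a n i) <
      1 / ((a - 1) * (a ^ 2 - a - 1) * a ^ ((m : ℤ) + (n : ℤ) - 2 * (h : ℤ) - 2)) +
        a ^ 2 / (a ^ 2 - a - 1) := by
  have h5 : Real.sqrt 5 ^ 2 = 5 := Real.sq_sqrt (by norm_num)
  have h50 : 0 ≤ Real.sqrt 5 := Real.sqrt_nonneg 5
  have ha1 : 1 < a := by nlinarith
  have hq : 0 < a ^ 2 - a - 1 := by nlinarith
  have ha0 : 0 < a := by linarith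
  have hP : 1 - a⁻¹ - a⁻¹ ^ 2 = (a ^ 2 - a - 1) / a ^ 2 := by field_simp
  have hx2 : 0 < 1 - a⁻¹ - a⁻¹ ^ 2 := by rw [hP]; positivity
  have hx1 : a⁻¹ < 1 := inv_lt_one_of_one_lt₀ ha1
  have hT : ∀ i ∈ Finset.range (h + 1), qdelta a m i * qbin a n i <
      a ^ (i * (m + n - i)) * (1 / (1 - a⁻¹ - a⁻¹ ^ 2)) := by
    intro i hi
    have hi' := Finset.mem_range.1 hi
    obtain ⟨b0, b1⟩ := aux_bin a ha1 hx2 n i (by omega)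
    have d := aux_delta a ha1 m i (by omega)
    calc _ ≤ a ^ (m * i) * qbin a n i := mul_le_mul_of_nonneg_right d b0
      _ < a ^ (m * i) * (a ^ ((n - i) * i) / (1 - a⁻¹ - a⁻¹ ^ 2)) :=
        mul_lt_mul_of_pos_left b1 (by positivity)
      _ = _ := by
        have : i * (m + n - i) = m * i + (n - i) * i := by
          rw [Nat.add_sub_assoc (by omega)]; ring
        rw [this, pow_add]; ring
  have hS := Finset.sum_lt_sum_of_nonempty (by simp) hT
  rw [← Finset.sum_mul] at hS
  obtain ⟨u, rfl⟩ := Nat.exists_eq_add_of_le hm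
  obtain ⟨v, rfl⟩ := Nat.exists_eq_add_of_le hn
  have hA := aux_sum a ha1 u v h
  have e1 : h + u + (h + v) - h = h + u + v := by omega
  rw [Finset.sum_range_succ (fun i => a ^ (i * (h + u + (h + v) - i))), e1] at hS
  rw [e1, zpow_neg, zpow_natCast]
  have hpos : 0 < a ^ (h * (h + u + v)) := by positivity
  rw [inv_mul_lt_iff₀ hpos]
  refine lt_of_lt_of_le hS ?_
  have e2 : ((h + u : ℕ) : ℤ) + ((h + v : ℕ) : ℤ) - 2 * (h : ℤ) - 2 = ((u + v : ℕ) : ℤ) - 2 := by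
    push_cast; ring
  rw [e2, zpow_sub₀ ha0.ne', zpow_natCast]
  have hr : 1 / ((a - 1) * (a ^ 2 - a - 1) * (a ^ (u + v) / a ^ (2 : ℤ))) +
        a ^ 2 / (a ^ 2 - a - 1) =
      (a⁻¹ ^ (u + v + 1) / (1 - a⁻¹) + 1) * (1 / (1 - a⁻¹ - a⁻¹ ^ 2)) := by
    have h3 : 1 - a⁻¹ = (a - 1) / a := by field_simp
    have h4 : a - 1 ≠ 0 := by linarith
    rw [hP, h3, inv_pow, pow_succ a (u + v)]
    have h6 : a ^ (2 : ℤ) = a ^ 2 := by norm_cast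
    rw [h6]
    have h7 : a ^ (u + v) ≠ 0 := by positivity
    have h8 := hq.ne'
    generalize a ^ 2 - a - 1 = q at *
    generalize a - 1 = r at *
    generalize a ^ (u + v) = w at *
    field_simp
  rw [hr, ← mul_assoc]
  apply mul_le_mul_of_nonneg_right _ (by positivity)
  linarith
end

section
/- Let Y be a k-dimensional E-vector space and t ∈ {0,1,…,k}. Then: (i) for any F-subspace A of Y with dim_F(A) ≤ mt, there exists an E-subspace V of Y with dim_E(V) = k−t and A ∩ V = {0}; (ii) for any F-subspace B of Y with dim_F(B) ≥ mt, there exists an E-subspace W of Y with dim_E(W) = k−t and B + W = Y. -/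
open Submodule Pointwise

/-- Over an infinite field, finitely many polynomial maps from fewer variables do not cover. -/
lemma poly_not_cover {F : Type*} [Field F] [Infinite F] {n N : ℕ} {τ ι : Type} [Fintype τ]
    [Fintype ι] (hc : Fintype.card τ = N) (h : N < n) (f : ι → Fin n → MvPolynomial τ F) :
    ∃ y : Fin n → F, ∀ i (x : τ → F), y ≠ fun s => MvPolynomial.eval x (f i s) := by
  have key : ∀ i, ∃ P : MvPolynomial (Fin n) F, P ≠ 0 ∧ MvPolynomial.aeval (f i) P = 0 := by
    intro i
    have hn : ¬ AlgebraicIndependent F (f i) := by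
      intro hi
      have h1 := hi.lift_cardinalMk_le_trdeg
      rw [MvPolynomial.trdeg_of_isDomain] at h1
      simp [hc] at h1
      omega
    rw [algebraicIndependent_iff] at hn
    push Not at hn
    obtain ⟨P, h0, h1⟩ := hn
    exact ⟨P, h1, h0⟩
  choose P hP hP' using key
  have hprod : ∏ i, P i ≠ 0 := Finset.prod_ne_zero_iff.mpr fun i _ => hP i
  by_contra! hcon
  apply hprod
  apply MvPolynomial.funext
  intro y
  obtain ⟨i, x, rfl⟩ := hcon y
  rw [map_prod, map_zero]
  apply Finset.prod_eq_zero (Finset.mem_univ i)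
  have := congrArg (MvPolynomial.eval x) (hP' i)
  rw [map_zero, MvPolynomial.aeval_def, ← MvPolynomial.coe_eval₂Hom,
    ← RingHom.comp_apply] at this
  rw [← this]
  have hh : MvPolynomial.eval (fun s => MvPolynomial.eval x (f i s)) =
      (MvPolynomial.eval x).comp
        (MvPolynomial.eval₂Hom (algebraMap F (MvPolynomial τ F)) (f i)) := by
    apply MvPolynomial.ringHom_ext
    · intro a; simp [MvPolynomial.algebraMap_eq]
    · intro s; simp
  rw [hh]

lemma exists_not_smul {F E : Type*} [Field F] [Field E] [Algebra F E]
    [FiniteDimensional F E] {Y : Type*} [AddCommGroup Y] [Module E Y] [Module F Y]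
    [IsScalarTower F E Y] [FiniteDimensional E Y] (t : ℕ) (ht : t < Module.finrank E Y)
    (A : Submodule F Y) (hA : Module.finrank F A ≤ Module.finrank F E * t) :
    ∃ y : Y, ∀ (e : E) (a : A), e • (a : Y) ≠ y := by
  have : FiniteDimensional F Y := FiniteDimensional.trans F E Y
  have hY := Module.finrank_mul_finrank F E Y
  have hm : 0 < Module.finrank F E := Module.finrank_pos
  have hdim : Module.finrank F E + Module.finrank F A ≤ Module.finrank F Y := by
    rw [← hY]; nlinarith
  rcases finite_or_infinite F with hF | hF
  · by_contra! hcon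
    have : Finite E := Module.finite_of_finite F
    have : Finite Y := Module.finite_of_finite F
    let g : E × A → Y := fun p => p.1 • (p.2 : Y)
    have hs : Function.Surjective g := fun y => by
      obtain ⟨e, a, h⟩ := hcon y
      exact ⟨(e, a), h⟩
    have hcard : Nat.card (E × A) ≤ Nat.card Y := by
      rw [Nat.card_prod, Module.natCard_eq_pow_finrank (K := F) (V := E),
        Module.natCard_eq_pow_finrank (K := F) (V := A),
        Module.natCard_eq_pow_finrank (K := F) (V := Y), ← pow_add]
      exact Nat.pow_le_pow_right Nat.card_pos hdim
    have hb := (hs.bijective_of_nat_card_le hcard).1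
    have : ((0 : E), (0 : A)) = (1, 0) := hb (by simp [g])
    simp at this
  · obtain ⟨m', hm'⟩ : ∃ m', Module.finrank F E = m' + 1 := ⟨_, (Nat.succ_pred_eq_of_pos hm).symm⟩
    let b : Module.Basis (Fin (m' + 1)) F E := Module.finBasisOfFinrankEq F E hm'
    let bA := Module.finBasis F A
    let bY := Module.finBasis F Y
    obtain ⟨y, hy⟩ := poly_not_cover (F := F) (n := Module.finrank F Y)
      (τ := Fin m' ⊕ Fin (Module.finrank F A)) (ι := Fin (m' + 1)) rfl
      (by simp; omega)
      (fun i s => ∑ j, (i.insertNth (α := fun _ => MvPolynomial _ F) 1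
          (fun c => MvPolynomial.X (Sum.inl c)) : Fin (m' + 1) → _) j *
        ∑ l, MvPolynomial.X (Sum.inr l) *
          MvPolynomial.C (bY.repr (b j • (bA l : Y)) s))
    refine ⟨∑ s, y s • bY s, fun e a hea => ?_⟩
    -- the case `e ≠ 0`
    have main : ∀ (e : E) (a : A), e ≠ 0 → e • (a : Y) ≠ ∑ s, y s • bY s := by
      intro e a he hea
      obtain ⟨i, hi⟩ : ∃ i, b.repr e i ≠ 0 := by
        by_contra! hcon
        exact he (b.repr.map_eq_zero_iff.mp (Finsupp.ext hcon))
      set c := b.repr e i with hc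
      let e' : E := c⁻¹ • e
      let a' : A := c • a
      have hea' : e' • (a' : Y) = ∑ s, y s • bY s := by
        rw [← hea]
        simp only [e', a', Submodule.coe_smul]
        rw [← algebraMap_smul E c, smul_smul, Algebra.smul_def, mul_right_comm, ← map_mul,
          inv_mul_cancel₀ hi, map_one, one_mul]
      have he'i : b.repr e' i = 1 := by
        simp [e', ← hc, inv_mul_cancel₀ hi]
      apply hy i (Sum.elim (fun j => b.repr e' (i.succAbove j)) (fun l => bA.repr a' l))
      funext s
      have h1 : y s = bY.repr (e' • (a' : Y)) s := by
        rw [hea', bY.repr_sum_self]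
      have h2 : e' • (a' : Y) = ∑ j, b.repr e' j • ∑ l, bA.repr a' l • (b j • (bA l : Y)) := by
        conv_lhs => rw [← b.sum_repr e', ← bA.sum_repr a']
        rw [Finset.sum_smul]
        refine Finset.sum_congr rfl fun j _ => ?_
        rw [smul_assoc]
        congr 1
        simp only [Submodule.coe_sum, Submodule.coe_smul, Finset.smul_sum]
        refine Finset.sum_congr rfl fun l _ => ?_
        rw [smul_comm]
      rw [h1, h2]
      simp only [map_sum, map_smul, Finsupp.coe_finsetSum, Finset.sum_apply, Finsupp.smul_apply,
        smul_eq_mul, map_mul, MvPolynomial.eval_X, MvPolynomial.eval_C, Sum.elim_inr]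
      refine Finset.sum_congr rfl fun j _ => ?_
      congr 1
      refine Fin.succAboveCases i ?_ (fun j => ?_) j
      · simp [he'i]
      · simp
    by_cases he : e = 0
    · exact main 1 0 one_ne_zero (by rw [← hea, he]; simp)
    · exact main e a he hea

lemma exists_avoid {F E : Type*} [Field F] [Field E] [Algebra F E]
    [FiniteDimensional F E] {Y : Type*} [AddCommGroup Y] [Module E Y] [Module F Y]
    [IsScalarTower F E Y] [FiniteDimensional E Y] (t : ℕ)
    (A : Submodule F Y) (hA : Module.finrank F A ≤ Module.finrank F E * t) (s : ℕ)
    (hs : s + t ≤ Module.finrank E Y) :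
    ∃ V : Submodule E Y, Module.finrank E V = s ∧ ∀ x ∈ A, x ∈ V → x = 0 := by
  have : FiniteDimensional F Y := FiniteDimensional.trans F E Y
  induction s with
  | zero => exact ⟨⊥, by simp, fun x _ h => by simpa using h⟩
  | succ s ih =>
    obtain ⟨V, hV, hAV⟩ := ih (by omega)
    have hq := V.finrank_quotient_add_finrank
    let π : Y →ₗ[F] (Y ⧸ V) := V.mkQ.restrictScalars F
    obtain ⟨y', hy'⟩ := exists_not_smul (F := F) (E := E) (Y := Y ⧸ V) t (by omega) (A.map π)
      ((Submodule.finrank_map_le π A).trans hA)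
    obtain ⟨y, rfl⟩ := V.mkQ_surjective y'
    have hyV : y ∉ V := by
      intro h
      apply hy' 0 0
      have h0 : V.mkQ y = 0 := by simpa using h
      rw [h0, zero_smul]
    refine ⟨V ⊔ Submodule.span E {y}, by rw [Submodule.finrank_sup_span_singleton hyV, hV], ?_⟩
    intro x hx hxV
    obtain ⟨v, hv, w, hw, rfl⟩ := Submodule.mem_sup.mp hxV
    obtain ⟨e, rfl⟩ := Submodule.mem_span_singleton.mp hw
    by_cases he : e = 0
    · subst he
      exact hAV _ hx (by simpa using hv)
    · exfalso
      apply hy' e⁻¹ ⟨π (v + e • y), Submodule.mem_map_of_mem hx⟩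
      have : V.mkQ v = 0 := by simpa using hv
      change e⁻¹ • V.mkQ (v + e • y) = V.mkQ y
      rw [map_add, this, zero_add, map_smul, smul_smul, inv_mul_cancel₀ he, one_smul]

/-- Theorem 4.1 (1): in a `k`-dimensional `E`-vector space `Y`, for `t ≤ k`:
(i) every `F`-subspace `A` with `dim_F A ≤ mt` avoids some `E`-subspace `V` of
dimension `k - t`; (ii) every `F`-subspace `B` with `dim_F B ≥ mt` is complemented by
some `E`-subspace `W` of dimension `k - t`, i.e. `B + W = Y`. -/
theorem statement5 (F E : Type*) [Field F] [Field E] [Algebra F E]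
    [FiniteDimensional F E] (m : ℕ) (hm : Module.finrank F E = m)
    (Y : Type*) [AddCommGroup Y] [Module E Y] [Module F Y] [IsScalarTower F E Y]
    [FiniteDimensional E Y] (k : ℕ) (hY : Module.finrank E Y = k)
    (t : ℕ) (ht : t ≤ k) :
    (∀ A : Submodule F Y, Module.finrank F A ≤ m * t →
      ∃ V : Submodule E Y, Module.finrank E V = k - t ∧
        (A : Set Y) ∩ (V : Set Y) = {0}) ∧
    (∀ B : Submodule F Y, m * t ≤ Module.finrank F B →
      ∃ W : Submodule E Y, Module.finrank E W = k - t ∧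
        (B : Set Y) + (W : Set Y) = Set.univ) := by
  subst hm hY
  have : FiniteDimensional F Y := FiniteDimensional.trans F E Y
  constructor
  · intro A hA
    obtain ⟨V, hV, h⟩ := exists_avoid (E := E) t A hA (Module.finrank E Y - t) (by omega)
    refine ⟨V, hV, ?_⟩
    ext x
    constructor
    · rintro ⟨h1, h2⟩
      exact h x h1 h2
    · rintro rfl
      exact ⟨A.zero_mem, V.zero_mem⟩
  · intro B hB
    let bB := Module.finBasis F B
    let v : Fin (Module.finrank F E * t) → Y := fun i => (bB (Fin.castLE hB i) : Y)
    have hv : LinearIndependent F v :=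
      (bB.linearIndependent.map' B.subtype (Submodule.ker_subtype B)).comp _
        (Fin.castLE_injective hB)
    let A := Submodule.span F (Set.range v)
    have hAB : A ≤ B := Submodule.span_le.mpr (by rintro _ ⟨i, rfl⟩; exact (bB _).2)
    have hA : Module.finrank F A = Module.finrank F E * t := by
      simpa using finrank_span_eq_card hv
    obtain ⟨W, hW, h⟩ := exists_avoid (E := E) t A hA.le (Module.finrank E Y - t) (by omega)
    refine ⟨W, hW, ?_⟩
    have hW' : Module.finrank F (W.restrictScalars F) =
        Module.finrank F E * (Module.finrank E Y - t) := by
      rw [← hW]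
      exact (Module.finrank_mul_finrank F E W).symm
    have htop : A ⊔ W.restrictScalars F = ⊤ := by
      apply Submodule.eq_top_of_disjoint
      · rw [hA, hW', ← mul_add, Nat.add_sub_cancel' ht, Module.finrank_mul_finrank]
      · rw [Submodule.disjoint_def]
        exact fun x hx hx' => h x hx hx'
    ext x
    simp only [Set.mem_univ, iff_true]
    obtain ⟨a, ha, w, hw, rfl⟩ := Submodule.mem_sup.mp (htop ▸ Submodule.mem_top : x ∈ A ⊔ W.restrictScalars F)
    exact Set.add_mem_add (hAB ha) hw
end

section
/- Let (n,k) ∈ ℕ² with n ≥ k ≥ 1, let C be an [n,k] rank metric code, and let s ∈ {0,1,…,k}. Then max{wt(D) : D an E-subspace of C with dim_E(D) = s} = min{ms, wt(C)}. -/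
open Submodule Pointwise

theorem aux_perturb {F A B : Type*} [Field F] [Infinite F] [AddCommGroup A] [Module F A]
    [AddCommGroup B] [Module F B] [FiniteDimensional F A]
    (f g : A →ₗ[F] B) (x : A) (hx : f x = 0) (hg : g x ∉ LinearMap.range f) :
    ∃ μ : F, Module.finrank F (LinearMap.range f) <
      Module.finrank F (LinearMap.range (g - μ • f)) := by
  obtain ⟨σ, hσ⟩ := f.rangeRestrict.exists_rightInverse_of_surjective f.range_rangeRestrict
  have hσ' : ∀ r, f (σ r) = (r : B) := fun r => by
    have := LinearMap.congr_fun hσ r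
    exact congrArg Subtype.val this
  let j₀ : (LinearMap.range f × F) →ₗ[F] B :=
    (LinearMap.range f).subtype.coprod (LinearMap.toSpanSingleton F B (g x))
  have hj₀ : LinearMap.ker j₀ = ⊥ := by
    rw [LinearMap.ker_eq_bot']
    rintro ⟨r, c⟩ h
    have h : (r : B) + c • g x = 0 := by simpa [j₀] using h
    have hc : c = 0 := by
      by_contra hc
      apply hg
      have : g x = c⁻¹ • (-(r : B)) := by
        rw [← eq_neg_of_add_eq_zero_right h, smul_smul, inv_mul_cancel₀ hc, one_smul]
      rw [this]
      exact Submodule.smul_mem _ _ (Submodule.neg_mem _ r.2)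
    subst hc
    simp at h
    simp [h]
  obtain ⟨p, hp⟩ := j₀.exists_leftInverse_of_injective hj₀
  have hp' : ∀ (r : LinearMap.range f) (c : F), p ((r : B) + c • g x) = (r, c) := fun r c => by
    have := LinearMap.congr_fun hp (r, c)
    simpa [j₀] using this
  let N : Module.End F (LinearMap.range f × F) := p ∘ₗ g ∘ₗ σ ∘ₗ LinearMap.fst F _ _
  obtain ⟨μ, hμ⟩ := (Module.End.finite_hasEigenvalue N).infinite_compl.nonempty
  refine ⟨μ, ?_⟩
  let j : (LinearMap.range f × F) →ₗ[F] A :=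
    (σ).coprod (LinearMap.toSpanSingleton F A (-μ • x))
  have hinj : Function.Injective ((g - μ • f) ∘ₗ j) := by
    rw [← LinearMap.ker_eq_bot, LinearMap.ker_eq_bot']
    rintro ⟨r, c⟩ h
    by_contra hne
    apply hμ
    refine Module.End.hasEigenvalue_of_hasEigenvector (x := (r, c)) ⟨?_, hne⟩
    rw [Module.End.mem_eigenspace_iff]
    have h1 : g (σ r) = μ • ((r : B) + c • g x) := by
      have h : (g - μ • f) (j (r, c)) = 0 := h
      simp only [j, LinearMap.coprod_apply, LinearMap.toSpanSingleton_apply, map_add, map_smul,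
        LinearMap.sub_apply, LinearMap.smul_apply, hσ', hx] at h
      rw [← sub_eq_zero, ← h]
      module
    change p (g (σ r)) = _
    rw [h1, map_smul, hp']
  have h1 := LinearMap.finrank_range_of_inj hinj
  have h2 := Submodule.finrank_mono (LinearMap.range_comp_le_range j (g - μ • f))
  rw [h1, Module.finrank_prod, Module.finrank_self] at h2
  omega

theorem aux_key {F E V : Type*} [Field F] [Field E] [Algebra F E] [FiniteDimensional F E]
    [AddCommGroup V] [Module E V] [Module F V] [IsScalarTower F E V] [FiniteDimensional F V]
    (K : Submodule F V) (h : Module.finrank F K + Module.finrank F E ≤ Module.finrank F V) :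
    ∃ v : V, ∀ a : E, a • v ∈ K → a = 0 := by
  rcases finite_or_infinite F with hF | hF
  · classical
    by_contra! hcon
    have : Finite E := Module.finite_of_finite F
    have : Finite V := Module.finite_of_finite F
    let T : Option ({a : E // a ≠ 0} × {x : K // x ≠ 0}) → V
      | none => 0
      | some p => p.1.1⁻¹ • (p.2.1 : V)
    have hT : Function.Surjective T := by
      intro v
      by_cases hv : v = 0
      · exact ⟨none, hv.symm⟩
      · obtain ⟨a, ha, ha0⟩ := hcon v
        refine ⟨some (⟨a, ha0⟩, ⟨⟨a • v, ha⟩, ?_⟩), ?_⟩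
        · simp [Subtype.ext_iff, ha0, hv]
        · simp [T, smul_smul, ha0]
    have hc := Nat.card_le_card_of_surjective T hT
    have hE : Nat.card {a : E // a ≠ 0} + 1 = Nat.card E := by
      rw [← Finite.card_option]
      exact Nat.card_congr (Equiv.optionSubtypeNe (0 : E))
    have hK : Nat.card {a : K // a ≠ 0} + 1 = Nat.card K := by
      rw [← Finite.card_option]
      exact Nat.card_congr (Equiv.optionSubtypeNe (0 : K))
    rw [Finite.card_option, Nat.card_prod] at hc
    have hq : 1 < Nat.card F := Finite.one_lt_card
    have hE2 : 1 < Nat.card E := Finite.one_lt_card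
    have h3 : Nat.card K * Nat.card E ≤ Nat.card V := by
      rw [Module.natCard_eq_pow_finrank (K := F) (V := K),
        Module.natCard_eq_pow_finrank (K := F) (V := E),
        Module.natCard_eq_pow_finrank (K := F) (V := V), ← pow_add]
      exact Nat.pow_le_pow_right hq.le h
    rw [← hE, ← hK] at h3
    nlinarith
  · let φ : V → E →ₗ[F] V ⧸ K := fun v =>
      K.mkQ ∘ₗ ((LinearMap.toSpanSingleton E V v).restrictScalars F)
    have hφ : ∀ v a, φ v a = K.mkQ (a • v) := fun v a => rfl
    have hbdd : BddAbove (Set.range fun v => Module.finrank F (LinearMap.range (φ v))) :=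
      ⟨Module.finrank F E, by
        rintro _ ⟨v, rfl⟩
        exact LinearMap.finrank_range_le _⟩
    obtain ⟨v, hv⟩ := Nat.sSup_mem (Set.range_nonempty _) hbdd
    have hmax : ∀ u, Module.finrank F (LinearMap.range (φ u)) ≤
        Module.finrank F (LinearMap.range (φ v)) := fun u => by
      have := le_csSup hbdd ⟨u, rfl⟩
      rw [← hv] at this
      exact this
    refine ⟨v, fun a ha => ?_⟩
    by_contra ha0
    have hker : φ v a = 0 := by
      rw [hφ]; simpa using ha
    have htop : LinearMap.range (φ v) = ⊤ := by
      rw [eq_top_iff]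
      rintro y -
      obtain ⟨w, rfl⟩ := K.mkQ_surjective y
      by_contra hy
      obtain ⟨μ, hμ⟩ := aux_perturb (φ v) (φ (a⁻¹ • w)) a hker (by
        rw [hφ, smul_smul, mul_inv_cancel₀ ha0, one_smul]; exact hy)
      have : φ (a⁻¹ • w) - μ • φ v = φ (a⁻¹ • w - μ • v) := by
        ext b
        simp only [LinearMap.sub_apply, LinearMap.smul_apply, hφ]
        rw [smul_sub, map_sub, smul_comm b μ v, LinearMap.map_smul K.mkQ μ]
      rw [this] at hμ
      exact absurd (hmax _) (not_le.2 hμ)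
    have h1 := (φ v).finrank_range_add_finrank_ker
    rw [htop, finrank_top] at h1
    have h2 := K.finrank_quotient_add_finrank
    have h3 : Module.finrank F (LinearMap.ker (φ v)) = 0 := by omega
    rw [Submodule.finrank_eq_zero] at h3
    have h4 : a ∈ LinearMap.ker (φ v) := hker
    rw [h3] at h4
    exact ha0 (by simpa using h4)

theorem aux_finrank {F E V : Type*} [Field F] [Field E] [Algebra F E]
    [AddCommGroup V] [Module E V] [Module F V] [IsScalarTower F E V]
    (D : Submodule E V) : Module.finrank F (D.restrictScalars F) =
      Module.finrank F E * Module.finrank E D :=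
  (Module.finrank_mul_finrank F E D).symm

theorem aux_ind {F E V : Type*} [Field F] [Field E] [Algebra F E] [FiniteDimensional F E]
    [AddCommGroup V] [Module E V] [Module F V] [IsScalarTower F E V] [FiniteDimensional F V]
    (K : Submodule F V) (s : ℕ)
    (h : Module.finrank F K + Module.finrank F E * s ≤ Module.finrank F V) :
    ∃ D : Submodule E V, Module.finrank E D = s ∧ D.restrictScalars F ⊓ K = ⊥ := by
  have : FiniteDimensional E V := FiniteDimensional.right F E V
  induction s with
  | zero => exact ⟨⊥, by simp, by simp⟩
  | succ s ih =>
    obtain ⟨D, hD, hDK⟩ := ih (by rw [mul_add] at h; omega)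
    have h1 := Submodule.finrank_add_le_finrank_add_finrank (D.restrictScalars F) K
    rw [aux_finrank, hD] at h1
    obtain ⟨v, hv⟩ := aux_key (E := E) (D.restrictScalars F ⊔ K) (by rw [mul_add] at h; omega)
    have hvD : v ∉ D := fun hvD => one_ne_zero (hv 1 (by
      rw [one_smul]
      exact Submodule.mem_sup_left hvD))
    refine ⟨D ⊔ span E {v}, by rw [Submodule.finrank_sup_span_singleton hvD, hD], ?_⟩
    rw [eq_bot_iff]
    rintro x ⟨hx, hxK⟩
    obtain ⟨d, hd, y, hy, rfl⟩ := Submodule.mem_sup.1 hx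
    obtain ⟨a, rfl⟩ := Submodule.mem_span_singleton.1 hy
    have ha : a = 0 := hv a (by
      have : a • v = (-d) + (d + a • v) := by abel
      rw [this]
      exact Submodule.add_mem_sup (D.restrictScalars F |>.neg_mem hd) hxK)
    subst ha
    rw [zero_smul, add_zero] at hxK ⊢
    rw [← hDK]
    exact ⟨hd, hxK⟩

theorem aux_shrink {F V : Type*} [Field F] [AddCommGroup V] [Module F V] [FiniteDimensional F V]
    (K : Submodule F V) (r : ℕ) (h : r ≤ Module.finrank F K) :
    ∃ K' ≤ K, Module.finrank F K' = r := by
  obtain ⟨f, hf⟩ := exists_linearIndependent_of_le_finrank h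
  refine ⟨(span F (Set.range f)).map K.subtype, Submodule.map_subtype_le _ _, ?_⟩
  rw [Submodule.finrank_map_subtype_eq, finrank_span_eq_card hf, Fintype.card_fin]

theorem aux_support (F E : Type*) [Field F] [Field E] [Algebra F E] [FiniteDimensional F E]
    (n : ℕ) (φ : E →ₗ[F] F) (hφ : φ ≠ 0) (D : Submodule E (Fin n → E)) :
    rankSupport F E n (D : Set (Fin n → E)) =
      (D.restrictScalars F).map (φ.compLeft (Fin n)) := by
  apply le_antisymm
  · apply sInf_le
    intro x hx
    let T : E →ₗ[F] (E →ₗ[F] F) := (LinearMap.mul F E).compr₂ φ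
    have hTa : ∀ c e, T c e = φ (c * e) := fun _ _ => rfl
    have hinj : Function.Injective T := by
      rw [← LinearMap.ker_eq_bot, LinearMap.ker_eq_bot']
      intro c hc
      by_contra hc0
      apply hφ
      ext e
      have := LinearMap.congr_fun hc (c⁻¹ * e)
      rwa [hTa, mul_inv_cancel_left₀ hc0] at this
    have hsurj : Function.Surjective T :=
      (LinearMap.injective_iff_surjective_of_finrank_eq_finrank
        (Subspace.dual_finrank_eq (K := F) (V := E)).symm).1 hinj
    let b := Module.finBasis F E
    choose c hc using fun i => hsurj (b.coord i)
    have hx2 : x = ∑ i, b i • fIncl F E n (φ.compLeft (Fin n) (c i • x)) := by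
      ext j
      have h1 : ∀ i, φ (c i * x j) = b.repr (x j) i := fun i => by
        rw [← hTa, hc]; rfl
      have h2 := b.sum_repr (x j)
      conv_lhs => rw [← h2]
      simp only [Finset.sum_apply, Pi.smul_apply, fIncl, LinearMap.compLeft_apply,
        Function.comp_apply, smul_eq_mul, h1, Algebra.linearMap_apply]
      simp only [Algebra.smul_def (A := E)]
      exact Finset.sum_congr rfl fun i _ => mul_comm _ _
    rw [hx2]
    refine Submodule.sum_mem _ fun i _ => Submodule.smul_mem _ _ (Submodule.subset_span ?_)
    exact ⟨_, ⟨c i • x, D.smul_mem _ hx, rfl⟩, rfl⟩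
  · apply le_sInf
    rintro U hU _ ⟨x, hx, rfl⟩
    have key : ∀ y ∈ span E (fIncl F E n '' (U : Set (Fin n → F))),
        ∀ a : E, φ.compLeft (Fin n) (a • y) ∈ U := by
      intro y hy
      induction hy using Submodule.span_induction with
      | mem y hy =>
        obtain ⟨u, hu, rfl⟩ := hy
        intro a
        have : φ.compLeft (Fin n) (a • fIncl F E n u) = φ a • u := by
          ext j
          simp only [fIncl, LinearMap.compLeft_apply, Function.comp_apply, Pi.smul_apply,
            smul_eq_mul, Algebra.linearMap_apply]
          rw [mul_comm a, ← Algebra.smul_def, map_smul, smul_eq_mul, mul_comm]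
        rw [this]
        exact U.smul_mem _ hu
      | zero => intro a; simp
      | add y z _ _ hy hz => intro a; rw [smul_add, map_add]; exact U.add_mem (hy a) (hz a)
      | smul c y _ hy => intro a; rw [smul_smul]; exact hy _
    have := key x (hU hx) 1
    rwa [one_smul] at this

/-- Theorem 4.1 (2): for an `[n,k]` code `C` with `n ≥ k ≥ 1` and `s ≤ k`, the maximum of
`wt(D)` over `s`-dimensional subcodes `D ≤ C` equals `min{ms, wt(C)}`. -/
theorem statement6 (F E : Type*) [Field F] [Field E] [Algebra F E]
    [FiniteDimensional F E] (m : ℕ) (hm : Module.finrank F E = m)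
    (n k : ℕ) (hk : 1 ≤ k) (hkn : k ≤ n)
    (C : Submodule E (Fin n → E)) (hC : Module.finrank E C = k)
    (s : ℕ) (hs : s ≤ k) :
    (∃ D : Submodule E (Fin n → E), D ≤ C ∧ Module.finrank E D = s ∧
        wt F E n (D : Set (Fin n → E)) = min (m * s) (wt F E n (C : Set (Fin n → E)))) ∧
      (∀ D : Submodule E (Fin n → E), D ≤ C → Module.finrank E D = s →
        wt F E n (D : Set (Fin n → E)) ≤ min (m * s) (wt F E n (C : Set (Fin n → E)))) := by
  subst hm
  obtain ⟨φ, hφ⟩ : ∃ φ : E →ₗ[F] F, φ ≠ 0 := by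
    obtain ⟨φ, h⟩ := exists_ne (0 : Module.Dual F E)
    exact ⟨φ, h⟩
  have hwt : ∀ D : Submodule E (Fin n → E), wt F E n (D : Set (Fin n → E)) =
      Module.finrank F ((D.restrictScalars F).map (φ.compLeft (Fin n))) := fun D => by
    rw [wt, aux_support F E n φ hφ]
  have hFC : FiniteDimensional F C := FiniteDimensional.trans F E C
  constructor
  · let f : C →ₗ[F] (Fin n → F) := φ.compLeft (Fin n) ∘ₗ (C.subtype.restrictScalars F)
    have hmap : ∀ D : Submodule E C, wt F E n ((D.map C.subtype : Submodule E (Fin n → E)) :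
        Set (Fin n → E)) = Module.finrank F ((D.restrictScalars F).map f) := fun D => by
      rw [hwt, Submodule.map_comp]
      rfl
    have hwC : wt F E n (C : Set (Fin n → E)) = Module.finrank F (LinearMap.range f) := by
      have := hmap ⊤
      rw [Submodule.map_subtype_top] at this
      rw [this, Submodule.restrictScalars_top, Submodule.map_top]
    have hdim := f.finrank_range_add_finrank_ker
    have hCF : Module.finrank F C = Module.finrank F E * k := by
      rw [← Module.finrank_mul_finrank F E C, hC]
    rw [← hwC, hCF] at hdim
    have hsk : Module.finrank F E * s ≤ Module.finrank F E * k := Nat.mul_le_mul_left _ hs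
    rcases le_total (Module.finrank F E * s) (wt F E n (C : Set (Fin n → E))) with hle | hle
    · obtain ⟨D, hD, hDK⟩ := aux_ind (E := E) (LinearMap.ker f) s (by omega)
      refine ⟨D.map C.subtype, Submodule.map_subtype_le _ _, ?_, ?_⟩
      · rw [Submodule.finrank_map_subtype_eq, hD]
      · rw [min_eq_left hle, hmap, ← hD, ← aux_finrank]
        have hinj : Function.Injective (f.domRestrict (D.restrictScalars F)) := by
          refine (injective_iff_map_eq_zero _).2 fun x hx => ?_
          have : (x : C) ∈ D.restrictScalars F ⊓ LinearMap.ker f := ⟨x.2, hx⟩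
          rw [hDK] at this
          exact Subtype.ext (by simpa using this)
        have := LinearMap.finrank_range_of_inj hinj
        rwa [LinearMap.range_domRestrict] at this
    · obtain ⟨K', hK', hr⟩ := aux_shrink (LinearMap.ker f)
        (Module.finrank F E * k - Module.finrank F E * s) (by omega)
      obtain ⟨D, hD, hDK⟩ := aux_ind (E := E) K' s (by omega)
      refine ⟨D.map C.subtype, Submodule.map_subtype_le _ _, ?_, ?_⟩
      · rw [Submodule.finrank_map_subtype_eq, hD]
      · rw [min_eq_right hle, hmap, hwC]
        have hsup : D.restrictScalars F ⊔ K' = ⊤ := by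
          apply Submodule.eq_top_of_finrank_eq
          have := Submodule.finrank_sup_add_finrank_inf_eq (D.restrictScalars F) K'
          rw [hDK, finrank_bot, aux_finrank, hD] at this
          omega
        have hbot : K'.map f = ⊥ := LinearMap.le_ker_iff_map.1 hK'
        rw [← Submodule.map_top, ← hsup, Submodule.map_sup, hbot, sup_bot_eq]
  · intro D hDC hD
    apply le_min
    · rw [hwt, ← hD, ← aux_finrank]
      have : FiniteDimensional F (D.restrictScalars F) := FiniteDimensional.trans F E D
      exact Submodule.finrank_map_le _ _
    · rw [hwt, hwt]
      exact Submodule.finrank_mono (Submodule.map_mono hDC)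
end

section
/- Let P be a finite field with |P| = q, X a P-vector space with dim_P(X) = k, H ⊆ X with 0 ∈ H, and let w = |{a ∈ P∖{0} : aH = H}|, where aH = {ah : h ∈ H}. Then for any t ∈ {0,1,…,k} such that |H| ≤ w(q^{k+1−t}−1)/(q−1), there exists a P-subspace L of X with dim_P(L) = t and H ∩ L = {0}. -/
open Submodule Pointwise

theorem count7 (P : Type*) [Field P] [Fintype P]
    (X : Type*) [AddCommGroup X] [Module P X] [Finite X]
    (H : Set X) (h0 : (0 : X) ∈ H) :
    Set.ncard {a : P | a ≠ 0 ∧ a • H = H} *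
      Set.ncard {x : X | ∃ a : P, a ≠ 0 ∧ ∃ h ∈ H, h ≠ 0 ∧ a • h = x}
      ≤ (H.ncard - 1) * (Fintype.card P - 1) := by
  classical
  have hB : ∀ x : X, ∃ p : P × X, (∃ a : P, a ≠ 0 ∧ ∃ h ∈ H, h ≠ 0 ∧ a • h = x) →
      p.1 ≠ 0 ∧ p.2 ∈ H ∧ p.2 ≠ 0 ∧ p.1 • p.2 = x := by
    intro x
    by_cases hx : ∃ a : P, a ≠ 0 ∧ ∃ h ∈ H, h ≠ 0 ∧ a • h = x
    · obtain ⟨a, ha, h, hh, hn, e⟩ := hx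
      exact ⟨(a, h), fun _ => ⟨ha, hh, hn, e⟩⟩
    · exact ⟨0, fun h => absurd h hx⟩
  choose g hg using hB
  have e1 : (H \ {0}).ncard = H.ncard - 1 := Set.ncard_diff_singleton_of_mem h0
  have e2 : ({0}ᶜ : Set P).ncard = Fintype.card P - 1 := by
    rw [Set.ncard_compl, Nat.card_eq_fintype_card, Set.ncard_singleton]
  rw [← e1, ← e2, ← Set.ncard_prod, ← Set.ncard_prod]
  refine Set.ncard_le_ncard_of_injOn
    (fun p : P × X => (p.1 • (g p.2).2, (g p.2).1 * p.1⁻¹)) ?_ ?_ (Set.toFinite _)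
  · rintro ⟨s, b⟩ ⟨⟨hs, hsH⟩, hb⟩
    obtain ⟨h1, h2, h3, h4⟩ := hg b hb
    refine ⟨⟨?_, ?_⟩, ?_⟩
    · have := Set.smul_mem_smul_set (a := s) h2
      rw [hsH] at this
      exact this
    · exact smul_ne_zero hs h3
    · exact mul_ne_zero h1 (inv_ne_zero hs)
  · rintro ⟨s, b⟩ ⟨⟨hs, hsH⟩, hb⟩ ⟨s', b'⟩ ⟨⟨hs', hsH'⟩, hb'⟩ heq
    obtain ⟨h1, h2, h3, h4⟩ := hg b hb
    obtain ⟨h1', h2', h3', h4'⟩ := hg b' hb'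
    simp only [Prod.mk.injEq] at heq hs hs' h4 h4' h1 h1'
    obtain ⟨ea, eb⟩ := heq
    have hbb : b = b' := by
      rw [← h4, ← h4']
      have a1 : (g b).1 • (g b).2 = ((g b).1 * s⁻¹) • (s • (g b).2) := by
        rw [smul_smul, inv_mul_cancel_right₀ hs]
      have a2 : (g b').1 • (g b').2 = ((g b').1 * s'⁻¹) • (s' • (g b').2) := by
        rw [smul_smul, inv_mul_cancel_right₀ hs']
      rw [a1, a2, ea, eb]
    subst hbb
    have := inv_injective (mul_left_cancel₀ h1 eb)
    rw [this]

theorem step7 (P : Type*) [Field P] [Fintype P]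
    (X : Type*) [AddCommGroup X] [Module P X] [Finite X]
    (H : Set X) (h0 : (0 : X) ∈ H) (L : Submodule P X) (hLH : H ∩ (L : Set X) = {0})
    (hlt : (H.ncard - 1) * (Fintype.card P - 1) <
      Set.ncard {a : P | a ≠ 0 ∧ a • H = H} * (Nat.card (X ⧸ L) - 1)) :
    ∃ L' : Submodule P X, Module.finrank P L' = Module.finrank P L + 1 ∧
      H ∩ (L' : Set X) = {0} := by
  classical
  have hc := lt_of_le_of_lt (count7 P X H h0) hlt
  set B := {x : X | ∃ a : P, a ≠ 0 ∧ ∃ h ∈ H, h ≠ 0 ∧ a • h = x} with hBdef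
  have hc' : B.ncard < Nat.card (X ⧸ L) - 1 := lt_of_mul_lt_mul_left hc (Nat.zero_le _)
  haveI : Finite (X ⧸ L) := Quotient.finite _
  have him : (L.mkQ '' B).ncard ≤ B.ncard := Set.ncard_image_le (Set.toFinite _)
  have hex : ∃ y, y ∈ ({0}ᶜ : Set (X ⧸ L)) ∧ y ∉ L.mkQ '' B := by
    apply Set.exists_mem_notMem_of_ncard_lt_ncard (hs := Set.toFinite _)
    rw [Set.ncard_compl, Set.ncard_singleton]
    omega
  obtain ⟨y, hy0, hyB⟩ := hex
  obtain ⟨x, rfl⟩ := L.mkQ_surjective y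
  have hxL : x ∉ L := fun h => hy0 (by simpa using h)
  refine ⟨L ⊔ Submodule.span P {x}, ?_, ?_⟩
  · have hx0 : x ≠ 0 := fun h => hxL (h ▸ L.zero_mem)
    have hd : L ⊓ Submodule.span P {x} = ⊥ := by
      rw [← disjoint_iff]
      exact (Submodule.disjoint_span_singleton' hx0).2 hxL
    have := Submodule.finrank_sup_add_finrank_inf_eq L (Submodule.span P {x})
    rw [hd, finrank_bot, finrank_span_singleton hx0] at this
    simpa using this
  · ext h
    simp only [Set.mem_inter_iff, SetLike.mem_coe, Set.mem_singleton_iff]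
    constructor
    · rintro ⟨hH, hm⟩
      by_contra hne
      obtain ⟨l, hl, z, hz, rfl⟩ := Submodule.mem_sup.1 hm
      obtain ⟨c, rfl⟩ := Submodule.mem_span_singleton.1 hz
      by_cases hc0 : c = 0
      · subst hc0
        have : l + (0 : P) • x ∈ H ∩ (L : Set X) := ⟨hH, by simpa using hl⟩
        rw [hLH] at this
        exact hne this
      · apply hyB
        refine ⟨c⁻¹ • (l + c • x), ⟨c⁻¹, inv_ne_zero hc0, _, hH, hne, rfl⟩, ?_⟩
        have hl' : L.mkQ l = 0 := by simpa using hl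
        rw [map_smul, map_add, hl', zero_add, map_smul, smul_smul, inv_mul_cancel₀ hc0, one_smul]
    · rintro rfl
      exact ⟨h0, Submodule.zero_mem _⟩

/-- Proposition 4.1: let `P` be a finite field with `q` elements, `X` a `k`-dimensional
`P`-vector space, `0 ∈ H ⊆ X`, and `w = |{a ∈ P \ {0} : aH = H}|`. Then for any `t ≤ k`
with `|H| ≤ w(q^{k+1-t} - 1)/(q - 1)`, there is a `P`-subspace `L` with `dim_P L = t`
and `H ∩ L = {0}`. -/
theorem statement7 (P : Type*) [Field P] [Fintype P] (q : ℕ) (hq : Fintype.card P = q)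
    (X : Type*) [AddCommGroup X] [Module P X] [Module.Finite P X]
    (k : ℕ) (hk : Module.finrank P X = k)
    (H : Set X) (h0 : (0 : X) ∈ H)
    (w : ℕ) (hw : w = Set.ncard {a : P | a ≠ 0 ∧ a • H = H})
    (t : ℕ) (ht : t ≤ k)
    (hH : H.ncard * (q - 1) ≤ w * (q ^ (k + 1 - t) - 1)) :
    ∃ L : Submodule P X, Module.finrank P L = t ∧ H ∩ (L : Set X) = {0} := by
  classical
  haveI : Finite X := Module.finite_of_finite P
  haveI : Fintype X := Fintype.ofFinite X
  have hq2 : 2 ≤ q := hq ▸ Fintype.one_lt_card (α := P)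
  have key : ∀ i, i ≤ t → ∃ L : Submodule P X, Module.finrank P L = i ∧ H ∩ (L : Set X) = {0} := by
    intro i
    induction i with
    | zero =>
      intro _
      refine ⟨⊥, by simp, ?_⟩
      ext x
      simp only [Set.mem_inter_iff, SetLike.mem_coe, Submodule.mem_bot, Set.mem_singleton_iff]
      exact ⟨fun h => h.2, fun h => ⟨h ▸ h0, h⟩⟩
    | succ i ih =>
      intro hi
      obtain ⟨L, hL, hLH⟩ := ih (by omega)
      refine step7 P X H h0 L hLH ?_ |>.imp fun L' h => ⟨by rw [h.1, hL], h.2⟩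
      rw [← hw, hq]
      have hfr : Module.finrank P (X ⧸ L) = k - i := by
        have := L.finrank_quotient_add_finrank
        omega
      have hcard : Nat.card (X ⧸ L) = q ^ (k - i) := by
        rw [Module.natCard_eq_pow_finrank (K := P), hfr, Nat.card_eq_fintype_card, hq]
      rw [hcard]
      have hmono : q ^ (k + 1 - t) ≤ q ^ (k - i) := Nat.pow_le_pow_right (by omega) (by omega)
      have hHpos : 0 < H.ncard := (Set.ncard_pos (Set.toFinite H)).2 ⟨0, h0⟩
      calc (H.ncard - 1) * (q - 1) < H.ncard * (q - 1) :=
            Nat.mul_lt_mul_of_pos_right (by omega) (by omega)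
        _ ≤ w * (q ^ (k + 1 - t) - 1) := hH
        _ ≤ w * (q ^ (k - i) - 1) := Nat.mul_le_mul_left _ (by omega)
  exact key t le_rfl
end

section
/- Let Y be a k-dimensional E-vector space with k ≥ 1, let A be an F-subspace of Y, and let r ∈ {0,1,…,k−1}. Then the following are equivalent: (1) A is a cutting r-blocking set of Y; (2) for every E-subspace W of Y with dim_E(W) = k−r−1, dim_F(A + W) ≥ (k−1)m + 1; (3) A is (k−r−1, dim_F(A) − mr − 1)-evasive in Y. -/
open Submodule Pointwise

/-- Interpolating a subspace of prescribed dimension. -/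
theorem aux_between {K V : Type*} [Field K] [AddCommGroup V] [Module K V] [FiniteDimensional K V]
    (P Q : Submodule K V) (hPQ : P ≤ Q) (d : ℕ) (h1 : Module.finrank K P ≤ d)
    (h2 : d ≤ Module.finrank K Q) :
    ∃ W : Submodule K V, P ≤ W ∧ W ≤ Q ∧ Module.finrank K W = d := by
  induction d, h1 using Nat.le_induction with
  | base => exact ⟨P, le_rfl, hPQ, rfl⟩
  | succ n hn ih =>
    obtain ⟨W, hPW, hWQ, hW⟩ := ih (by omega)
    have hne : ¬ Q ≤ W := fun h => by
      have := Submodule.finrank_mono h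
      omega
    obtain ⟨x, hxQ, hxW⟩ := SetLike.not_le_iff_exists.mp hne
    refine ⟨W ⊔ Submodule.span K {x}, hPW.trans le_sup_left, sup_le hWQ ?_, ?_⟩
    · rw [Submodule.span_le]
      simpa using hxQ
    · rw [Submodule.finrank_sup_span_singleton hxW, hW]

/-- Rank-increasing perturbation over an infinite field. -/
theorem aux_perturb_s8 {F X G : Type*} [Field F] [Infinite F] [AddCommGroup X] [Module F X]
    [FiniteDimensional F X] [AddCommGroup G] [Module F G] [FiniteDimensional F G]
    (B₀ B₁ : X →ₗ[F] G) (κ : X) (hκ : B₀ κ = 0) (h : B₁ κ ∉ LinearMap.range B₀) :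
    ∃ t : F, Module.finrank F (LinearMap.range B₀) <
      Module.finrank F (LinearMap.range (B₀ + t • B₁)) := by
  obtain ⟨C, hC⟩ := Submodule.exists_isCompl (LinearMap.ker B₀)
  let f : (C × F) →ₗ[F] G :=
    (B₀ ∘ₗ C.subtype).coprod (LinearMap.toSpanSingleton F G (B₁ κ))
  let p : (C × F) →ₗ[F] G := (B₁ ∘ₗ C.subtype) ∘ₗ LinearMap.fst F C F
  have hf : LinearMap.ker f = ⊥ := by
    rw [LinearMap.ker_eq_bot']
    rintro ⟨c, s⟩ hcs
    have hcs' : B₀ c + s • B₁ κ = 0 := hcs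
    have hs : s = 0 := by
      by_contra hs
      apply h
      refine ⟨-(s⁻¹ • (c : X)), ?_⟩
      rw [map_neg, map_smul, eq_neg_of_add_eq_zero_left hcs', smul_neg, neg_neg, smul_smul,
        inv_mul_cancel₀ hs, one_smul]
    subst hs
    have hc : B₀ c = 0 := by simpa using hcs'
    have : (c : X) ∈ LinearMap.ker B₀ ⊓ C := ⟨hc, c.2⟩
    rw [hC.inf_eq_bot] at this
    have h0 : c = 0 := Subtype.ext (by simpa using this)
    rw [h0]; rfl
  obtain ⟨P, hP⟩ := f.exists_leftInverse_of_injective hf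
  let M : Module.End F (C × F) := P ∘ₗ p
  obtain ⟨μ, hμ⟩ := ((Module.End.finite_hasEigenvalue M).union (Set.finite_singleton 0)).exists_notMem
  have hμ1 : ¬ M.HasEigenvalue μ := fun h' => hμ (Or.inl h')
  have hμ0 : μ ≠ 0 := fun h' => hμ (Or.inr h')
  let t : F := -μ⁻¹
  have ht : t ≠ 0 := neg_ne_zero.mpr (inv_ne_zero hμ0)
  refine ⟨t, ?_⟩
  have hinj : LinearMap.ker (f + t • p) = ⊥ := by
    rw [LinearMap.ker_eq_bot']
    intro x hx
    by_contra hx0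
    apply hμ1
    apply Module.End.hasEigenvalue_of_hasEigenvector (x := x)
    refine ⟨?_, hx0⟩
    rw [Module.End.mem_eigenspace_iff]
    have h1 : P (f x) + t • M x = 0 := by
      have := congrArg P hx
      simpa [M] using this
    have h2 : P (f x) = x := by
      have := LinearMap.congr_fun hP x
      simpa using this
    rw [h2] at h1
    have h3 : x = μ⁻¹ • M x := by
      have := eq_neg_of_add_eq_zero_left h1
      simpa [t] using this
    exact (eq_inv_smul_iff₀ hμ0).mp h3 |>.symm
  have hr : LinearMap.range (f + t • p) ≤ LinearMap.range (B₀ + t • B₁) := by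
    rintro _ ⟨⟨c, s⟩, rfl⟩
    refine ⟨(c : X) + (t⁻¹ * s) • κ, ?_⟩
    have : t * (t⁻¹ * s) = s := by field_simp
    simp [f, p, hκ, smul_smul, this]
    abel
  have h1 := Submodule.finrank_mono hr
  rw [LinearMap.finrank_range_of_inj (LinearMap.ker_eq_bot.mp hinj), Module.finrank_prod,
    Module.finrank_self] at h1
  have h2 := Submodule.finrank_add_eq_of_isCompl hC
  have h3 := LinearMap.finrank_range_add_finrank_ker B₀
  omega

/-- An `F`-subspace of codimension at least `[E:F]` misses some `E`-line. -/
theorem aux_line (F E : Type*) [Field F] [Field E] [Algebra F E] [FiniteDimensional F E]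
    (Y : Type*) [AddCommGroup Y] [Module E Y] [Module F Y] [IsScalarTower F E Y]
    [FiniteDimensional E Y] (U : Submodule F Y)
    (hU : Module.finrank F U + Module.finrank F E ≤ Module.finrank F Y) :
    ∃ y : Y, ∀ e : E, e • y ∈ U → e = 0 := by
  classical
  haveI : FiniteDimensional F Y := FiniteDimensional.trans F E Y
  rcases finite_or_infinite F with hF | hF
  · haveI : Finite E := Module.finite_of_finite F
    haveI : Finite Y := Module.finite_of_finite F
    by_contra! hcon
    choose e he he0 using hcon
    let g : Y → {x : E // x ≠ 0} × U := fun y => (⟨e y, he0 y⟩, ⟨e y • y, he y⟩)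
    have hg : Function.Injective g := by
      intro y z hyz
      have h1 : e y = e z := congrArg (fun q => (q.1 : E)) hyz
      have h2 : e y • y = e z • z := congrArg (fun q => (q.2 : Y)) hyz
      rw [h1] at h2
      exact smul_right_injective Y (he0 z) h2
    have hc := Nat.card_le_card_of_injective g hg
    rw [Nat.card_prod] at hc
    have hlt : Nat.card {x : E // x ≠ 0} < Nat.card E :=
      Finite.card_subtype_lt (x := 0) (by simp)
    have hUpos : 0 < Nat.card U := Nat.card_pos
    have hle : Nat.card E * Nat.card U ≤ Nat.card Y := by
      rw [Module.natCard_eq_pow_finrank (K := F) (V := E),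
        Module.natCard_eq_pow_finrank (K := F) (V := U),
        Module.natCard_eq_pow_finrank (K := F) (V := Y), ← pow_add]
      exact Nat.pow_le_pow_right Nat.card_pos (by omega)
    have := Nat.mul_lt_mul_of_pos_right hlt hUpos
    omega
  · let T : Y → (E →ₗ[F] (Y ⧸ U)) := fun y =>
      U.mkQ ∘ₗ (LinearMap.toSpanSingleton E Y y).restrictScalars F
    have hT : ∀ y e, T y e = U.mkQ (e • y) := fun y e => rfl
    have hbd : ∀ y, Module.finrank F (LinearMap.range (T y)) ≤ Module.finrank F E := fun y =>
      LinearMap.finrank_range_le _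
    obtain ⟨y₀, hy₀⟩ : ∃ y₀, ∀ y, Module.finrank F (LinearMap.range (T y)) ≤
        Module.finrank F (LinearMap.range (T y₀)) := by
      have hfin : (Set.range fun y => Module.finrank F (LinearMap.range (T y))).Finite :=
        (Set.finite_Iic (Module.finrank F E)).subset (by rintro _ ⟨y, rfl⟩; exact hbd y)
      obtain ⟨_, ⟨y₀, rfl⟩, hmax⟩ := hfin.exists_maximal (Set.range_nonempty _)
      refine ⟨y₀, fun y => ?_⟩
      rcases le_total (Module.finrank F (LinearMap.range (T y)))
        (Module.finrank F (LinearMap.range (T y₀))) with h | h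
      · exact h
      · exact hmax ⟨y, rfl⟩ h
    refine ⟨y₀, fun κ hκ => ?_⟩
    by_contra hκ0
    have hk : T y₀ κ = 0 := by rw [hT]; simpa using hκ
    have hkerpos : 0 < Module.finrank F (LinearMap.ker (T y₀)) := by
      rw [Module.finrank_pos_iff_exists_ne_zero]
      exact ⟨⟨κ, hk⟩, fun h => hκ0 (congrArg Subtype.val h)⟩
    have hrn := LinearMap.finrank_range_add_finrank_ker (T y₀)
    have hq := Submodule.finrank_quotient_add_finrank U
    have hne : LinearMap.range (T y₀) ≠ ⊤ := by
      intro h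
      rw [h, finrank_top] at hrn
      omega
    obtain ⟨w, -, hw⟩ := SetLike.exists_of_lt (lt_top_iff_ne_top.mpr hne)
    obtain ⟨w, rfl⟩ := U.mkQ_surjective w
    obtain ⟨t, ht⟩ := aux_perturb_s8 (T y₀) (T (κ⁻¹ • w)) κ hk (by
      rw [hT, smul_smul, mul_inv_cancel₀ hκ0, one_smul]; exact hw)
    have heq : T y₀ + t • T (κ⁻¹ • w) = T (y₀ + t • (κ⁻¹ • w)) := by
      ext e
      rw [LinearMap.add_apply, LinearMap.smul_apply, hT, hT, hT, ← map_smul, ← map_add,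
        smul_add, smul_comm e t]
    rw [heq] at ht
    exact absurd (hy₀ _) (not_le.mpr ht)

/-- Theorem 4.2: for an `F`-subspace `A` of a `k`-dimensional `E`-vector space `Y` and
`r ∈ {0, …, k-1}`, the following are equivalent: (1) `A` is a cutting `r`-blocking set of
`Y`; (2) `dim_F(A + W) ≥ (k-1)m + 1` for every `E`-subspace `W` with `dim_E W = k-r-1`;
(3) `A` is `(k-r-1, dim_F(A) - mr - 1)`-evasive in `Y`. -/
theorem statement8 (F E : Type*) [Field F] [Field E] [Algebra F E]
    [FiniteDimensional F E] (m : ℕ) (hm : Module.finrank F E = m)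
    (Y : Type*) [AddCommGroup Y] [Module E Y] [Module F Y] [IsScalarTower F E Y]
    [FiniteDimensional E Y] (k : ℕ) (hY : Module.finrank E Y = k)
    (A : Submodule F Y) (r : ℕ) (hr : r + 1 ≤ k) :
    (IsCuttingBlocking E (A : Set Y) r ↔
      ∀ W : Submodule E Y, Module.finrank E W = k - r - 1 →
        (k - 1) * m + 1 ≤ Module.finrank F ↥(A ⊔ W.restrictScalars F)) ∧
    (IsCuttingBlocking E (A : Set Y) r ↔
      IsEvasive F E A (k - r - 1) ((Module.finrank F A : ℤ) - (m : ℤ) * (r : ℤ) - 1)) := by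
  haveI : FiniteDimensional F Y := FiniteDimensional.trans F E Y
  have hmpos : 0 < m := hm ▸ Module.finrank_pos
  have hdim : ∀ W : Submodule E Y,
      Module.finrank F ↥(W.restrictScalars F) = m * Module.finrank E W := fun W => by
    rw [← hm]; exact (Module.finrank_mul_finrank F E W).symm
  have hdimY : Module.finrank F Y = m * k := by
    rw [← hm, ← hY]; exact (Module.finrank_mul_finrank F E Y).symm
  obtain ⟨j, rfl⟩ : ∃ j, k = r + 1 + j := Nat.exists_eq_add_of_le hr
  have e1 : r + 1 + j - r - 1 = j := by omega
  have e2 : r + 1 + j - 1 = r + j := by omega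
  have e3 : r + 1 + j - r = j + 1 := by omega
  rw [e1, e2]
  have h12 : IsCuttingBlocking E (A : Set Y) r ↔
      ∀ W : Submodule E Y, Module.finrank E W = j →
        (r + j) * m + 1 ≤ Module.finrank F ↥(A ⊔ W.restrictScalars F) := by
    unfold IsCuttingBlocking
    rw [hY, e3]
    constructor
    · intro h W hW
      by_contra hlt
      obtain ⟨y, hy⟩ := aux_line F E Y (A ⊔ W.restrictScalars F) (by
        rw [hm, hdimY]; nlinarith)
      have hyW : y ∉ W := fun hyW => one_ne_zero (hy 1 (by
        rw [one_smul]; exact Submodule.mem_sup_right hyW))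
      have hV := h (W ⊔ Submodule.span E {y}) (by
        rw [Submodule.finrank_sup_span_singleton hyW, hW])
      apply hyW
      have hle : Submodule.span E ((A : Set Y) ∩ ((W ⊔ Submodule.span E {y} : Submodule E Y) : Set Y))
          ≤ W := by
        rw [Submodule.span_le]
        rintro a ⟨haA, haV⟩
        obtain ⟨w, hw, z, hz, rfl⟩ := Submodule.mem_sup.mp haV
        obtain ⟨e, rfl⟩ := Submodule.mem_span_singleton.mp hz
        have : e = 0 := hy e (by
          have h1 : w + e • y - w ∈ A ⊔ W.restrictScalars F :=
            Submodule.sub_mem _ (Submodule.mem_sup_left haA) (Submodule.mem_sup_right hw)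
          simpa using h1)
        simpa [this] using hw
      rw [hV] at hle
      exact hle (Submodule.mem_sup_right (Submodule.mem_span_singleton_self y))
    · intro h V hV
      by_contra hne
      have hle : Submodule.span E ((A : Set Y) ∩ (V : Set Y)) ≤ V :=
        Submodule.span_le.mpr Set.inter_subset_right
      have hlt := Submodule.finrank_lt_finrank_of_lt (lt_of_le_of_ne hle hne)
      obtain ⟨W, h1, h2, hW⟩ := aux_between _ V hle j (by omega) (by omega)
      have hAW : A ⊓ W.restrictScalars F = A ⊓ V.restrictScalars F := by
        apply le_antisymm
        · exact inf_le_inf_left _ (fun x hx => h2 hx)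
        · rintro x ⟨hxA, hxV⟩
          exact ⟨hxA, h1 (Submodule.subset_span ⟨hxA, hxV⟩)⟩
      have s1 := Submodule.finrank_sup_add_finrank_inf_eq A (W.restrictScalars F)
      have s2 := Submodule.finrank_sup_add_finrank_inf_eq A (V.restrictScalars F)
      have s3 := Submodule.finrank_le (A ⊔ V.restrictScalars F)
      have s4 := h W hW
      rw [hAW, hdim, hW] at s1
      rw [hdim, hV] at s2
      rw [hdimY] at s3
      nlinarith
  refine ⟨h12, h12.trans ?_⟩
  have hkey : ∀ W : Submodule E Y, Module.finrank E W = j →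
      ((r + j) * m + 1 ≤ Module.finrank F ↥(A ⊔ W.restrictScalars F) ↔
        (Module.finrank F ↥(A ⊓ W.restrictScalars F) : ℤ) ≤
          (Module.finrank F A : ℤ) - (m : ℤ) * (r : ℤ) - 1) := fun W hW => by
    have s1 := Submodule.finrank_sup_add_finrank_inf_eq A (W.restrictScalars F)
    rw [hdim, hW] at s1
    zify at s1 ⊢
    constructor <;> intro h <;> nlinarith
  constructor
  · intro h
    refine ⟨?_, fun M hM => (hkey M hM).mp (h M hM)⟩
    by_contra hne
    have hlt := Submodule.finrank_lt (lt_top_iff_ne_top.mpr hne).ne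
    rw [hY] at hlt
    obtain ⟨H, h1, -, hH⟩ := aux_between _ (⊤ : Submodule E Y) le_top (r + j)
      (by omega : Module.finrank E (Submodule.span E (A : Set Y)) ≤ r + j)
      (by rw [finrank_top]; omega)
    obtain ⟨W, -, h2, hW⟩ := aux_between (⊥ : Submodule E Y) H bot_le j (by simp) (by omega)
    have s1 := h W hW
    have s2 : A ⊔ W.restrictScalars F ≤ H.restrictScalars F :=
      sup_le (fun x hx => h1 (Submodule.subset_span hx)) (fun x hx => h2 hx)
    have s3 := Submodule.finrank_mono s2
    rw [hdim, hH] at s3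
    nlinarith
  · rintro ⟨-, h⟩ W hW
    exact (hkey W hW).mpr (h W hW)
end

section
/- Let Y be a k-dimensional E-vector space, s ∈ {0,1,…,k}, and let B be an F-subspace of Y with dim_F(B) ≥ k(m−1) + s. Then 𝓛(B) ≥ s; that is, there exists an E-subspace V of Y with V ⊆ B and dim_E(V) ≥ s. -/
open Submodule Pointwise

/-- Proposition 4.2: if `B` is an `F`-subspace of a `k`-dimensional `E`-vector space `Y`
with `dim_F B ≥ k(m-1) + s` for some `s ≤ k`, then `B` contains an `E`-subspace of
`E`-dimension at least `s`. -/
theorem statement9 (F E : Type*) [Field F] [Field E] [Algebra F E]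
    [FiniteDimensional F E] (m : ℕ) (hm : Module.finrank F E = m)
    (Y : Type*) [AddCommGroup Y] [Module E Y] [Module F Y] [IsScalarTower F E Y]
    [FiniteDimensional E Y] (k : ℕ) (hY : Module.finrank E Y = k)
    (s : ℕ) (hs : s ≤ k)
    (B : Submodule F Y) (hB : k * (m - 1) + s ≤ Module.finrank F B) :
    ∃ V : Submodule E Y, (V : Set Y) ⊆ (B : Set Y) ∧ s ≤ Module.finrank E V := by
  haveI : FiniteDimensional F Y := Module.Finite.trans E Y
  haveI : SMulCommClass F E Y := IsScalarTower.to_smulCommClass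
  haveI : SMulCommClass E F Y := SMulCommClass.symm F E Y
  let Φ : Y →ₗ[F] E →ₗ[F] (Y ⧸ B) := LinearMap.mk₂ F (fun y e => B.mkQ (e • y))
    (fun a b e => by rw [smul_add, map_add])
    (fun c a e => by rw [smul_comm e c a, map_smul])
    (fun a e e' => by rw [add_smul, map_add])
    (fun c a e => by rw [smul_assoc, map_smul])
  have hΦ : ∀ y, y ∈ LinearMap.ker Φ ↔ ∀ e : E, e • y ∈ B := by
    intro y
    rw [LinearMap.mem_ker, LinearMap.ext_iff]
    refine forall_congr' fun e => ?_
    change B.mkQ (e • y) = 0 ↔ _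
    rw [Submodule.mkQ_apply, Submodule.Quotient.mk_eq_zero]
  let V : Submodule E Y :=
    { carrier := {y | ∀ e : E, e • y ∈ B}
      add_mem' := fun {a b} ha hb e => by
        rw [smul_add]; exact B.add_mem (ha e) (hb e)
      zero_mem' := fun e => by rw [smul_zero]; exact B.zero_mem
      smul_mem' := fun c y hy e => by
        rw [smul_smul]; exact hy (e * c) }
  have hV : V.restrictScalars F = LinearMap.ker Φ := by
    ext y
    exact (hΦ y).symm
  refine ⟨V, fun y hy => by simpa using hy 1, ?_⟩
  have h1 : Module.finrank F (LinearMap.ker Φ) = m * Module.finrank E V := by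
    rw [← hV, ← hm]
    exact (Module.finrank_mul_finrank F E V).symm
  have h2 := LinearMap.finrank_range_add_finrank_ker Φ
  have h3 : Module.finrank F (LinearMap.range Φ) ≤ m * Module.finrank F (Y ⧸ B) := by
    refine (Submodule.finrank_le _).trans ?_
    rw [Module.finrank_linearMap, hm]
  have h4 := Submodule.finrank_quotient_add_finrank B
  have h5 : Module.finrank F Y = m * k := by
    rw [← hm, ← hY]; exact (Module.finrank_mul_finrank F E Y).symm
  have hmpos : 0 < m := hm ▸ Module.finrank_pos
  obtain ⟨n, rfl⟩ : ∃ n, m = n + 1 := ⟨m - 1, by omega⟩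
  rw [Nat.add_sub_cancel] at hB
  have h6 : Module.finrank F (Y ⧸ B) + s ≤ k := by nlinarith
  have h7 : (n + 1) * k ≤ (n + 1) * (Module.finrank F (Y ⧸ B) + Module.finrank E V) := by
    nlinarith
  have h8 := Nat.le_of_mul_le_mul_left h7 hmpos
  omega
end

section
/- Let Y be a k-dimensional E-vector space with k ≥ 1 and let A be an F-subspace of Y. Then the following are equivalent: (1) A is a cutting (k−1)-blocking set of Y; (2) dim_F(A) ≥ (k−1)m + 1; (3) A is a cutting r-blocking set of Y for all r ∈ {0,1,…,k−1}. -/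
open Submodule Pointwise

/-- Rank perturbation over an infinite field. -/
theorem rank_perturb {F E Q : Type*} [Field F] [Infinite F] [AddCommGroup E] [Module F E]
    [FiniteDimensional F E] [AddCommGroup Q] [Module F Q]
    (φ ψ : E →ₗ[F] Q) (c : E) (hc : φ c = 0) (hψ : ψ c ∉ LinearMap.range φ) :
    ∃ t : F, Module.finrank F (LinearMap.range φ) <
      Module.finrank F (LinearMap.range (φ + t • ψ)) := by
  obtain ⟨C, hC⟩ := Submodule.exists_isCompl (LinearMap.ker φ)
  let u : (C × F) →ₗ[F] Q :=
    (φ ∘ₗ C.subtype).coprod (LinearMap.toSpanSingleton F Q (ψ c))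
  let w : (C × F) →ₗ[F] Q := ψ ∘ₗ C.subtype ∘ₗ LinearMap.fst F C F
  have hu : LinearMap.ker u = ⊥ := by
    rw [LinearMap.ker_eq_bot']
    rintro ⟨x, s⟩ h
    have h' : φ x + s • ψ c = 0 := by simpa [u] using h
    have hs : s = 0 := by
      by_contra hs
      apply hψ
      refine ⟨-(s⁻¹ • (x : E)), ?_⟩
      rw [map_neg, map_smul, eq_neg_of_add_eq_zero_left h', smul_neg, neg_neg,
        smul_smul, inv_mul_cancel₀ hs, one_smul]
    subst hs
    have hx : (x : E) ∈ LinearMap.ker φ := by simpa using h'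
    have : (x : E) = 0 := Submodule.disjoint_def.1 hC.disjoint _ hx x.2
    ext <;> simp [this]
  obtain ⟨g, hg⟩ := LinearMap.exists_leftInverse_of_injective u hu
  have hfin := Module.End.finite_hasEigenvalue (R := F) (g ∘ₗ w)
  obtain ⟨μ, hμ⟩ := (hfin.union (Set.finite_singleton (0 : F))).exists_notMem
  simp only [Set.mem_union, Set.mem_singleton_iff, not_or] at hμ
  obtain ⟨hμ1, hμ0⟩ := hμ
  set t : F := -μ⁻¹ with ht
  have ht0 : t ≠ 0 := by simp [ht, hμ0]
  have hinj : Function.Injective (u + t • w) := by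
    rw [← LinearMap.ker_eq_bot, LinearMap.ker_eq_bot']
    intro x hx
    by_contra hx0
    apply hμ1
    refine Module.End.hasEigenvalue_of_hasEigenvector (x := x) ⟨?_, hx0⟩
    rw [Module.End.mem_eigenspace_iff]
    have h1 : g (u x) = x := LinearMap.congr_fun hg x
    have h2 := congrArg g hx
    simp only [LinearMap.add_apply, LinearMap.smul_apply, map_add, map_smul, h1, map_zero] at h2
    rw [ht, neg_smul, add_neg_eq_zero] at h2
    simp only [LinearMap.comp_apply]
    conv_rhs => rw [h2]
    rw [smul_smul, mul_inv_cancel₀ hμ0, one_smul]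
  refine ⟨t, ?_⟩
  have hsub : LinearMap.range (u + t • w) ≤ LinearMap.range (φ + t • ψ) := by
    rintro _ ⟨⟨x, s⟩, rfl⟩
    refine ⟨x + (t⁻¹ * s) • c, ?_⟩
    simp only [u, w, LinearMap.add_apply, LinearMap.smul_apply, map_add, map_smul, hc,
      LinearMap.coprod_apply, LinearMap.comp_apply, Submodule.subtype_apply,
      LinearMap.toSpanSingleton_apply, LinearMap.fst_apply, smul_zero, smul_add, smul_smul,
      mul_comm t⁻¹ s, inv_mul_cancel_right₀ ht0]
    abel
  have h1 := Submodule.finrank_mono hsub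
  rw [LinearMap.finrank_range_of_inj hinj, Module.finrank_prod, Module.finrank_self] at h1
  have h2 := Submodule.finrank_add_eq_of_isCompl hC
  have h3 := LinearMap.finrank_range_add_finrank_ker φ
  omega

theorem exists_avoid_infinite {F E Y : Type*} [Field F] [Infinite F] [Field E] [Algebra F E]
    [FiniteDimensional F E] [AddCommGroup Y] [Module E Y] [Module F Y] [IsScalarTower F E Y]
    [FiniteDimensional F Y] (A : Submodule F Y)
    (hA : Module.finrank F A + Module.finrank F E ≤ Module.finrank F Y) :
    ∃ v : Y, ∀ e : E, e • v ∈ A → e = 0 := by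
  let φ : Y → (E →ₗ[F] (Y ⧸ A)) := fun v =>
    A.mkQ ∘ₗ ((LinearMap.toSpanSingleton E Y v).restrictScalars F)
  have hφ : ∀ v e, φ v e = A.mkQ (e • v) := fun v e => rfl
  have hbd : BddAbove (Set.range fun v => Module.finrank F (LinearMap.range (φ v))) :=
    ⟨Module.finrank F (Y ⧸ A), by rintro _ ⟨v, rfl⟩; exact Submodule.finrank_le _⟩
  obtain ⟨v, hv⟩ := Nat.sSup_mem (Set.range_nonempty _) hbd
  have hmax : ∀ w, Module.finrank F (LinearMap.range (φ w)) ≤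
      Module.finrank F (LinearMap.range (φ v)) := fun w => by
    simp only at hv
    rw [hv]; exact le_csSup hbd ⟨w, rfl⟩
  refine ⟨v, fun e he => ?_⟩
  by_contra he0
  have hker : φ v e = 0 := by rw [hφ]; simpa using he
  have hsurj : LinearMap.range (φ v) = ⊤ := by
    rw [eq_top_iff]
    rintro q -
    obtain ⟨y, rfl⟩ := A.mkQ_surjective q
    by_contra hq
    have h1 : φ (e⁻¹ • y) e = A.mkQ y := by
      rw [hφ, smul_smul, mul_inv_cancel₀ he0, one_smul]
    obtain ⟨t, ht⟩ := rank_perturb (φ v) (φ (e⁻¹ • y)) e hker (by rwa [h1])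
    have h2 : φ v + t • φ (e⁻¹ • y) = φ (v + t • (e⁻¹ • y)) := by
      ext x
      simp only [LinearMap.add_apply, LinearMap.smul_apply, hφ, smul_add, map_add]
      congr 1
      rw [← map_smul, smul_comm]
    rw [h2] at ht
    exact absurd (hmax _) (not_le.2 ht)
  have h3 := LinearMap.finrank_range_add_finrank_ker (φ v)
  rw [hsurj, finrank_top] at h3
  have h4 := Submodule.finrank_quotient_add_finrank A
  have h5 : 0 < Module.finrank F (LinearMap.ker (φ v)) := by
    rw [Module.finrank_pos_iff_exists_ne_zero]
    exact ⟨⟨e, hker⟩, fun h => he0 (congrArg Subtype.val h)⟩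
  omega

theorem exists_avoid_finite {F E Y : Type*} [Field F] [Finite F] [Field E] [Algebra F E]
    [FiniteDimensional F E] [AddCommGroup Y] [Module E Y] [Module F Y] [IsScalarTower F E Y]
    [FiniteDimensional F Y] (A : Submodule F Y)
    (hA : Module.finrank F A + Module.finrank F E ≤ Module.finrank F Y) :
    ∃ v : Y, ∀ e : E, e • v ∈ A → e = 0 := by
  classical
  by_contra! hcon
  have : Finite E := Module.finite_of_finite F
  have : Finite Y := Module.finite_of_finite F
  have := Fintype.ofFinite E
  have := Fintype.ofFinite Y
  have := Fintype.ofFinite F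
  have := Fintype.ofFinite A
  let f : {e : E // e ≠ 0} × {a : A // a ≠ 0} → {y : Y // y ≠ 0} := fun p =>
    ⟨p.1.1 • (p.2.1 : Y), smul_ne_zero p.1.2 (fun h => p.2.2 (Subtype.ext h))⟩
  have hf : Function.Surjective f := by
    rintro ⟨y, hy⟩
    obtain ⟨e, he, he0⟩ := hcon y
    refine ⟨(⟨e⁻¹, inv_ne_zero he0⟩, ⟨⟨e • y, he⟩, fun h => ?_⟩), ?_⟩
    · exact smul_ne_zero he0 hy (congrArg Subtype.val h)
    · apply Subtype.ext
      change e⁻¹ • (e • y) = y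
      rw [smul_smul, inv_mul_cancel₀ he0, one_smul]
  have hc := Fintype.card_le_of_surjective f hf
  rw [Fintype.card_prod] at hc
  simp only [ne_eq, Fintype.card_subtype_compl, Fintype.card_subtype_eq] at hc
  have hE : 1 < Fintype.card E := Fintype.one_lt_card
  have hA1 : 0 < Fintype.card A := Fintype.card_pos
  have hle : Fintype.card A * Fintype.card E ≤ Fintype.card Y := by
    rw [Module.card_eq_pow_finrank (K := F) (V := A), Module.card_eq_pow_finrank (K := F) (V := E),
      Module.card_eq_pow_finrank (K := F) (V := Y), ← pow_add]
    exact Nat.pow_le_pow_right Fintype.card_pos hA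
  generalize Fintype.card E = q at *
  generalize Fintype.card A = a at *
  obtain ⟨q, rfl⟩ : ∃ q', q = q' + 2 := ⟨q - 2, by omega⟩
  obtain ⟨a, rfl⟩ : ∃ a', a = a' + 1 := ⟨a - 1, by omega⟩
  have h1 : q + 2 - 1 = q + 1 := rfl
  rw [h1, Nat.add_sub_cancel] at hc
  have h2 : Fintype.card Y ≤ (q + 1) * a + 1 := by omega
  nlinarith

/-- Corollary 4.2 (1): for an `F`-subspace `A` of a `k`-dimensional `E`-vector space `Y`,
`A` is a cutting `(k-1)`-blocking set iff `dim_F A ≥ (k-1)m + 1`, iff `A` is a cutting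
`r`-blocking set for all `r ∈ {0, …, k-1}`. -/
theorem statement10 (F E : Type*) [Field F] [Field E] [Algebra F E]
    [FiniteDimensional F E] (m : ℕ) (hm : Module.finrank F E = m)
    (Y : Type*) [AddCommGroup Y] [Module E Y] [Module F Y] [IsScalarTower F E Y]
    [FiniteDimensional E Y] (k : ℕ) (hY : Module.finrank E Y = k) (hk : 1 ≤ k)
    (A : Submodule F Y) :
    (IsCuttingBlocking E (A : Set Y) (k - 1) ↔
        (k - 1) * m + 1 ≤ Module.finrank F A) ∧
      (IsCuttingBlocking E (A : Set Y) (k - 1) ↔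
        ∀ r : ℕ, r + 1 ≤ k → IsCuttingBlocking E (A : Set Y) r) := by
  have : FiniteDimensional F Y := Module.Finite.trans E Y
  have hYm : m * k = Module.finrank F Y := by
    rw [← hm, ← hY, Module.finrank_mul_finrank]
  have hm0 : 0 < m := hm ▸ Module.finrank_pos
  obtain ⟨k, rfl⟩ : ∃ k', k = k' + 1 := ⟨k - 1, by omega⟩
  simp only [Nat.add_sub_cancel]
  have h12 : IsCuttingBlocking E (A : Set Y) k → k * m + 1 ≤ Module.finrank F A := by
    intro h
    by_contra hlt
    have hA : Module.finrank F A + Module.finrank F E ≤ Module.finrank F Y := by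
      rw [← hYm, hm]
      nlinarith
    obtain ⟨v, hv⟩ : ∃ v : Y, ∀ e : E, e • v ∈ A → e = 0 := by
      rcases finite_or_infinite F with hF | hF
      · exact exists_avoid_finite A hA
      · exact exists_avoid_infinite A hA
    have hv0 : v ≠ 0 := by
      rintro rfl
      exact one_ne_zero (hv 1 (by simp))
    have h1 := h (Submodule.span E {v}) (by rw [finrank_span_singleton hv0, hY]; omega)
    have h2 : Submodule.span E ((A : Set Y) ∩ (Submodule.span E {v} : Submodule E Y)) = ⊥ := by
      rw [Submodule.span_eq_bot]
      rintro x ⟨hxA, hx⟩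
      obtain ⟨e, rfl⟩ := Submodule.mem_span_singleton.1 hx
      rw [hv e hxA, zero_smul]
    rw [h2] at h1
    exact hv0 (Submodule.span_singleton_eq_bot.1 h1.symm)
  have h23 : k * m + 1 ≤ Module.finrank F A →
      ∀ r : ℕ, r + 1 ≤ k + 1 → IsCuttingBlocking E (A : Set Y) r := by
    intro h r hr V hV
    rw [hY] at hV
    set W := Submodule.span E ((A : Set Y) ∩ V) with hW
    have hWV : W ≤ V := Submodule.span_le.2 Set.inter_subset_right
    refine Submodule.eq_of_le_of_finrank_le hWV ?_
    have hVF : m * Module.finrank E V = Module.finrank F (V.restrictScalars F) := by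
      rw [← hm]; exact Module.finrank_mul_finrank F E V
    have hWF : m * Module.finrank E W = Module.finrank F (W.restrictScalars F) := by
      rw [← hm]; exact Module.finrank_mul_finrank F E W
    have h1 := Submodule.finrank_sup_add_finrank_inf_eq A (V.restrictScalars F)
    have h2 := Submodule.finrank_le (A ⊔ V.restrictScalars F)
    have h3 : Module.finrank F (A ⊓ V.restrictScalars F : Submodule F Y) ≤
        Module.finrank F (W.restrictScalars F) :=
      Submodule.finrank_mono fun x hx => Submodule.subset_span ⟨hx.1, hx.2⟩
    by_contra hlt
    have h4 : m * (Module.finrank E W + 1) ≤ m * Module.finrank E V :=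
      Nat.mul_le_mul_left _ (by omega)
    nlinarith
  exact ⟨⟨h12, fun h => h23 h k le_rfl⟩, fun h => h23 (h12 h), fun h => h k le_rfl⟩
end

section
/- Let Y be a k-dimensional E-vector space with k ≥ 1, let r ∈ {0,1,…,k−1}, and let A be an F-subspace of Y that is a cutting r-blocking set of Y. Then, for s = min{k−r−1, 𝓛(A)}, it holds that dim_F(A) ≥ (m−1)(r+s) + k. -/
open Submodule Pointwise

/-- The linearity index of `A ⊆ Y`: the largest `E`-dimension of an `E`-subspace
contained in `A`. -/
noncomputable def linIdx (E : Type*) {Y : Type*} [Field E] [AddCommGroup Y] [Module E Y]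
    (A : Set Y) : ℕ :=
  sSup {d : ℕ | ∃ V : Submodule E Y, (V : Set Y) ⊆ A ∧ Module.finrank E V = d}

/-- For an infinite field, the matrix `1 + t N` is invertible for some nonzero `t`. -/
lemma aux_det {F : Type*} [Field F] [Infinite F] {ι : Type*} [Fintype ι] [DecidableEq ι]
    (N : Matrix ι ι F) : ∃ t : F, t ≠ 0 ∧ (1 + t • N).det ≠ 0 := by
  classical
  have hne : (Polynomial.X * N.charpoly : Polynomial F) ≠ 0 :=
    mul_ne_zero Polynomial.X_ne_zero (Matrix.charpoly_monic N).ne_zero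
  obtain ⟨u, hu⟩ : ∃ u : F, (Polynomial.X * N.charpoly).eval u ≠ 0 := by
    by_contra! h
    exact hne (Polynomial.funext (by simpa using h))
  rw [Polynomial.eval_mul, Polynomial.eval_X] at hu
  have hu0 : u ≠ 0 := left_ne_zero_of_mul hu
  have hu1 := right_ne_zero_of_mul hu
  rw [Matrix.eval_charpoly] at hu1
  refine ⟨-u⁻¹, by simpa using hu0, ?_⟩
  have : (1 + (-u⁻¹) • N) = u⁻¹ • (Matrix.scalar ι u - N) := by
    ext i j
    by_cases h : i = j
    · subst h
      simp
      field_simp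
      ring
    · simp [h]
  rw [this, Matrix.det_smul]
  exact mul_ne_zero (pow_ne_zero _ (inv_ne_zero hu0)) hu1

/-- Linear independence persists under a small perturbation. -/
lemma aux_indep {F Z : Type*} [Field F] [Infinite F] [AddCommGroup Z] [Module F Z]
    {ι : Type*} [Fintype ι] (w u : ι → Z) (hw : LinearIndependent F w) :
    ∃ t : F, t ≠ 0 ∧ LinearIndependent F (fun i => w i + t • u i) := by
  classical
  obtain ⟨p, hp⟩ := (Fintype.linearCombination F w).exists_leftInverse_of_injective
    (by
      rw [LinearMap.ker_eq_bot]
      exact hw.fintypeLinearCombination_injective)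
  have hpw : ∀ i, p (w i) = Pi.single i 1 := by
    intro i
    have := LinearMap.congr_fun hp (Pi.single i 1)
    simpa [Fintype.linearCombination_apply_single] using this
  obtain ⟨t, ht, hdet⟩ := aux_det (Matrix.of (fun i => p (u i)))
  refine ⟨t, ht, LinearIndependent.of_comp p ?_⟩
  have hli := Matrix.linearIndependent_rows_of_det_ne_zero hdet
  have heq : (p ∘ fun i => w i + t • u i) =
      (fun i => (1 + t • Matrix.of fun i => p (u i)) i) := by
    ext i j
    simp [hpw, Matrix.one_apply, Pi.single_apply, eq_comm]
  rw [heq]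
  exact hli

lemma aux_rank {F U Z : Type*} [Field F] [Infinite F] [AddCommGroup U] [Module F U]
    [AddCommGroup Z] [Module F Z] [FiniteDimensional F Z]
    (T X : U →ₗ[F] Z) (x : U) (hx : T x = 0) (hX : X x ∉ LinearMap.range T) :
    ∃ t : F, Module.finrank F (LinearMap.range T) <
      Module.finrank F (LinearMap.range (T + t • X)) := by
  let b := Module.finBasis F (LinearMap.range T)
  have hb : ∀ i, ∃ v, T v = (b i : Z) := fun i => (b i).2
  choose v hv using hb
  have hli : LinearIndependent F (fun i => (b i : Z)) :=
    b.linearIndependent.map' (LinearMap.range T).subtype (Submodule.ker_subtype _)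
  have hspan : Submodule.span F (Set.range fun i => (b i : Z)) ≤ LinearMap.range T := by
    rw [Submodule.span_le]
    rintro _ ⟨i, rfl⟩
    exact (b i).2
  have hw : LinearIndependent F
      (fun o : Option (Fin (Module.finrank F (LinearMap.range T))) =>
        o.elim (X x) (fun i => (b i : Z))) := by
    rw [linearIndependent_option]
    exact ⟨hli, fun h => hX (hspan h)⟩
  obtain ⟨t, ht, hlt⟩ := aux_indep _ (fun o => o.elim 0 (fun i => X (v i))) hw
  refine ⟨t, ?_⟩
  have hmem : ∀ o : Option (Fin (Module.finrank F (LinearMap.range T))),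
      (o.elim (X x) (fun i => (b i : Z))) + t • (o.elim 0 (fun i => X (v i)))
        ∈ LinearMap.range (T + t • X) := by
    rintro (_ | i)
    · exact ⟨t⁻¹ • x, by simp [hx, smul_smul, ht]⟩
    · exact ⟨v i, by simp [hv]⟩
  have h2 : LinearIndependent F (fun o => (⟨_, hmem o⟩ : LinearMap.range (T + t • X))) :=
    LinearIndependent.of_comp (LinearMap.range (T + t • X)).subtype hlt
  have := h2.fintype_card_le_finrank
  simp at this
  omega

section
variable {F E : Type*} [Field F] [Field E] [Algebra F E] [FiniteDimensional F E]
    {Y : Type*} [AddCommGroup Y] [Module E Y] [Module F Y] [IsScalarTower F E Y]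
    [FiniteDimensional E Y]

lemma aux_point (A : Submodule F Y)
    (hA : Module.finrank F A + Module.finrank F E ≤ Module.finrank F Y) :
    ∃ y : Y, ∀ e : E, e • y ∈ A → e = 0 := by
  have hfin : Module.Finite F Y := Module.Finite.trans E Y
  have hpos : 0 < Module.finrank F E := Module.finrank_pos
  rcases finite_or_infinite F with hF | hF
  · by_contra! hcon
    have : Finite E := Module.finite_of_finite F
    have : Finite Y := Module.finite_of_finite F
    have hsurj : Function.Surjective (fun p : E × A => p.1 • (p.2 : Y)) := by
      intro y
      obtain ⟨e, he, h0⟩ := hcon y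
      exact ⟨(e⁻¹, ⟨_, he⟩), by simp [smul_smul, h0]⟩
    have hcard : Nat.card (E × A) ≤ Nat.card Y := by
      rw [Nat.card_prod, Module.natCard_eq_pow_finrank (K := F) (V := E),
        Module.natCard_eq_pow_finrank (K := F) (V := A),
        Module.natCard_eq_pow_finrank (K := F) (V := Y), ← pow_add]
      exact Nat.pow_le_pow_right Nat.card_pos (by omega)
    have hbij := (Nat.bijective_iff_surjective_and_card
      (fun p : E × A => p.1 • (p.2 : Y))).2 ⟨hsurj, le_antisymm hcard
        (Nat.card_le_card_of_surjective _ hsurj)⟩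
    have hA0 : ∀ a : A, a = 0 := by
      intro a
      have := @hbij.1 (0, a) (0, 0) (by simp)
      simpa using this
    have hYn : Nontrivial Y := Module.nontrivial_of_finrank_pos (R := F) (by omega)
    obtain ⟨y, hy⟩ := exists_ne (0 : Y)
    obtain ⟨e, he, h0⟩ := hcon y
    have := congrArg Subtype.val (hA0 ⟨_, he⟩)
    simp [h0, hy] at this
  · let T : Y → E →ₗ[F] (Y ⧸ A) := fun y =>
      A.mkQ ∘ₗ ((LinearMap.toSpanSingleton E Y y).restrictScalars F)
    have hT : ∀ y e, T y e = A.mkQ (e • y) := fun y e => rfl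
    obtain ⟨y, hy⟩ : ∃ y, ∀ y', Module.finrank F (LinearMap.range (T y')) ≤
        Module.finrank F (LinearMap.range (T y)) := by
      have hbdd : BddAbove (Set.range fun y => Module.finrank F (LinearMap.range (T y))) := by
        refine ⟨Module.finrank F (Y ⧸ A), ?_⟩
        rintro _ ⟨y, rfl⟩
        exact Submodule.finrank_le _
      obtain ⟨y, hy⟩ := Nat.sSup_mem (Set.range_nonempty _) hbdd
      exact ⟨y, fun y' => by
        rw [show Module.finrank F (LinearMap.range (T y)) = _ from hy]
        exact le_csSup hbdd ⟨y', rfl⟩⟩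
    refine ⟨y, fun x hx => ?_⟩
    by_contra hx0
    have hTx : T y x = 0 := by
      rw [hT]; simpa using hx
    have hall : ∀ y', T y' x ∈ LinearMap.range (T y) := by
      intro y'
      by_contra hn
      obtain ⟨t, ht⟩ := aux_rank (T y) (T y') x hTx hn
      have he : T y + t • T y' = T (y + t • y') := by
        ext e
        simp only [LinearMap.add_apply, LinearMap.smul_apply, hT]
        rw [smul_add, A.mkQ.map_add, smul_comm e t y', A.mkQ.map_smul]
      rw [he] at ht
      exact absurd (hy (y + t • y')) (by omega)
    have htop : LinearMap.range (T y) = ⊤ := by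
      rw [eq_top_iff]
      intro z _
      obtain ⟨w, rfl⟩ := A.mkQ_surjective z
      have := hall (x⁻¹ • w)
      rwa [hT, smul_smul, mul_inv_cancel₀ hx0, one_smul] at this
    have h1 := (T y).finrank_range_add_finrank_ker
    rw [htop, finrank_top] at h1
    have h2 := A.finrank_quotient_add_finrank
    have h3 : Module.finrank F (LinearMap.ker (T y)) = 0 := by omega
    rw [Submodule.finrank_eq_zero] at h3
    have : x ∈ LinearMap.ker (T y) := hTx
    rw [h3] at this
    exact hx0 (by simpa using this)

lemma aux_res (V : Submodule E Y) : Module.finrank F (V.restrictScalars F) =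
    Module.finrank F E * Module.finrank E V :=
  (Module.finrank_mul_finrank F E V).symm

lemma aux_compl (W : Submodule E Y) (B : Submodule F Y) (hW : ∀ w ∈ W, w ∈ B → w = 0)
    (j : ℕ) (hj : Module.finrank F B + Module.finrank F E * (Module.finrank E W + j)
      ≤ Module.finrank F Y) :
    ∃ V : Submodule E Y, W ≤ V ∧ Module.finrank E V = Module.finrank E W + j ∧
      ∀ v ∈ V, v ∈ B → v = 0 := by
  have hfin : Module.Finite F Y := Module.Finite.trans E Y
  induction j with
  | zero => exact ⟨W, le_rfl, rfl, hW⟩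
  | succ j ih =>
    obtain ⟨V, hWV, hV, hd⟩ := ih (by nlinarith)
    have hle := Submodule.finrank_add_le_finrank_add_finrank B (V.restrictScalars F)
    rw [aux_res, hV] at hle
    obtain ⟨y, hy⟩ := aux_point (E := E) (B ⊔ V.restrictScalars F) (by nlinarith)
    have hyV : y ∉ V := fun h => one_ne_zero (hy 1 (by
      rw [one_smul]; exact Submodule.mem_sup_right h))
    refine ⟨V ⊔ Submodule.span E {y}, hWV.trans le_sup_left, ?_, ?_⟩
    · have h0 : y ≠ 0 := fun h => hyV (h ▸ V.zero_mem)
      have hdis : V ⊓ Submodule.span E {y} = ⊥ := by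
        rw [eq_bot_iff]
        rintro z ⟨hz, hz'⟩
        obtain ⟨e, rfl⟩ := Submodule.mem_span_singleton.1 hz'
        have : e = 0 := hy e (Submodule.mem_sup_right hz)
        simp [this]
      have := Submodule.finrank_sup_add_finrank_inf_eq V (Submodule.span E {y})
      rw [hdis, finrank_bot, finrank_span_singleton h0, hV] at this
      omega
    · intro z hz hzB
      obtain ⟨v, hv, u, hu, rfl⟩ := Submodule.mem_sup.1 hz
      obtain ⟨e, rfl⟩ := Submodule.mem_span_singleton.1 hu
      have he : e = 0 := by
        apply hy
        have : e • y = (v + e • y) - v := by abel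
        rw [this]
        exact Submodule.sub_mem _ (Submodule.mem_sup_left hzB) (Submodule.mem_sup_right hv)
      subst he
      simp only [zero_smul, add_zero] at hzB ⊢
      exact hd v hv hzB

/-- The `E`-span of an `F`-subspace has no larger dimension. -/
lemma aux_span (C : Submodule F Y) :
    Module.finrank E (Submodule.span E (C : Set Y)) ≤ Module.finrank F C := by
  have hfin : Module.Finite F Y := Module.Finite.trans E Y
  let b := Module.finBasis F C
  have h : Submodule.span E (C : Set Y) ≤
      Submodule.span E (Set.range fun i => (b i : Y)) := by
    rw [Submodule.span_le]
    intro c hc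
    have h1 := b.sum_repr ⟨c, hc⟩
    have h2 := congrArg Subtype.val h1
    simp only [Submodule.coe_sum, Submodule.coe_smul] at h2
    rw [SetLike.mem_coe, ← h2]
    refine Submodule.sum_mem _ fun i _ => ?_
    exact Submodule.smul_of_tower_mem _ _ (Submodule.subset_span ⟨i, rfl⟩)
  refine (Submodule.finrank_mono h).trans ?_
  refine (finrank_range_le_card _).trans ?_
  simp

lemma aux_split (W : Submodule E Y) (A : Submodule F Y) (hWA : W.restrictScalars F ≤ A) :
    ∃ B : Submodule F Y, B ≤ A ∧ W.restrictScalars F ⊔ B = A ∧ (∀ w ∈ W, w ∈ B → w = 0) ∧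
      Module.finrank F A = Module.finrank F E * Module.finrank E W + Module.finrank F B := by
  have hfin : Module.Finite F Y := Module.Finite.trans E Y
  obtain ⟨C, hC⟩ := Submodule.exists_isCompl (W.restrictScalars F)
  have hsup : W.restrictScalars F ⊔ (C ⊓ A) = A := by
    rw [← sup_inf_assoc_of_le C hWA, hC.sup_eq_top, top_inf_eq]
  have hd : ∀ w ∈ W, w ∈ C ⊓ A → w = 0 := by
    intro w hw hw'
    have : w ∈ W.restrictScalars F ⊓ C := ⟨hw, hw'.1⟩
    rwa [hC.inf_eq_bot, Submodule.mem_bot] at this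
  refine ⟨C ⊓ A, inf_le_right, hsup, hd, ?_⟩
  have := Submodule.finrank_sup_add_finrank_inf_eq (W.restrictScalars F) (C ⊓ A)
  have h0 : W.restrictScalars F ⊓ (C ⊓ A) = ⊥ := by
    rw [eq_bot_iff]
    rintro w ⟨h1, h2⟩
    exact (Submodule.mem_bot F).2 (hd w h1 h2)
  rw [hsup, h0, finrank_bot, aux_res] at this
  omega

lemma aux_spandim (W V : Submodule E Y) (C : Submodule F Y) (hWC : W.restrictScalars F ≤ C)
    (hspan : Submodule.span E (C : Set Y) = V) :
    Module.finrank F E * Module.finrank E W + Module.finrank E V ≤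
      Module.finrank F C + Module.finrank E W := by
  obtain ⟨B, hBC, hsup, -, hdim⟩ := aux_split W C hWC
  have hle : V ≤ W ⊔ Submodule.span E (B : Set Y) := by
    rw [← hspan, Submodule.span_le]
    intro c hc
    rw [SetLike.mem_coe, ← hsup] at hc
    obtain ⟨w, hw, b, hb, rfl⟩ := Submodule.mem_sup.1 hc
    exact Submodule.add_mem _ (Submodule.mem_sup_left hw)
      (Submodule.mem_sup_right (Submodule.subset_span hb))
  have h1 := Submodule.finrank_mono hle
  have h2 := Submodule.finrank_add_le_finrank_add_finrank W (Submodule.span E (B : Set Y))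
  have h3 := aux_span (E := E) B
  omega

lemma aux_sub {K M : Type*} [Field K] [AddCommGroup M] [Module K M]
    [FiniteDimensional K M] (A : Submodule K M) (n : ℕ) (hn : n ≤ Module.finrank K A) :
    ∃ B : Submodule K M, B ≤ A ∧ Module.finrank K B = n := by
  obtain ⟨f, hf⟩ := exists_linearIndependent_of_le_finrank hn
  have hli : LinearIndependent K (fun i => (f i : M)) :=
    hf.map' A.subtype (Submodule.ker_subtype _)
  refine ⟨Submodule.span K (Set.range fun i => (f i : M)), ?_, ?_⟩
  · rw [Submodule.span_le]
    rintro _ ⟨i, rfl⟩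
    exact (f i).2
  · rw [finrank_span_eq_card hli, Fintype.card_fin]

end

/-- Corollary 4.2 (3): if `A` is an `F`-subspace of a `k`-dimensional `E`-vector space `Y`
which is a cutting `r`-blocking set (`r ∈ {0, …, k-1}`), then for
`s = min{k-r-1, 𝓛(A)}` one has `dim_F A ≥ (m-1)(r+s) + k`. -/
theorem statement11 (F E : Type*) [Field F] [Field E] [Algebra F E]
    [FiniteDimensional F E] (m : ℕ) (hm : Module.finrank F E = m)
    (Y : Type*) [AddCommGroup Y] [Module E Y] [Module F Y] [IsScalarTower F E Y]
    [FiniteDimensional E Y] (k : ℕ) (hY : Module.finrank E Y = k)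
    (r : ℕ) (hr : r + 1 ≤ k)
    (A : Submodule F Y) (hA : IsCuttingBlocking E (A : Set Y) r)
    (s : ℕ) (hs : s = min (k - r - 1) (linIdx E (A : Set Y))) :
    (m - 1) * (r + s) + k ≤ Module.finrank F A := by
  have hfin : Module.Finite F Y := Module.Finite.trans E Y
  have hpos : 0 < Module.finrank F E := Module.finrank_pos
  have hFY := Module.finrank_mul_finrank F E Y
  obtain ⟨W, hWA, hWs⟩ : ∃ W : Submodule E Y, W.restrictScalars F ≤ A ∧
      Module.finrank E W = s := by
    have hmem : linIdx E (A : Set Y) ∈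
        {d : ℕ | ∃ V : Submodule E Y, (V : Set Y) ⊆ A ∧ Module.finrank E V = d} := by
      apply Nat.sSup_mem
      · exact ⟨0, ⊥, by simp, by simp⟩
      · refine ⟨Module.finrank E Y, ?_⟩
        rintro _ ⟨V, -, rfl⟩
        exact Submodule.finrank_le _
    obtain ⟨V, hVA, hV⟩ := hmem
    obtain ⟨W, hWV, hW⟩ := aux_sub V s (by omega)
    exact ⟨W, fun w hw => hVA (hWV hw), hW⟩
  obtain ⟨q, hq⟩ : ∃ q, k = r + s + 1 + q := ⟨k - (r + s + 1), by omega⟩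
  obtain ⟨B, hBA, hsup, hd, hdim⟩ := aux_split W A hWA
  rw [hm] at hpos hFY hdim
  rw [hY] at hFY
  have hmr : m * r ≤ Module.finrank F B := by
    by_contra! hlt
    obtain ⟨V, hWV, hV, hdV⟩ := aux_compl W B hd (1 + q) (by
      rw [hm, hWs, ← hFY, hq]; nlinarith)
    have hVspan := hA V (by omega)
    have : V ≤ W := by
      rw [← hVspan, Submodule.span_le]
      rintro a ⟨haA, haV⟩
      rw [SetLike.mem_coe, ← hsup] at haA
      obtain ⟨w, hw, b, hb, rfl⟩ := Submodule.mem_sup.1 haA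
      have hbV : b ∈ V := by
        have := V.sub_mem haV (hWV hw)
        simpa using this
      rw [hdV b hbV hb, add_zero]
      exact hw
    have := Submodule.finrank_mono this
    omega
  obtain ⟨B', hB'B, hB'⟩ := aux_sub B (m * r) hmr
  obtain ⟨V, hWV, hV, hdV⟩ := aux_compl W B' (fun w hw hb => hd w hw (hB'B hb)) (1 + q) (by
      rw [hm, hWs, ← hFY, hq, hB']; nlinarith)
  have hVspan := hA V (by omega)
  have h1 := aux_spandim W V (A ⊓ V.restrictScalars F)
    (le_inf hWA (fun w hw => hWV hw)) hVspan
  have h2 := Submodule.finrank_sup_add_finrank_inf_eq A (V.restrictScalars F)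
  have h3 := Submodule.finrank_sup_add_finrank_inf_eq B' (V.restrictScalars F)
  have h4 : B' ⊓ V.restrictScalars F = ⊥ := by
    rw [eq_bot_iff]
    rintro z ⟨hz, hz'⟩
    exact (Submodule.mem_bot F).2 (hdV z hz' hz)
  have h5 : Module.finrank F ↥(B' ⊔ V.restrictScalars F) ≤
      Module.finrank F ↥(A ⊔ V.restrictScalars F) :=
    Submodule.finrank_mono (sup_le_sup_right (hB'B.trans hBA) _)
  rw [h4, finrank_bot, hB'] at h3
  rw [hm, hWs, hV, hWs] at h1
  obtain ⟨n, rfl⟩ : ∃ n, m = n + 1 := ⟨m - 1, by omega⟩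
  simp only [Nat.add_sub_cancel]
  nlinarith
end

section
/- Let C be an [n,k] rank metric code with n ≥ k ≥ 1, and let r ∈ {0,1,…,k−1}. Then C is r-minimal if and only if d_{r+1}(C) ≥ mr + 1. -/
open Submodule Pointwise

/-- `D` is rank minimal in `C`: any subcode `B ≤ C` of the same dimension with
`χ(B) ⊆ χ(D)` satisfies `χ(B) = χ(D)`. -/
def RankMinimal (F E : Type*) [Field F] [Field E] [Algebra F E] (n : ℕ)
    (C D : Submodule E (Fin n → E)) : Prop :=
  ∀ B : Submodule E (Fin n → E), B ≤ C → Module.finrank E B = Module.finrank E D →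
    rankSupport F E n (B : Set (Fin n → E)) ≤ rankSupport F E n (D : Set (Fin n → E)) →
    rankSupport F E n (B : Set (Fin n → E)) = rankSupport F E n (D : Set (Fin n → E))

/-- `C` is `r`-minimal with respect to the rank metric. -/
def IsRMinimal (F E : Type*) [Field F] [Field E] [Algebra F E] (n : ℕ)
    (C : Submodule E (Fin n → E)) (r : ℕ) : Prop :=
  ∀ D : Submodule E (Fin n → E), D ≤ C → Module.finrank E D = r → RankMinimal F E n C D

/-- The `r`-th generalized rank weight of a code `C ≤ E^n`. -/
noncomputable def grw (F E : Type*) [Field F] [Field E] [Algebra F E] (n : ℕ)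
    (C : Submodule E (Fin n → E)) (r : ℕ) : ℕ :=
  sInf {w : ℕ | ∃ D : Submodule E (Fin n → E), D ≤ C ∧ Module.finrank E D = r ∧
    wt F E n (D : Set (Fin n → E)) = w}

theorem rs_mem_span {F E : Type*} [Field F] [Field E] [Algebra F E] [FiniteDimensional F E]
    {n : ℕ} (U : Submodule F (Fin n → F)) (x : Fin n → E) :
    x ∈ Submodule.span E (fIncl F E n '' (U : Set (Fin n → F))) ↔
      ∀ l : E →ₗ[F] F, (fun i => l (x i)) ∈ U := by
  constructor
  · intro hx
    induction hx using Submodule.span_induction with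
    | mem x h =>
      obtain ⟨u, hu, rfl⟩ := h
      intro l
      have : (fun i => l (fIncl F E n u i)) = l 1 • u := by
        ext i
        simp [fIncl, Algebra.algebraMap_eq_smul_one, mul_comm]
      rw [this]
      exact U.smul_mem _ hu
    | zero => 
      intro l
      have : (fun i => l ((0 : Fin n → E) i)) = 0 := by ext i; simp
      rw [this]
      exact U.zero_mem
    | add x y _ _ hx hy =>
      intro l
      have := U.add_mem (hx l) (hy l)
      convert this using 1
      ext i; simp
    | smul a x _ hx =>
      intro l
      exact hx (l ∘ₗ LinearMap.mulLeft F a)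
  · intro h
    let b := Module.finBasis F E
    have : x = ∑ k, b k • fIncl F E n (fun i => b.coord k (x i)) := by
      ext i
      rw [Finset.sum_apply]
      conv_lhs => rw [← b.sum_repr (x i)]
      refine Finset.sum_congr rfl fun k _ => ?_
      simp [fIncl, Algebra.smul_def, mul_comm]
    rw [this]
    exact Submodule.sum_mem _ fun k _ => Submodule.smul_mem _ _
      (Submodule.subset_span ⟨_, h (b.coord k), rfl⟩)

theorem rs_le_iff {F E : Type*} [Field F] [Field E] [Algebra F E] [FiniteDimensional F E]
    {n : ℕ} (U : Submodule F (Fin n → F)) (A : Set (Fin n → E)) :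
    rankSupport F E n A ≤ U ↔ ∀ x ∈ A, ∀ l : E →ₗ[F] F, (fun i => l (x i)) ∈ U := by
  constructor
  · intro h x hx l
    apply h
    rw [rankSupport, Submodule.mem_sInf]
    intro W hW
    exact (rs_mem_span W x).1 (hW hx) l
  · intro h
    exact sInf_le fun x hx => (rs_mem_span U x).2 (h x hx)

theorem rs_mem {F E : Type*} [Field F] [Field E] [Algebra F E] [FiniteDimensional F E]
    {n : ℕ} {A : Set (Fin n → E)} {x} (hx : x ∈ A) (l : E →ₗ[F] F) :
    (fun i => l (x i)) ∈ rankSupport F E n A :=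
  (rs_le_iff _ A).1 le_rfl x hx l

theorem rs_mono {F E : Type*} [Field F] [Field E] [Algebra F E] [FiniteDimensional F E]
    {n : ℕ} {A B : Set (Fin n → E)} (h : A ⊆ B) :
    rankSupport F E n A ≤ rankSupport F E n B :=
  (rs_le_iff _ A).2 fun _ hx l => rs_mem (h hx) l

theorem rs_wt_le {F E : Type*} [Field F] [Field E] [Algebra F E] [FiniteDimensional F E]
    {n : ℕ} (D : Submodule E (Fin n → E)) :
    wt F E n (D : Set (Fin n → E)) ≤ Module.finrank F E * Module.finrank E D := by
  let b := Module.finBasis F E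
  let d := Module.finBasis E D
  let g : Fin (Module.finrank F E) × Fin (Module.finrank E D) → (Fin n → F) :=
    fun p i => b.coord p.1 ((d p.2 : Fin n → E) i)
  have hle : rankSupport F E n (D : Set (Fin n → E)) ≤ Submodule.span F (Set.range g) := by
    apply sInf_le
    intro x hx
    have : x = ∑ j, d.repr ⟨x, hx⟩ j • (d j : Fin n → E) := by
      have := congrArg Subtype.val (d.sum_repr ⟨x, hx⟩)
      rw [Submodule.coe_sum] at this
      exact this.symm
    rw [this]
    refine Submodule.sum_mem _ fun j _ => Submodule.smul_mem _ _ ?_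
    rw [rs_mem_span]
    intro l
    have : (fun i => l ((d j : Fin n → E) i)) = ∑ k, l (b k) • g (k, j) := by
      ext i
      conv_lhs => rw [← b.sum_repr ((d j : Fin n → E) i), map_sum]
      simp only [Finset.sum_apply, map_smul, g, Pi.smul_apply, smul_eq_mul,
        Module.Basis.coord_apply, mul_comm]
    rw [this]
    exact Submodule.sum_mem _ fun k _ => Submodule.smul_mem _ _ (Submodule.subset_span ⟨_, rfl⟩)
  calc wt F E n (D : Set (Fin n → E)) ≤ Module.finrank F (Submodule.span F (Set.range g)) :=
        Submodule.finrank_mono hle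
    _ ≤ Fintype.card (Fin (Module.finrank F E) × Fin (Module.finrank E D)) :=
        finrank_range_le_card g
    _ = _ := by simp

/-- If `B v` is not in the image of `A` for some `v ∈ ker A`, the rank can be increased. -/
theorem rs_rank_incr {F M N : Type*} [Field F] [Infinite F] [AddCommGroup M] [Module F M]
    [AddCommGroup N] [Module F N] [FiniteDimensional F M] [FiniteDimensional F N]
    (A B : M →ₗ[F] N) (v : M) (hv : A v = 0) (hB : B v ∉ LinearMap.range A) :
    ∃ t : F, Module.finrank F (LinearMap.range A) < Module.finrank F (LinearMap.range (A + t • B)) := by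
  obtain ⟨s, hs⟩ := A.rangeRestrict.exists_rightInverse_of_surjective
    (LinearMap.range_rangeRestrict A)
  have hs' : ∀ y, A (s y) = y := fun y => congrArg Subtype.val (LinearMap.congr_fun hs y)
  let f0 : (LinearMap.range A × F) →ₗ[F] N :=
    LinearMap.coprod (A ∘ₗ s) (LinearMap.toSpanSingleton F N (B v))
  let g : (LinearMap.range A × F) →ₗ[F] N := LinearMap.coprod (B ∘ₗ s) 0
  have h0 : LinearMap.ker f0 = ⊥ := by
    rw [LinearMap.ker_eq_bot']
    rintro ⟨y, c⟩ h
    simp only [f0, LinearMap.coprod_apply, LinearMap.comp_apply, hs',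
      LinearMap.toSpanSingleton_apply] at h
    have hc : c = 0 := by
      by_contra hc
      apply hB
      have : B v = c⁻¹ • (-(y : N)) := by
        rw [eq_inv_smul_iff₀ hc]; exact eq_neg_of_add_eq_zero_right h
      rw [this]
      exact Submodule.smul_mem _ _ (Submodule.neg_mem _ y.2)
    subst hc
    simpa using h
  obtain ⟨L, hL⟩ := f0.exists_leftInverse_of_injective h0
  let T : Module.End F (LinearMap.range A × F) := L ∘ₗ g
  have hfin : (Set.Finite {μ | T.HasEigenvalue μ}) := Module.End.finite_hasEigenvalue T
  obtain ⟨μ, hμ⟩ := (hfin.union (Set.finite_singleton 0)).infinite_compl.nonempty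
  have hμ0 : μ ≠ 0 := fun h => hμ (Or.inr h)
  have hμ1 : ¬ T.HasEigenvalue μ := fun h => hμ (Or.inl h)
  let t : F := -μ⁻¹
  have ht : t ≠ 0 := neg_ne_zero.2 (inv_ne_zero hμ0)
  refine ⟨t, ?_⟩
  have hinj : Function.Injective (f0 + t • g) := by
    rw [← LinearMap.ker_eq_bot, LinearMap.ker_eq_bot']
    intro z hz
    by_contra hz0
    apply hμ1
    apply Module.End.hasEigenvalue_of_hasEigenvector (x := z)
    refine ⟨Module.End.mem_eigenspace_iff.2 ?_, hz0⟩
    have h1 := congrArg L hz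
    have h2 := LinearMap.congr_fun hL z
    simp only [LinearMap.comp_apply, LinearMap.id_apply] at h2
    simp only [LinearMap.add_apply, LinearMap.smul_apply, map_add, map_smul, h2, map_zero] at h1
    change L (g z) = μ • z
    have h3 : z = μ⁻¹ • L (g z) := by
      simpa [t, ← sub_eq_add_neg, sub_eq_zero] using h1
    rw [eq_comm, ← eq_inv_smul_iff₀ hμ0]
    exact h3
  have hle : LinearMap.range (f0 + t • g) ≤ LinearMap.range (A + t • B) := by
    rintro _ ⟨⟨y, c⟩, rfl⟩
    refine ⟨s y + (c * t⁻¹) • v, ?_⟩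
    simp only [f0, g, map_add, map_smul, LinearMap.add_apply, LinearMap.smul_apply, hv, 
      LinearMap.coprod_apply, LinearMap.comp_apply, LinearMap.toSpanSingleton_apply,
      LinearMap.zero_apply, smul_zero, zero_add, add_zero, smul_smul]
    rw [mul_assoc, inv_mul_cancel₀ ht, mul_one]
    abel
  have h1 := Submodule.finrank_mono hle
  rw [LinearMap.finrank_range_of_inj hinj, Module.finrank_prod, Module.finrank_self] at h1
  omega

theorem rs_point {F E X : Type*} [Field F] [Field E] [Algebra F E] [FiniteDimensional F E]
    [AddCommGroup X] [Module F X] [Module E X] [IsScalarTower F E X] [FiniteDimensional F X]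
    (V : Submodule F X) (hV : Module.finrank F V + Module.finrank F E ≤ Module.finrank F X) :
    ∃ p : X, ∀ a : E, a • p ∈ V → a = 0 := by
  cases finite_or_infinite F with
  | inl hF =>
    haveI : Finite E := Module.finite_of_finite F
    haveI : Finite X := Module.finite_of_finite F
    by_contra hcon
    push Not at hcon
    let φ : E × V → X := fun q => q.1 • (q.2 : X)
    have hsurj : Function.Surjective φ := by
      intro p
      obtain ⟨a, ha, ha0⟩ := hcon p
      exact ⟨(a⁻¹, ⟨a • p, ha⟩), by simp [φ, smul_smul, inv_mul_cancel₀ ha0]⟩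
    have hcard : Nat.card (E × V) ≤ Nat.card X := by
      rw [Nat.card_prod, Module.natCard_eq_pow_finrank (K := F) (V := E),
        Module.natCard_eq_pow_finrank (K := F) (V := V),
        Module.natCard_eq_pow_finrank (K := F) (V := X), ← pow_add]
      exact Nat.pow_le_pow_right Nat.card_pos (by omega)
    have hbij := hsurj.bijective_of_nat_card_le hcard
    have := @hbij.1 (1, 0) (0, 0) (by simp [φ])
    simp at this
  | inr hF =>
    let ψ : X → (E →ₗ[F] (X ⧸ V)) := fun p => V.mkQ ∘ₗ (LinearMap.toSpanSingleton E X p).restrictScalars F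
    have hψ : ∀ p a, ψ p a = V.mkQ (a • p) := fun p a => rfl
    have hbd : ∃ p, ∀ q, Module.finrank F (LinearMap.range (ψ q)) ≤
        Module.finrank F (LinearMap.range (ψ p)) := by
      have hne : (Set.range fun p => Module.finrank F (LinearMap.range (ψ p))).Nonempty := ⟨_, 0, rfl⟩
      have hb : BddAbove (Set.range fun p => Module.finrank F (LinearMap.range (ψ p))) :=
        ⟨Module.finrank F (X ⧸ V), by rintro _ ⟨p, rfl⟩; exact Submodule.finrank_le _⟩
      obtain ⟨p, hp⟩ := Nat.sSup_mem hne hb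
      exact ⟨p, fun q => by have := le_csSup hb ⟨q, rfl⟩; rw [← hp] at this; exact this⟩
    obtain ⟨p, hp⟩ := hbd
    refine ⟨p, fun a ha => ?_⟩
    by_contra ha0
    have hap : ψ p a = 0 := by rw [hψ]; simpa using ha
    have htop : LinearMap.range (ψ p) = ⊤ := by
      rw [eq_top_iff]
      rintro y -
      obtain ⟨x, rfl⟩ := V.mkQ_surjective y
      by_contra hy
      obtain ⟨t, ht⟩ := rs_rank_incr (ψ p) (ψ (a⁻¹ • x)) a hap (by
        rw [hψ, smul_smul, mul_inv_cancel₀ ha0, one_smul]; exact hy)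
      have heq : ψ p + t • ψ (a⁻¹ • x) = ψ (p + t • a⁻¹ • x) := by
        ext c
        simp only [LinearMap.add_apply, LinearMap.smul_apply, hψ, smul_add, map_add]
        rw [← map_smul, smul_comm c t]
      rw [heq] at ht
      exact absurd (hp _) (not_le.2 ht)
    have h1 := LinearMap.finrank_range_add_finrank_ker (ψ p)
    rw [htop, finrank_top] at h1
    have h2 := V.finrank_quotient_add_finrank
    have h3 : Module.finrank F (LinearMap.ker (ψ p)) = 0 := by omega
    rw [Submodule.finrank_eq_zero] at h3
    have : a ∈ LinearMap.ker (ψ p) := hap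
    rw [h3] at this
    exact ha0 (by simpa using this)

/-- Extension of the functional with coefficients `c` to `E^n`, restricted to `D`. -/
noncomputable def rsPhi (F E : Type*) [Field F] [Field E] [Algebra F E] {n : ℕ}
    (D : Submodule E (Fin n → E)) : (Fin n → F) →ₗ[F] (D →ₗ[E] E) where
  toFun c :=
    { toFun := fun x => ∑ i, c i • (x : Fin n → E) i
      map_add' := fun x y => by simp [Finset.sum_add_distrib]
      map_smul' := fun a x => by simp [Finset.mul_sum] }
  map_add' c d := by ext x; simp [add_smul, Finset.sum_add_distrib]
  map_smul' a c := by ext x; simp [Finset.smul_sum, mul_smul]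

/-- The functional on `F^n` with coefficients `c`. -/
noncomputable def rsDot (F : Type*) [Field F] {n : ℕ} (c : Fin n → F) : (Fin n → F) →ₗ[F] F where
  toFun u := ∑ i, c i * u i
  map_add' u v := by simp [mul_add, Finset.sum_add_distrib]
  map_smul' a u := by simp [Finset.mul_sum, mul_left_comm]

theorem rs_le_ker_iff {F E : Type*} [Field F] [Field E] [Algebra F E] [FiniteDimensional F E]
    {n : ℕ} (c : Fin n → F) (A : Set (Fin n → E)) :
    rankSupport F E n A ≤ LinearMap.ker (rsDot F c) ↔ ∀ x ∈ A, ∑ i, c i • x i = 0 := by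
  rw [rs_le_iff]
  refine forall₂_congr fun x hx => ?_
  have : ∀ l : E →ₗ[F] F, (fun i => l (x i)) ∈ LinearMap.ker (rsDot F c) ↔
      l (∑ i, c i • x i) = 0 := by
    intro l; simp [rsDot]
  simp only [this]
  constructor
  · intro h
    exact (Module.forall_dual_apply_eq_zero_iff F _).1 h
  · intro h l; rw [h, map_zero]

theorem rsPhi_eq_zero {F E : Type*} [Field F] [Field E] [Algebra F E] [FiniteDimensional F E]
    {n : ℕ} (D : Submodule E (Fin n → E)) (c : Fin n → F) :
    rsPhi F E D c = 0 ↔ rankSupport F E n (D : Set (Fin n → E)) ≤ LinearMap.ker (rsDot F c) := by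
  rw [rs_le_ker_iff]
  constructor
  · intro h x hx
    exact LinearMap.congr_fun h ⟨x, hx⟩
  · intro h
    ext x
    exact h x x.2

theorem rs_finrank_range {F E : Type*} [Field F] [Field E] [Algebra F E] [FiniteDimensional F E]
    {n : ℕ} (D : Submodule E (Fin n → E)) :
    Module.finrank F (LinearMap.range (rsPhi F E D)) ≤ wt F E n (D : Set (Fin n → E)) := by
  let U := rankSupport F E n (D : Set (Fin n → E))
  let Ψ : (Fin n → F) →ₗ[F] (U →ₗ[F] F) :=
    { toFun := fun c => (rsDot F c).domRestrict U
      map_add' := fun c d => by ext u; simp [rsDot, add_mul, Finset.sum_add_distrib]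
      map_smul' := fun a c => by ext u; simp [rsDot, Finset.mul_sum, mul_assoc] }
  have hker : LinearMap.ker Ψ ≤ LinearMap.ker (rsPhi F E D) := by
    intro c hc
    rw [LinearMap.mem_ker, rsPhi_eq_zero]
    intro u hu
    exact LinearMap.congr_fun (LinearMap.mem_ker.1 hc) ⟨u, hu⟩
  have h1 := Submodule.finrank_mono hker
  have h2 := LinearMap.finrank_range_add_finrank_ker Ψ
  have h3 := LinearMap.finrank_range_add_finrank_ker (rsPhi F E D)
  have h4 : Module.finrank F (LinearMap.range Ψ) ≤ Module.finrank F (Module.Dual F U) :=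
    Submodule.finrank_le _
  rw [Subspace.dual_finrank_eq] at h4
  change _ ≤ Module.finrank F U
  omega

theorem rs_finrank_ker {E : Type*} [Field E] {n r : ℕ} (D : Submodule E (Fin n → E))
    (hD : Module.finrank E D = r + 1) (p : D →ₗ[E] E) (hp : p ≠ 0) :
    Module.finrank E ((LinearMap.ker p).map D.subtype) = r := by
  have h1 : Module.finrank E ((LinearMap.ker p).map D.subtype) =
      Module.finrank E (LinearMap.ker p) :=
    (Submodule.equivMapOfInjective D.subtype D.injective_subtype (LinearMap.ker p)).finrank_eq.symm
  have h2 := Module.Dual.finrank_ker_add_one_of_ne_zero (f := p) hp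
  omega

theorem rs_exists_sub {E : Type*} [Field E] {n r : ℕ} (D : Submodule E (Fin n → E))
    (hD : r ≤ Module.finrank E D) :
    ∃ B : Submodule E (Fin n → E), B ≤ D ∧ Module.finrank E B = r := by
  obtain ⟨f, hf⟩ := exists_linearIndependent_of_le_finrank hD
  refine ⟨(Submodule.span E (Set.range f)).map D.subtype, ?_, ?_⟩
  · rintro _ ⟨x, _, rfl⟩
    exact x.2
  · rw [← (Submodule.equivMapOfInjective D.subtype D.injective_subtype
      (Submodule.span E (Set.range f))).finrank_eq, finrank_span_eq_card hf, Fintype.card_fin]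

theorem statement13 (F E : Type*) [Field F] [Field E] [Algebra F E]
    [FiniteDimensional F E] (m : ℕ) (hm : Module.finrank F E = m)
    (n k : ℕ) (hk : 1 ≤ k) (hkn : k ≤ n)
    (C : Submodule E (Fin n → E)) (hC : Module.finrank E C = k)
    (r : ℕ) (hr : r + 1 ≤ k) :
    IsRMinimal F E n C r ↔ m * r + 1 ≤ grw F E n C (r + 1) := by
  subst hm
  constructor
  · intro hmin
    by_contra hlt
    obtain ⟨D₀, hD₀, hD₀r⟩ := rs_exists_sub (r := r + 1) C (by omega)
    obtain ⟨D, hDC, hDr, hDw⟩ := Nat.sInf_mem (s := {w : ℕ | ∃ D : Submodule E (Fin n → E),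
      D ≤ C ∧ Module.finrank E D = r + 1 ∧ wt F E n (D : Set (Fin n → E)) = w})
      ⟨_, D₀, hD₀, hD₀r, rfl⟩
    change _ = grw F E n C (r + 1) at hDw
    have hw : wt F E n (D : Set (Fin n → E)) ≤ Module.finrank F E * r := by omega
    have hX : Module.finrank F (D →ₗ[E] E) = Module.finrank F E * (r + 1) := by
      rw [← Module.finrank_mul_finrank F E (D →ₗ[E] E)]
      congr 1
      exact (Subspace.dual_finrank_eq (K := E) (V := D)).trans hDr
    haveI : FiniteDimensional F (D →ₗ[E] E) := Module.Finite.trans E _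
    obtain ⟨p, hp⟩ := rs_point (E := E) (LinearMap.range (rsPhi F E D)) (by
      have := rs_finrank_range (F := F) D
      rw [hX, Nat.mul_succ]; omega)
    have hp0 : p ≠ 0 := by
      rintro rfl
      exact one_ne_zero (hp 1 (by simp))
    have hsub : ∀ q : D →ₗ[E] E, (LinearMap.ker q).map D.subtype ≤ D := by
      rintro q _ ⟨x, _, rfl⟩
      exact x.2
    -- the hyperplane with full support
    have hfull : rankSupport F E n (((LinearMap.ker p).map D.subtype : Submodule E (Fin n → E)) :
        Set (Fin n → E)) = rankSupport F E n (D : Set (Fin n → E)) := by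
      apply le_antisymm (rs_mono (hsub p))
      intro u hu
      by_contra hu'
      obtain ⟨f, hfu, hf⟩ := Submodule.exists_le_ker_of_notMem hu'
      let c : Fin n → F := fun i => f (Pi.single i 1)
      have hfc : f = rsDot F c := by
        ext i
        simp [rsDot, c, Pi.single_apply]
      rw [hfc] at hf hfu
      rw [rs_le_ker_iff] at hf
      have hkk : LinearMap.ker p ≤ LinearMap.ker (rsPhi F E D c) := by
        intro x hx
        exact hf x ⟨x, hx, rfl⟩
      obtain ⟨a, ha⟩ : ∃ a : E, rsPhi F E D c = a • p := by
        have := mem_span_of_iInf_ker_le_ker (L := fun _ : Unit => p) (K := rsPhi F E D c)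
          (by simpa using hkk)
        rw [Set.range_const, Submodule.mem_span_singleton] at this
        obtain ⟨a, ha⟩ := this
        exact ⟨a, ha.symm⟩
      have ha0 := hp a ⟨c, ha⟩
      rw [ha0, zero_smul, rsPhi_eq_zero] at ha
      exact hfu (ha hu)
    -- a hyperplane with smaller support
    obtain ⟨c, hc⟩ : ∃ c : Fin n → F, rsPhi F E D c ≠ 0 := by
      have hne : D ≠ ⊥ := by
        rintro rfl
        simp at hDr
      obtain ⟨x, hx, hx0⟩ := Submodule.exists_mem_ne_zero_of_ne_bot hne
      obtain ⟨i, hi⟩ := Function.ne_iff.1 hx0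
      refine ⟨Pi.single i 1, fun h => hi ?_⟩
      have := LinearMap.congr_fun h ⟨x, hx⟩
      simpa [rsPhi, Pi.single_apply, ite_smul] using this
    have h1 := rs_finrank_ker D hDr p hp0
    have h2 := rs_finrank_ker D hDr _ hc
    have := hmin _ ((hsub p).trans hDC) h1 _ ((hsub (rsPhi F E D c)).trans hDC) (h2.trans h1.symm)
      (by rw [hfull]; exact rs_mono (hsub _))
    rw [hfull] at this
    apply hc
    rw [rsPhi_eq_zero, ← this, rs_le_ker_iff]
    rintro _ ⟨x, hx, rfl⟩
    exact hx
  · intro hd D hDC hDr B hBC hBr hle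
    by_contra hne
    have hBD : ¬ B ≤ D := fun h => hne (by rw [Submodule.eq_of_le_of_finrank_eq h hBr])
    have hlt : D < D ⊔ B := lt_of_le_of_ne le_sup_left fun h => hBD (h ▸ le_sup_right)
    have hfr := Submodule.finrank_lt_finrank_of_lt hlt
    obtain ⟨G, hG, hGr⟩ := rs_exists_sub (r := r + 1) (D ⊔ B) (by omega)
    have h1 : grw F E n C (r + 1) ≤ wt F E n (G : Set (Fin n → E)) :=
      Nat.sInf_le ⟨G, hG.trans (sup_le hDC hBC), hGr, rfl⟩
    have h2 : rankSupport F E n (G : Set (Fin n → E)) ≤ rankSupport F E n (D : Set (Fin n → E)) := by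
      rw [rs_le_iff]
      intro x hx l
      obtain ⟨y, hy, z, hz, rfl⟩ := Submodule.mem_sup.1 (hG hx)
      have := Submodule.add_mem _ (rs_mem (F := F) hy l) (hle (rs_mem (F := F) hz l))
      convert this using 1
      ext i; simp
    have h3 : wt F E n (G : Set (Fin n → E)) ≤ wt F E n (D : Set (Fin n → E)) :=
      Submodule.finrank_mono h2
    have h4 := rs_wt_le (F := F) D
    rw [hDr] at h4
    omega
end

section
/- Suppose m ≥ 2. Let C be an [n,k] rank metric code with n ≥ k ≥ 1, and let r ∈ {1,…,k−1} be such that n ≥ (m−1)r + k. Then C is r-minimal if and only if d_{n−(m−1)r−k+1}(C^⊥) ≥ n − mr + 1, where C^⊥ is the dual code of C (an [n, n−k] code). -/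
open Submodule Pointwise

/-- The dual `B^⊥` of `B ≤ E^k` with respect to the standard bilinear form. -/
noncomputable def dualSub (E : Type*) [Field E] (k : ℕ) (B : Submodule E (Fin k → E)) :
    Submodule E (Fin k → E) :=
  ⨅ γ ∈ B, LinearMap.ker (∑ i, γ i • (LinearMap.proj i : (Fin k → E) →ₗ[E] E))


section Helpers
open Module

/-- Intermediate subspaces of every dimension. -/
lemma exists_between_finrank {K V : Type*} [Field K] [AddCommGroup V] [Module K V]
    [FiniteDimensional K V] (Y : Submodule K V) (d : ℕ) :
    ∀ X : Submodule K V, X ≤ Y → ∀ s, finrank K X + d = s → s ≤ finrank K Y →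
      ∃ Z : Submodule K V, X ≤ Z ∧ Z ≤ Y ∧ finrank K Z = s := by
  induction d with
  | zero => intro X hX s hs _; exact ⟨X, le_rfl, hX, by simpa using hs⟩
  | succ d ih =>
    intro X hX s hs hsY
    have hne : ∃ y ∈ Y, y ∉ X := by
      by_contra h
      push Not at h
      have : X = Y := le_antisymm hX h
      subst this
      omega
    obtain ⟨y, hy, hyX⟩ := hne
    have hy0 : y ≠ 0 := by
      rintro rfl
      exact hyX X.zero_mem
    have h1 : finrank K (X ⊔ span K {y} : Submodule K V) = finrank K X + 1 := by
      have h := Submodule.finrank_sup_add_finrank_inf_eq X (span K {y})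
      have hd : X ⊓ span K {y} = ⊥ := by
        rw [← disjoint_iff]
        exact (Submodule.disjoint_span_singleton' hy0).2 hyX
      rw [hd, finrank_bot, finrank_span_singleton hy0] at h
      simpa using h
    obtain ⟨Z, hZ1, hZ2, hZ3⟩ := ih (X ⊔ span K {y})
      (sup_le hX (by simpa [Submodule.span_le] using hy)) s (by omega) hsY
    exact ⟨Z, le_sup_left.trans hZ1, hZ2, hZ3⟩

lemma exists_between_finrank' {K V : Type*} [Field K] [AddCommGroup V] [Module K V]
    [FiniteDimensional K V] {X Y : Submodule K V} (h : X ≤ Y) {s : ℕ}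
    (h1 : finrank K X ≤ s) (h2 : s ≤ finrank K Y) :
      ∃ Z : Submodule K V, X ≤ Z ∧ Z ≤ Y ∧ finrank K Z = s :=
  exists_between_finrank Y (s - finrank K X) X h s (by omega) h2

lemma exists_le_finrank {K V : Type*} [Field K] [AddCommGroup V] [Module K V]
    [FiniteDimensional K V] {Y : Submodule K V} {s : ℕ} (h2 : s ≤ finrank K Y) :
      ∃ Z : Submodule K V, Z ≤ Y ∧ finrank K Z = s := by
  obtain ⟨Z, _, h⟩ := exists_between_finrank' (bot_le : ⊥ ≤ Y) (s := s) (by simp) h2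
  exact ⟨Z, h⟩

/-- An injective linear map stays injective under generic perturbation. -/
lemma exists_perturb {K V W : Type*} [Field K] [Infinite K] [AddCommGroup V] [Module K V]
    [FiniteDimensional K V] [AddCommGroup W] [Module K W] (f g : V →ₗ[K] W)
    (hf : Function.Injective f) : ∃ t : K, t ≠ 0 ∧ Function.Injective (f + t • g) := by
  obtain ⟨L, hL⟩ := LinearMap.exists_leftInverse_of_injective f (LinearMap.ker_eq_bot.2 hf)
  have hfin : Set.Finite {μ : K | Module.End.HasEigenvalue (L ∘ₗ g) μ} :=
    Module.End.finite_hasEigenvalue _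
  obtain ⟨μ, hμ⟩ := (hfin.union (Set.finite_singleton 0)).exists_notMem
  simp only [Set.mem_union, Set.mem_ofPred_eq, Set.mem_singleton_iff, not_or] at hμ
  obtain ⟨h1, h0⟩ := hμ
  refine ⟨-μ⁻¹, by simpa using h0, ?_⟩
  rw [← LinearMap.ker_eq_bot, LinearMap.ker_eq_bot']
  intro x hx
  by_contra hx0
  apply h1
  apply Module.End.hasEigenvalue_of_hasEigenvector (x := x)
  refine ⟨Module.End.mem_eigenspace_iff.2 ?_, hx0⟩
  have h2 := congrArg L hx
  have h3 : L (f x) = x := by simpa using LinearMap.congr_fun hL x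
  simp only [LinearMap.add_apply, LinearMap.smul_apply, map_add, map_smul, h3, map_zero] at h2
  have h4 : x = μ⁻¹ • L (g x) := by
    rw [neg_smul] at h2
    exact add_neg_eq_zero.1 h2
  have h5 := congrArg (fun z => μ • z) h4
  simp only [smul_smul, mul_inv_cancel₀ h0, one_smul] at h5
  simpa using h5.symm

/-- If `g x ∉ range f` for some `x ∈ ker f`, then `f + t g` has larger rank for some `t`. -/
lemma exists_rank_lt {K V W : Type*} [Field K] [Infinite K] [AddCommGroup V] [Module K V]
    [FiniteDimensional K V] [AddCommGroup W] [Module K W] (f g : V →ₗ[K] W) (x : V)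
    (hx : f x = 0) (hg : g x ∉ LinearMap.range f) :
    ∃ t : K, finrank K (LinearMap.range f) < finrank K (LinearMap.range (f + t • g)) := by
  obtain ⟨s, hs⟩ := LinearMap.exists_rightInverse_of_surjective f.rangeRestrict
    (LinearMap.range_rangeRestrict f)
  have hs' : ∀ y : LinearMap.range f, f (s y) = y := fun y => by
    have := LinearMap.congr_fun hs y
    simpa using congrArg Subtype.val this
  let f' : (LinearMap.range f × K) →ₗ[K] W :=
    LinearMap.coprod (LinearMap.range f).subtype (LinearMap.toSpanSingleton K W (g x))
  let g' : (LinearMap.range f × K) →ₗ[K] W := (g ∘ₗ s) ∘ₗ LinearMap.fst K _ _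
  have hf' : Function.Injective f' := by
    rw [← LinearMap.ker_eq_bot, LinearMap.ker_eq_bot']
    rintro ⟨y, c⟩ h
    have h : (y : W) + c • g x = 0 := by simpa [f'] using h
    have hc : c = 0 := by
      by_contra hc
      apply hg
      have : g x = c⁻¹ • (-(y : W)) := by
        rw [eq_comm, inv_smul_eq_iff₀ hc]
        exact (eq_neg_of_add_eq_zero_right h).symm
      rw [this]
      exact Submodule.smul_mem _ _ (Submodule.neg_mem _ y.2)
    subst hc
    simp at h
    simp [h]
  obtain ⟨t, ht, hinj⟩ := exists_perturb f' g' hf'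
  refine ⟨t, ?_⟩
  have hle : LinearMap.range (f' + t • g') ≤ LinearMap.range (f + t • g) := by
    rintro _ ⟨⟨y, c⟩, rfl⟩
    refine ⟨s y + (t⁻¹ * c) • x, ?_⟩
    simp [f', g', hs', hx, smul_smul, mul_inv_cancel_left₀ ht]
    abel
  have h1 := LinearMap.finrank_range_of_inj hinj
  have h2 := Submodule.finrank_mono hle
  rw [finrank_prod, finrank_self] at h1
  omega

/-- A subspace of small `F`-dimension avoids some `E`-point. -/
lemma exists_avoiding (F E X : Type*) [Field F] [Field E] [Algebra F E] [FiniteDimensional F E]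
    [AddCommGroup X] [Module E X] [Module F X] [IsScalarTower F E X] [FiniteDimensional E X]
    (r : ℕ) (hX : finrank E X = r + 1) (Q : Submodule F X)
    (hQ : finrank F Q ≤ finrank F E * r) :
    ∃ v : X, ∀ c : E, c • v ∈ Q → c = 0 := by
  have : FiniteDimensional F X := FiniteDimensional.trans F E X
  have hFX : finrank F X = finrank F E * (r + 1) := by
    rw [← hX, Module.finrank_mul_finrank]
  have hm : 0 < finrank F E := finrank_pos
  rcases finite_or_infinite F with hF | hF
  · have : Finite E := Module.finite_of_finite F
    have : Finite X := Module.finite_of_finite F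
    have hXnt : Nontrivial X := by
      apply Module.nontrivial_of_finrank_pos (R := E); omega
    let p : E × Q → X := fun z => z.1 • (z.2 : X)
    have hcard : Nat.card (E × Q) ≤ Nat.card X := by
      rw [Nat.card_prod, Module.natCard_eq_pow_finrank (K := F) (V := E),
        Module.natCard_eq_pow_finrank (K := F) (V := Q),
        Module.natCard_eq_pow_finrank (K := F) (V := X), ← pow_add, hFX]
      apply Nat.pow_le_pow_right Nat.card_pos
      nlinarith
    have hns : ¬ Function.Surjective p := by
      intro hs
      have hb : Function.Injective p := by
        have : Nat.card (E × Q) = Nat.card X := le_antisymm hcard (Nat.card_le_card_of_surjective p hs)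
        exact ((Nat.bijective_iff_surjective_and_card p).2 ⟨hs, this⟩).1
      have := @hb (0, 0) (1, 0) (by simp [p])
      simp at this
    simp only [Function.Surjective, not_forall, not_exists] at hns
    obtain ⟨v, hv⟩ := hns
    refine ⟨v, fun c hc => ?_⟩
    by_contra hc0
    exact hv (c⁻¹, ⟨c • v, hc⟩) (by simp [p, smul_smul, inv_mul_cancel₀ hc0])
  · let T : X → (E →ₗ[F] X ⧸ Q) := fun v =>
      Q.mkQ ∘ₗ ((LinearMap.toSpanSingleton E X v).restrictScalars F)
    have hT : ∀ v c, T v c = Q.mkQ (c • v) := fun v c => rfl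
    have hbdd : ∀ v, finrank F (LinearMap.range (T v)) ≤ finrank F E :=
      fun v => LinearMap.finrank_range_le _
    obtain ⟨v, hv⟩ : ∃ v, ∀ w, finrank F (LinearMap.range (T w)) ≤
        finrank F (LinearMap.range (T v)) := by
      have hfin : (Set.range fun v => finrank F (LinearMap.range (T v))).Finite :=
        (Set.finite_Iic (finrank F E)).subset (by rintro _ ⟨v, rfl⟩; exact hbdd v)
      obtain ⟨_, ⟨v, rfl⟩, h⟩ := hfin.exists_maximal (Set.range_nonempty _)
      refine ⟨v, fun w => ?_⟩
      rcases le_total (finrank F (LinearMap.range (T w))) (finrank F (LinearMap.range (T v))) with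
        h' | h'
      · exact h'
      · exact h ⟨w, rfl⟩ h'
    refine ⟨v, fun e he => ?_⟩
    by_contra he0
    have hker : T v e = 0 := by rw [hT]; simpa using he
    have htop : LinearMap.range (T v) = ⊤ := by
      rw [eq_top_iff]
      rintro z -
      obtain ⟨w, rfl⟩ := Q.mkQ_surjective z
      by_contra hz
      have hz' : T (e⁻¹ • w) e ∉ LinearMap.range (T v) := by
        rw [hT, smul_smul, mul_inv_cancel₀ he0, one_smul]; exact hz
      obtain ⟨t, ht⟩ := exists_rank_lt (T v) (T (e⁻¹ • w)) e hker hz'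
      have : T v + t • T (e⁻¹ • w) = T (v + t • (e⁻¹ • w)) := by
        ext c
        rw [LinearMap.add_apply, LinearMap.smul_apply, hT, hT, hT, smul_add, map_add]
        rw [smul_comm c t, LinearMap.map_smul Q.mkQ t]
      rw [this] at ht
      exact absurd ht (not_lt.2 (hv _))
    have h1 := LinearMap.finrank_range_add_finrank_ker (T v)
    have h2 := Q.finrank_quotient_add_finrank
    rw [htop, finrank_top] at h1
    have h3 : 0 < finrank F (LinearMap.ker (T v)) := by
      have : Nontrivial (LinearMap.ker (T v)) :=
        ⟨⟨⟨e, hker⟩, 0, fun h => he0 (congrArg Subtype.val h)⟩⟩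
      exact finrank_pos
    rw [hFX] at h2
    nlinarith


lemma mem_dualSub {K : Type*} [Field K] {n : ℕ} {B : Submodule K (Fin n → K)} {x : Fin n → K} :
    x ∈ dualSub K n B ↔ ∀ y ∈ B, ∑ i, y i * x i = 0 := by
  simp [dualSub, Submodule.mem_iInf]

lemma dualSub_eq {K : Type*} [Field K] {n : ℕ} (B : Submodule K (Fin n → K)) :
    dualSub K n B = LinearMap.BilinForm.orthogonal (dotProductBilin K K) B := by
  ext x
  rw [mem_dualSub, LinearMap.BilinForm.mem_orthogonal_iff]
  rfl

lemma dot_isRefl (K : Type*) [Field K] (n : ℕ) :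
    LinearMap.BilinForm.IsRefl (dotProductBilin K K : LinearMap.BilinForm K (Fin n → K)) := by
  intro x y h
  simpa [dotProduct_comm] using h

lemma dot_nondeg (K : Type*) [Field K] (n : ℕ) :
    LinearMap.BilinForm.Nondegenerate
      (dotProductBilin K K : LinearMap.BilinForm K (Fin n → K)) := by
  have : LinearMap.SeparatingLeft (dotProductBilin K K : LinearMap.BilinForm K (Fin n → K)) := by
    intro x h
    exact dotProduct_eq_zero x (fun y => h y)
  exact (LinearMap.IsRefl.nondegenerate_iff_separatingLeft (dot_isRefl K n)).2 this

lemma finrank_dualSub {K : Type*} [Field K] {n : ℕ} (B : Submodule K (Fin n → K)) :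
    finrank K (dualSub K n B) + finrank K B = n := by
  have h1 := LinearMap.BilinForm.finrank_orthogonal (dot_nondeg K n) B
  have h2 := Submodule.finrank_le B
  rw [dualSub_eq]
  simp only [Module.finrank_fin_fun] at h1 h2
  omega

lemma dualSub_dualSub {K : Type*} [Field K] {n : ℕ} (B : Submodule K (Fin n → K)) :
    dualSub K n (dualSub K n B) = B := by
  rw [dualSub_eq, dualSub_eq]
  exact LinearMap.BilinForm.orthogonal_orthogonal (dot_nondeg K n) (dot_isRefl K n) B

lemma dualSub_sup {K : Type*} [Field K] {n : ℕ} (A B : Submodule K (Fin n → K)) :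
    dualSub K n (A ⊔ B) = dualSub K n A ⊓ dualSub K n B := by
  ext x
  simp only [Submodule.mem_inf, mem_dualSub]
  refine ⟨fun h => ⟨fun y hy => h y (Submodule.mem_sup_left hy),
    fun y hy => h y (Submodule.mem_sup_right hy)⟩, fun h y hy => ?_⟩
  obtain ⟨a, ha, b, hb, rfl⟩ := Submodule.mem_sup.1 hy
  simp [add_mul, Finset.sum_add_distrib, h.1 a ha, h.2 b hb]

variable {F E : Type*} [Field F] [Field E] [Algebra F E] {n : ℕ}

/-- Extension of scalars of a subspace of `F^n`. -/
noncomputable def extS (E : Type*) [Field E] [Algebra F E] (U : Submodule F (Fin n → F)) :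
    Submodule E (Fin n → E) :=
  Submodule.span E (fIncl F E n '' (U : Set (Fin n → F)))

lemma fIncl_apply (u : Fin n → F) (i : Fin n) : fIncl F E n u i = algebraMap F E (u i) := rfl

lemma extS_mono {U V : Submodule F (Fin n → F)} (h : U ≤ V) : extS E U ≤ extS E V :=
  Submodule.span_mono (Set.image_mono h)

lemma coord_mem_of_mem_extS {U : Submodule F (Fin n → F)} {a : Fin n → E} (ha : a ∈ extS E U)
    (φ : E →ₗ[F] F) : (fun i => φ (a i)) ∈ U := by
  have key : ∀ (x : Fin n → E), x ∈ extS E U → ∀ φ : E →ₗ[F] F, (fun i => φ (x i)) ∈ U := by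
    intro x hx
    induction hx using Submodule.span_induction with
    | mem x hx =>
      obtain ⟨u, hu, rfl⟩ := hx
      intro φ
      have : (fun i => φ (fIncl F E n u i)) = φ 1 • u := by
        ext i
        rw [fIncl_apply, Algebra.algebraMap_eq_smul_one, map_smul]
        simp [mul_comm]
      rw [this]
      exact U.smul_mem _ hu
    | zero =>
      intro φ
      have : (fun i => φ ((0 : Fin n → E) i)) = 0 := by ext i; simp
      rw [this]
      exact U.zero_mem
    | add x y _ _ hx hy =>
      intro φ
      have : (fun i => φ ((x + y) i)) = (fun i => φ (x i)) + (fun i => φ (y i)) := by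
        ext i; simp
      rw [this]
      exact U.add_mem (hx φ) (hy φ)
    | smul c x _ hx =>
      intro φ
      exact hx (φ ∘ₗ LinearMap.mulLeft F c)
  exact key a ha φ

lemma mem_extS_of_coord [FiniteDimensional F E] {U : Submodule F (Fin n → F)} {a : Fin n → E}
    (h : ∀ φ : E →ₗ[F] F, (fun i => φ (a i)) ∈ U) : a ∈ extS E U := by
  let b := Module.finBasis F E
  have : a = ∑ j, b j • fIncl F E n (fun i => b.coord j (a i)) := by
    ext i
    simp only [Finset.sum_apply, Pi.smul_apply, fIncl_apply, smul_eq_mul]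
    conv_lhs => rw [← b.sum_repr (a i)]
    refine Finset.sum_congr rfl fun j _ => ?_
    rw [Algebra.smul_def, mul_comm]
    rfl
  rw [this]
  exact Submodule.sum_mem _ fun j _ => Submodule.smul_mem _ _
    (Submodule.subset_span ⟨_, h (b.coord j), rfl⟩)

lemma rankSupport_le {A : Set (Fin n → E)} {U : Submodule F (Fin n → F)}
    (h : A ⊆ (extS E U : Set (Fin n → E))) : rankSupport F E n A ≤ U :=
  sInf_le h

lemma subset_extS_rankSupport [FiniteDimensional F E] (A : Set (Fin n → E)) :
    A ⊆ (extS E (rankSupport F E n A) : Set (Fin n → E)) := by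
  intro a ha
  refine mem_extS_of_coord fun φ => ?_
  rw [rankSupport, Submodule.mem_sInf]
  intro U hU
  exact coord_mem_of_mem_extS (hU ha) φ

lemma rankSupport_le_iff [FiniteDimensional F E] {A : Submodule E (Fin n → E)}
    {U : Submodule F (Fin n → F)} :
    rankSupport F E n (A : Set (Fin n → E)) ≤ U ↔ A ≤ extS E U :=
  ⟨fun h => le_trans (subset_extS_rankSupport (F := F) (A : Set (Fin n → E))) (extS_mono h),
    fun h => rankSupport_le h⟩

lemma finrank_extS [FiniteDimensional F E] (U : Submodule F (Fin n → F)) :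
    finrank E (extS E U) = finrank F U := by
  let b := Module.finBasis F U
  let v : Fin (finrank F U) → (Fin n → E) := fun j => fIncl F E n (b j : Fin n → F)
  have hspan : extS E U = Submodule.span E (Set.range v) := by
    apply le_antisymm
    · refine Submodule.span_le.2 ?_
      rintro _ ⟨u, hu, rfl⟩
      have h1 : u = ∑ j, b.repr ⟨u, hu⟩ j • (b j : Fin n → F) := by
        have := congrArg Subtype.val (b.sum_repr ⟨u, hu⟩)
        rw [Submodule.coe_sum] at this
        exact this.symm
      rw [h1, map_sum]
      refine Submodule.sum_mem _ fun j _ => ?_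
      rw [map_smul, ← algebraMap_smul E]
      exact Submodule.smul_mem _ _ (Submodule.subset_span ⟨j, rfl⟩)
    · refine Submodule.span_le.2 ?_
      rintro _ ⟨j, rfl⟩
      exact Submodule.subset_span ⟨_, (b j).2, rfl⟩
  have hli : LinearIndependent E v := by
    rw [Fintype.linearIndependent_iff]
    intro c hc j
    have h2 : ∀ φ : E →ₗ[F] F, φ (c j) = 0 := by
      intro φ
      have h3 : ∑ j, φ (c j) • b j = 0 := by
        apply Subtype.ext
        ext i
        have h4 := congrArg φ (congrFun hc i)
        simp only [Finset.sum_apply, Pi.smul_apply, v, fIncl_apply, smul_eq_mul, Pi.zero_apply,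
          map_zero, map_sum] at h4
        simp only [Submodule.coe_sum, Submodule.coe_smul, Finset.sum_apply, Pi.smul_apply,
          smul_eq_mul, Submodule.coe_zero, Pi.zero_apply]
        rw [← h4]
        refine Finset.sum_congr rfl fun j _ => ?_
        rw [mul_comm (c j), ← Algebra.smul_def, map_smul, smul_eq_mul, mul_comm]
      exact Fintype.linearIndependent_iff.1 b.linearIndependent _ h3 j
    exact (Module.forall_dual_apply_eq_zero_iff F (c j)).1 h2
  rw [hspan, finrank_span_eq_card hli, Fintype.card_fin]

lemma dualSub_extS [FiniteDimensional F E] (U : Submodule F (Fin n → F)) :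
    dualSub E n (extS E U) = extS E (dualSub F n U) := by
  symm
  apply Submodule.eq_of_le_of_finrank_eq
  · refine Submodule.span_le.2 ?_
    rintro _ ⟨y, hy, rfl⟩
    have hy := mem_dualSub.1 hy
    refine mem_dualSub.2 fun a ha => ?_
    refine (Module.forall_dual_apply_eq_zero_iff F _).1 fun φ => ?_
    have := hy _ (coord_mem_of_mem_extS ha φ)
    rw [map_sum, ← this]
    refine Finset.sum_congr rfl fun i _ => ?_
    rw [fIncl_apply, mul_comm, ← Algebra.smul_def, map_smul, smul_eq_mul, mul_comm]
  · have h1 := finrank_dualSub (extS E U)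
    have h2 := finrank_dualSub U
    rw [finrank_extS] at *
    omega

lemma wt_le [FiniteDimensional F E] (D : Submodule E (Fin n → E)) :
    wt F E n (D : Set (Fin n → E)) ≤ finrank F E * finrank E D := by
  let b := Module.finBasis F E
  let d := Module.finBasis E D
  let v : Fin (finrank F E) × Fin (finrank E D) → (Fin n → F) :=
    fun p i => b.coord p.1 ((d p.2 : Fin n → E) i)
  have hle : rankSupport F E n (D : Set (Fin n → E)) ≤ Submodule.span F (Set.range v) := by
    rw [rankSupport_le_iff]
    have hd : ∀ j, (d j : Fin n → E) ∈ extS E (Submodule.span F (Set.range v)) := by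
      intro j
      refine mem_extS_of_coord fun φ => ?_
      have : (fun i => φ ((d j : Fin n → E) i)) = ∑ l, φ (b l) • v (l, j) := by
        ext i
        conv_lhs => rw [← b.sum_repr ((d j : Fin n → E) i)]
        simp only [map_sum, map_smul, Finset.sum_apply, Pi.smul_apply, smul_eq_mul, v]
        exact Finset.sum_congr rfl fun l _ => mul_comm _ _
      rw [this]
      exact Submodule.sum_mem _ fun l _ => Submodule.smul_mem _ _
        (Submodule.subset_span ⟨(l, j), rfl⟩)
    intro x hx
    have h1 : x = ∑ j, d.repr ⟨x, hx⟩ j • (d j : Fin n → E) := by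
      have := congrArg Subtype.val (d.sum_repr ⟨x, hx⟩)
      rw [Submodule.coe_sum] at this
      exact this.symm
    rw [h1]
    exact Submodule.sum_mem _ fun l _ => Submodule.smul_mem _ _ (hd l)
  calc wt F E n (D : Set (Fin n → E)) ≤ finrank F (Submodule.span F (Set.range v)) :=
        Submodule.finrank_mono hle
    _ ≤ Fintype.card (Fin (finrank F E) × Fin (finrank E D)) := finrank_range_le_card v
    _ = _ := by simp


lemma exists_full_support [FiniteDimensional F E] (r : ℕ) (W : Submodule E (Fin n → E))
    (hW : finrank E W = r + 1)
    (hwt : finrank F (rankSupport F E n (W : Set (Fin n → E))) ≤ finrank F E * r) :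
    ∃ D : Submodule E (Fin n → E), D ≤ W ∧ finrank E D = r ∧
      rankSupport F E n (D : Set (Fin n → E)) = rankSupport F E n (W : Set (Fin n → E)) := by
  let Φ : (Fin n → F) →ₗ[F] Module.Dual E W :=
    { toFun := fun y => (dotProductBilin E E (fIncl F E n y)) ∘ₗ W.subtype
      map_add' := fun x y => by
        rw [map_add, map_add, LinearMap.add_comp]
      map_smul' := fun c x => by
        rw [map_smul, ← algebraMap_smul E, map_smul, LinearMap.smul_comp, algebraMap_smul]
        rfl }
  have hΦ : ∀ y (w : W), Φ y w = ∑ i, fIncl F E n y i * (w : Fin n → E) i := fun y w => rfl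
  have hker : dualSub F n (rankSupport F E n (W : Set (Fin n → E))) ≤ LinearMap.ker Φ := by
    intro y hy
    rw [LinearMap.mem_ker]
    ext w
    rw [hΦ]
    have h1 : fIncl F E n y ∈ dualSub E n (extS E (rankSupport F E n (W : Set (Fin n → E)))) := by
      rw [dualSub_extS]
      exact Submodule.subset_span ⟨y, hy, rfl⟩
    have h2 := mem_dualSub.1 h1 w (subset_extS_rankSupport _ w.2)
    simpa [mul_comm] using h2
  have hQ : finrank F (LinearMap.range Φ) ≤ finrank F E * r := by
    have h1 := LinearMap.finrank_range_add_finrank_ker Φ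
    have h2 := Submodule.finrank_mono hker
    have h3 := finrank_dualSub (rankSupport F E n (W : Set (Fin n → E)))
    rw [Module.finrank_fin_fun] at h1
    omega
  obtain ⟨ℓ, hℓ⟩ := exists_avoiding F E (Module.Dual E W) r
    (by rw [Subspace.dual_finrank_eq, hW]) (LinearMap.range Φ) hQ
  have hℓ0 : ℓ ≠ 0 := by
    rintro rfl
    exact one_ne_zero (hℓ 1 (by simp))
  refine ⟨(LinearMap.ker ℓ).map W.subtype, Submodule.map_subtype_le _ _, ?_, ?_⟩
  · rw [Submodule.finrank_map_subtype_eq]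
    have := Module.Dual.finrank_ker_add_one_of_ne_zero hℓ0
    omega
  · apply le_antisymm
    · rw [rankSupport_le_iff]
      exact (Submodule.map_subtype_le _ _).trans (rankSupport_le_iff.1 le_rfl)
    · set D := (LinearMap.ker ℓ).map W.subtype with hD
      rw [rankSupport_le_iff, ← dualSub_dualSub (rankSupport F E n (D : Set (Fin n → E))),
        ← dualSub_extS]
      intro w hw
      have hsub : dualSub E n (dualSub E n (extS E (rankSupport F E n (D : Set (Fin n → E)))))
        = extS E (rankSupport F E n (D : Set (Fin n → E))) := dualSub_dualSub _
      have hgen : ∀ y ∈ dualSub F n (rankSupport F E n (D : Set (Fin n → E))), Φ y = 0 := by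
        intro y hy
        have h1 : fIncl F E n y ∈
            dualSub E n (extS E (rankSupport F E n (D : Set (Fin n → E)))) := by
          rw [dualSub_extS]
          exact Submodule.subset_span ⟨y, hy, rfl⟩
        have h2 : LinearMap.ker ℓ ≤ LinearMap.ker (Φ y) := by
          intro x hx
          rw [LinearMap.mem_ker, hΦ]
          have h3 := mem_dualSub.1 h1 x
            (subset_extS_rankSupport _ (Submodule.mem_map_of_mem (f := W.subtype) hx))
          simpa [mul_comm] using h3
        obtain ⟨c, hc⟩ : ∃ c : E, c • ℓ = Φ y := by
          obtain ⟨x₀, hx₀⟩ : ∃ x, ℓ x ≠ 0 := by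
            by_contra h
            push Not at h
            exact hℓ0 (LinearMap.ext h)
          refine ⟨Φ y x₀ / ℓ x₀, LinearMap.ext fun x => ?_⟩
          have h4 : x - (ℓ x / ℓ x₀) • x₀ ∈ LinearMap.ker ℓ := by
            rw [LinearMap.mem_ker, map_sub, map_smul, smul_eq_mul, div_mul_cancel₀ _ hx₀, sub_self]
          have h5 := h2 h4
          rw [LinearMap.mem_ker, map_sub, map_smul, smul_eq_mul, sub_eq_zero] at h5
          rw [LinearMap.smul_apply, smul_eq_mul, h5]
          ring
        have hc0 := hℓ c ⟨y, hc.symm⟩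
        rw [← hc, hc0, zero_smul]
      refine mem_dualSub.2 fun z hz => ?_
      change z ∈ extS E _ at hz
      have hle : extS E (dualSub F n (rankSupport F E n (D : Set (Fin n → E)))) ≤
          dualSub E n W := by
        refine Submodule.span_le.2 ?_
        rintro _ ⟨y, hy, rfl⟩
        refine mem_dualSub.2 fun x hx => ?_
        have h6 := LinearMap.congr_fun (hgen y hy) ⟨x, hx⟩
        rw [hΦ] at h6
        simpa [mul_comm] using h6
      have h7 := mem_dualSub.1 (hle hz) w hw
      simpa [mul_comm] using h7

lemma finrank_inf_identity [FiniteDimensional F E] (C : Submodule E (Fin n → E))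
    (U : Submodule F (Fin n → F)) :
    finrank E (dualSub E n C ⊓ extS E (dualSub F n U) : Submodule E (Fin n → E))
      + finrank E C + finrank F U = n + finrank E (C ⊓ extS E U : Submodule E (Fin n → E)) := by
  rw [← dualSub_extS, ← dualSub_sup]
  have h1 := finrank_dualSub (C ⊔ extS E U)
  have h2 := Submodule.finrank_sup_add_finrank_inf_eq C (extS E U)
  rw [finrank_extS] at h2
  omega

/-- Geometric characterization of `r`-minimality. -/
lemma isRMinimal_iff [FiniteDimensional F E] (C : Submodule E (Fin n → E)) (r : ℕ)
    (hn : finrank F E * r ≤ n) :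
    IsRMinimal F E n C r ↔ ∀ V : Submodule F (Fin n → F), finrank F V = finrank F E * r →
      finrank E (C ⊓ extS E V : Submodule E (Fin n → E)) ≤ r := by
  constructor
  · intro hmin V hV
    by_contra hcon
    push Not at hcon
    obtain ⟨W, hWle, hW⟩ := exists_le_finrank (s := r + 1) hcon
    have hχ : rankSupport F E n (W : Set (Fin n → E)) ≤ V :=
      rankSupport_le_iff.2 (hWle.trans inf_le_right)
    obtain ⟨D, hDW, hD, hχD⟩ := exists_full_support (F := F) r W hW
      (hV ▸ Submodule.finrank_mono hχ)
    set S := rankSupport F E n (W : Set (Fin n → E)) with hS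
    have hWS : W ≤ extS E S := rankSupport_le_iff.1 le_rfl
    have hSpos : 0 < finrank F S := by
      have := Submodule.finrank_mono hWS
      rw [finrank_extS] at this
      omega
    obtain ⟨H, hHS, hH⟩ := exists_le_finrank (Y := S) (s := finrank F S - 1) (by omega)
    have hdim : r ≤ finrank E (W ⊓ extS E H : Submodule E (Fin n → E)) := by
      have h1 := Submodule.finrank_sup_add_finrank_inf_eq W (extS E H)
      have h2 := Submodule.finrank_mono (sup_le hWS (extS_mono (E := E) hHS))
      rw [finrank_extS] at h1 h2
      omega
    obtain ⟨B, hBle, hB⟩ := exists_le_finrank hdim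
    have hBH : rankSupport F E n (B : Set (Fin n → E)) ≤ H :=
      rankSupport_le_iff.2 (hBle.trans inf_le_right)
    have heq := hmin D (hDW.trans (hWle.trans inf_le_left)) hD B
      (hBle.trans (inf_le_left.trans (hWle.trans inf_le_left))) (by omega)
      (by rw [hχD]; exact hBH.trans hHS)
    rw [hχD] at heq
    rw [heq] at hBH
    have := Submodule.finrank_mono hBH
    omega
  · intro h D hDC hD B hBC hBD hχ
    have hwt : finrank F (rankSupport F E n (D : Set (Fin n → E))) ≤ finrank F E * r := by
      have := wt_le (F := F) D
      rwa [hD] at this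
    obtain ⟨V, hV1, -, hV⟩ := exists_between_finrank'
      (le_top : rankSupport F E n (D : Set (Fin n → E)) ≤ ⊤) hwt
      (by rw [finrank_top, Module.finrank_fin_fun]; exact hn)
    have hle := h V hV
    have hD' : D ≤ C ⊓ extS E V := le_inf hDC (rankSupport_le_iff.1 hV1)
    have hB' : B ≤ C ⊓ extS E V := le_inf hBC (rankSupport_le_iff.1 (hχ.trans hV1))
    have e1 := Submodule.eq_of_le_of_finrank_le hD' (by omega)
    have e2 := Submodule.eq_of_le_of_finrank_le hB' (by omega)
    rw [e2, ← e1]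

end Helpers

/-- Theorem 4.5: suppose `m ≥ 2`; let `C` be an `[n,k]` code and `r ∈ {1, …, k-1}` with
`n ≥ (m-1)r + k`. Then `C` is `r`-minimal iff
`d_{n-(m-1)r-k+1}(C^⊥) ≥ n - mr + 1`. -/
theorem statement14 (F E : Type*) [Field F] [Field E] [Algebra F E]
    [FiniteDimensional F E] (m : ℕ) (hm : Module.finrank F E = m) (hm2 : 2 ≤ m)
    (n k : ℕ) (hk : 1 ≤ k) (hkn : k ≤ n)
    (C : Submodule E (Fin n → E)) (hC : Module.finrank E C = k)
    (r : ℕ) (hr1 : 1 ≤ r) (hrk : r + 1 ≤ k) (hn : (m - 1) * r + k ≤ n) :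
    IsRMinimal F E n C r ↔
      n - m * r + 1 ≤ grw F E n (dualSub E n C) (n - (m - 1) * r - k + 1) := by
  subst hm
  obtain ⟨m', hm'⟩ : ∃ m', Module.finrank F E = m' + 1 := ⟨Module.finrank F E - 1, by omega⟩
  have hmr : Module.finrank F E * r = (Module.finrank F E - 1) * r + r := by
    rw [hm']; simp; ring
  have hCd := finrank_dualSub C
  have hpos : 1 ≤ (Module.finrank F E - 1) * r := Nat.mul_pos (by omega) hr1
  rw [isRMinimal_iff C r (by omega)]
  constructor
  · intro h
    apply le_csInf
    · obtain ⟨Z, hZ, hZ'⟩ := exists_le_finrank (Y := dualSub E n C)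
        (s := n - (Module.finrank F E - 1) * r - k + 1) (by omega)
      exact ⟨_, Z, hZ, hZ', rfl⟩
    · rintro w ⟨D, hD, hDr, rfl⟩
      by_contra hcon
      obtain ⟨U, hU1, -, hU⟩ := exists_between_finrank'
        (le_top : rankSupport F E n (D : Set (Fin n → E)) ≤ ⊤) (s := n - Module.finrank F E * r)
        (by have : wt F E n (D : Set (Fin n → E)) ≤ n - Module.finrank F E * r := by omega
            exact this)
        (by rw [finrank_top, Module.finrank_fin_fun]; omega)
      have hUd := finrank_dualSub U
      have h1 := h (dualSub F n U) (by omega)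
      have h2 := finrank_inf_identity C (dualSub F n U)
      rw [dualSub_dualSub] at h2
      have h3 := Submodule.finrank_mono (le_inf hD (rankSupport_le_iff.1 hU1))
      omega
  · intro h V hV
    by_contra hcon
    have h2 := finrank_inf_identity C V
    have hVd := finrank_dualSub V
    obtain ⟨D, hD, hDr⟩ := exists_le_finrank
      (Y := dualSub E n C ⊓ extS E (dualSub F n V))
      (s := n - (Module.finrank F E - 1) * r - k + 1) (by omega)
    have h3 : grw F E n (dualSub E n C) (n - (Module.finrank F E - 1) * r - k + 1) ≤
        wt F E n (D : Set (Fin n → E)) :=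
      Nat.sInf_le ⟨D, hD.trans inf_le_left, hDr, rfl⟩
    have h4 : wt F E n (D : Set (Fin n → E)) ≤ Module.finrank F (dualSub F n V) :=
      Submodule.finrank_mono (rankSupport_le_iff.2 (hD.trans inf_le_right))
    omega
end
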